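/- Let d ≥ 3, α ∈ (0,1) with α > p_c. Then lim_{M → ∞} π_α(E_M) = 1, where E_M is the event that the restriction of ξ to B(M) has a unique open cluster of ℓ∞-diameter at least M, and this cluster intersects every face of B(M). -/

import Mathlib

open MeasureTheory

/-!
STATEMENT 10: Let `d ≥ 3` and `α ∈ (0,1)` with `α > p_c`. Then
`lim_{M → ∞} π_α(E_M) = 1`, where `E_M` is the event that `ξ` restricted to `B(M)` has
a unique open cluster of `ℓ∞`-diameter at least `M`, and this cluster intersects every
face of `B(M)`.

Configurations are modelled as `(Fin d → ℤ) → Bool` (`true` = `1` = open). Since this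
version of Mathlib has no infinite product measure, the product Bernoulli(`p`) measure
`π_p` on `{0,1}^(ℤ^d)` is characterized by its (defining) values on cylinder events;
this characterization determines the measure uniquely. The critical parameter `p_c` is
the supremum of those `p ∈ [0,1]` for which (any) such product measure gives
probability `0` to the percolation event.
-/

/-- The `ℓ∞` norm of a point of `ℤ^d`, as a natural number. -/
def normInf {d : ℕ} (x : Fin d → ℤ) : ℕ := Finset.univ.sup fun i => (x i).natAbs

/-- The `ℓ¹` norm of a point of `ℤ^d`, as a natural number. -/
def norm1 {d : ℕ} (x : Fin d → ℤ) : ℕ := ∑ i, (x i).natAbs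

/-- The `ℓ∞`-ball `B(x, r)` in `ℤ^d`. -/
def box {d : ℕ} (x : Fin d → ℤ) (r : ℕ) : Set (Fin d → ℤ) := {y | normInf (y - x) ≤ r}

/-- `x` and `y` are connected by a nearest-neighbor path of open sites staying in `S`. -/
def openConnIn (d : ℕ) (S : Set (Fin d → ℤ)) (ξ : (Fin d → ℤ) → Bool)
    (x y : Fin d → ℤ) : Prop :=
  ∃ (n : ℕ) (γ : ℕ → (Fin d → ℤ)), γ 0 = x ∧ γ n = y ∧
    (∀ i ≤ n, γ i ∈ S ∧ ξ (γ i) = true) ∧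
    ∀ i < n, norm1 (γ (i + 1) - γ i) = 1

/-- `C` is an open cluster of `ξ` restricted to `S`: a connected component (for
nearest-neighbor adjacency within `S`) of the set of open sites of `S`. -/
def IsOpenClusterIn (d : ℕ) (S : Set (Fin d → ℤ)) (ξ : (Fin d → ℤ) → Bool)
    (C : Set (Fin d → ℤ)) : Prop :=
  ∃ x ∈ S, ξ x = true ∧ C = {y | openConnIn d S ξ x y}

/-- The set `C` has `ℓ∞`-diameter at least `M`. -/
def DiamGE {d : ℕ} (M : ℕ) (C : Set (Fin d → ℤ)) : Prop :=
  ∃ u ∈ C, ∃ v ∈ C, M ≤ normInf (u - v)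

/-- `C` intersects every face of the box `B(z, M)`. -/
def HitsAllFaces {d : ℕ} (z : Fin d → ℤ) (M : ℕ) (C : Set (Fin d → ℤ)) : Prop :=
  ∀ j : Fin d, ∀ ε : ℤ, (ε = 1 ∨ ε = -1) → ∃ w ∈ C, w j - z j = ε * M

/-- The event `E_M` (for the box `B(z, M)`): `ξ` restricted to `B(z, M)` has a unique
open cluster of diameter `≥ M`, and moreover this cluster intersects all the faces of
`B(z, M)`. -/
def SpecialEvent (d : ℕ) (z : Fin d → ℤ) (M : ℕ) (ξ : (Fin d → ℤ) → Bool) : Prop :=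
  ∃ C : Set (Fin d → ℤ),
    IsOpenClusterIn d (box z M) ξ C ∧ DiamGE M C ∧ HitsAllFaces z M C ∧
    ∀ C' : Set (Fin d → ℤ),
      IsOpenClusterIn d (box z M) ξ C' → DiamGE M C' → C' = C

/-- `Perc`: the set of configurations containing an infinite nearest-neighbor path
(with pairwise distinct vertices) of open sites. -/
def Perc (d : ℕ) : Set ((Fin d → ℤ) → Bool) :=
  {ξ | ∃ γ : ℕ → (Fin d → ℤ), Function.Injective γ ∧
    (∀ i, norm1 (γ (i + 1) - γ i) = 1) ∧ ∀ i, ξ (γ i) = true}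

/-- `μ` is the product Bernoulli(`p`) measure `π_p` on `{0,1}^(ℤ^d)`: it is a
probability measure whose cylinder probabilities are the i.i.d. Bernoulli(`p`) ones.
(These conditions determine `μ` uniquely.) -/
def IsBernoulliProduct (d : ℕ) (p : ℝ) (μ : Measure ((Fin d → ℤ) → Bool)) : Prop :=
  IsProbabilityMeasure μ ∧
  ∀ (F : Finset (Fin d → ℤ)) (e : (Fin d → ℤ) → Bool),
    μ {ξ | ∀ x ∈ F, ξ x = e x} =
      ∏ x ∈ F, (if e x then ENNReal.ofReal p else ENNReal.ofReal (1 - p))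

/-- The critical probability `p_c` of Bernoulli site percolation on `ℤ^d`:
`p_c = sup {p : π_p(Perc) = 0}`. -/
noncomputable def pcrit (d : ℕ) : ℝ :=
  sSup {p : ℝ | p ∈ Set.Icc (0 : ℝ) 1 ∧
    ∀ μ : Measure ((Fin d → ℤ) → Bool), IsBernoulliProduct d p μ → μ (Perc d) = 0}

/-- The Bernoulli law on `Bool` giving mass `p` to `true`. -/
noncomputable def coin (p : unitInterval) : Measure Bool :=
  ENNReal.ofReal p • Measure.dirac true + ENNReal.ofReal (1 - p) • Measure.dirac false

instance (p : unitInterval) : IsProbabilityMeasure (coin p) := by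
  constructor
  simp only [coin, Measure.add_apply, Measure.smul_apply, measure_univ, smul_eq_mul, mul_one]
  rw [← ENNReal.ofReal_add p.2.1 (by linarith [p.2.2])]
  simp

lemma coin_singleton (p : unitInterval) (b : Bool) :
    coin p {b} = if b then ENNReal.ofReal p else ENNReal.ofReal (1 - p) := by
  cases b <;> simp [coin]

/-- Product of independent Bernoulli laws with site dependent weights. -/
noncomputable def bern {ι : Type*} (w : ι → unitInterval) : Measure (ι → Bool) :=
  Measure.infinitePi fun i => coin (w i)

instance {ι : Type*} (w : ι → unitInterval) : IsProbabilityMeasure (bern w) := by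
  unfold bern; infer_instance

lemma measurableSet_cyl {ι : Type*} (F : Finset ι) (e : ι → Bool) :
    MeasurableSet {ξ : ι → Bool | ∀ x ∈ F, ξ x = e x} := by
  have : {ξ : ι → Bool | ∀ x ∈ F, ξ x = e x} = ⋂ x ∈ F, (fun ξ : ι → Bool => ξ x) ⁻¹' {e x} := by
    ext; simp
  rw [this]
  exact Finset.measurableSet_biInter _ fun x _ => measurable_pi_apply x (measurableSet_singleton _)

lemma bern_cyl {ι : Type*} (w : ι → unitInterval) (F : Finset ι) (e : ι → Bool) :
    bern w {ξ | ∀ x ∈ F, ξ x = e x} =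
      ∏ x ∈ F, (if e x then ENNReal.ofReal (w x) else ENNReal.ofReal (1 - w x)) := by
  have : {ξ : ι → Bool | ∀ x ∈ F, ξ x = e x} = Set.pi F (fun x => {e x}) := by
    ext; simp [Set.mem_pi]
  rw [this, bern, Measure.infinitePi_pi _ (fun _ _ => measurableSet_singleton _)]
  simp [coin_singleton]

lemma eq_bern {ι : Type*} (w : ι → unitInterval) (μ : Measure (ι → Bool))
    [IsProbabilityMeasure μ]
    (h : ∀ (F : Finset ι) (e : ι → Bool), μ {ξ | ∀ x ∈ F, ξ x = e x} =
      ∏ x ∈ F, (if e x then ENNReal.ofReal (w x) else ENNReal.ofReal (1 - w x))) :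
    μ = bern w := by
  classical
  have key : ∀ (ν : Measure (ι → Bool)), IsProbabilityMeasure ν →
      (∀ (F : Finset ι) (e : ι → Bool), ν {ξ | ∀ x ∈ F, ξ x = e x} =
      ∏ x ∈ F, (if e x then ENNReal.ofReal (w x) else ENNReal.ofReal (1 - w x))) →
      IsProjectiveLimit ν (fun I : Finset ι => Measure.pi fun i : I => coin (w i)) := by
    intro ν hν hF I
    refine Measure.ext_of_singleton fun f => ?_
    rw [Measure.map_apply (Finset.measurable_restrict I) (measurableSet_singleton _),
      Measure.pi_singleton]
    have e1 : (I.restrict ⁻¹' {f} : Set (ι → Bool)) =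
        {ξ | ∀ x ∈ I, ξ x = (fun x => if hx : x ∈ I then f ⟨x, hx⟩ else true) x} := by
      ext ξ
      simp only [Set.mem_preimage, Set.mem_singleton_iff, Set.mem_ofPred_eq, funext_iff,
        Finset.restrict, Subtype.forall]
      refine forall₂_congr fun x hx => ?_
      simp [hx]
    rw [e1, hF, ← Finset.prod_coe_sort]
    refine Finset.prod_congr rfl fun x _ => ?_
    simp [coin_singleton]
  exact (key μ inferInstance h).unique (key (bern w) inferInstance (bern_cyl w))

/-- The event `A` only depends on the coordinates in `s`. -/
def Dep {ι : Type*} (A : Set (ι → Bool)) (s : Set ι) : Prop :=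
  ∀ ξ ξ' : ι → Bool, (∀ i ∈ s, ξ i = ξ' i) → (ξ ∈ A ↔ ξ' ∈ A)

namespace Dep
variable {ι : Type*} {A B : Set (ι → Bool)} {s t : Set ι}

lemma mono (h : Dep A s) (hst : s ⊆ t) : Dep A t := fun ξ ξ' hx => h ξ ξ' fun i hi => hx i (hst hi)

lemma compl (h : Dep A s) : Dep Aᶜ s := fun ξ ξ' hx => not_congr (h ξ ξ' hx)

lemma inter (h : Dep A s) (h' : Dep B s) : Dep (A ∩ B) s :=
  fun ξ ξ' hx => and_congr (h ξ ξ' hx) (h' ξ ξ' hx)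

lemma union (h : Dep A s) (h' : Dep B s) : Dep (A ∪ B) s :=
  fun ξ ξ' hx => or_congr (h ξ ξ' hx) (h' ξ ξ' hx)

lemma measurableSet (h : Dep A s) (hs : s.Finite) : MeasurableSet A := by
  classical
  let F := hs.toFinset
  have : A = F.restrict ⁻¹' (F.restrict '' A) := by
    refine Set.Subset.antisymm (Set.subset_preimage_image _ _) ?_
    rintro ξ ⟨ξ', h', e⟩
    refine (h ξ ξ' fun i hi => ?_).2 h'
    have := congrFun e ⟨i, hs.mem_toFinset.2 hi⟩
    exact this.symm
  rw [this]
  exact Finset.measurable_restrict F (Set.toFinite _).measurableSet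

end Dep

/-- Probability of an event under the Bernoulli product measure, as a real number. -/
noncomputable def pr {ι : Type*} (w : ι → unitInterval) (A : Set (ι → Bool)) : ℝ := (bern w).real A

section
variable {ι : Type*} {w : ι → unitInterval} {A B : Set (ι → Bool)} {s t : Set ι}

lemma pr_nonneg : 0 ≤ pr w A := measureReal_nonneg
lemma pr_le_one : pr w A ≤ 1 := measureReal_le_one
lemma pr_mono (h : A ⊆ B) : pr w A ≤ pr w B := measureReal_mono h
lemma pr_univ : pr w Set.univ = 1 := by simp [pr]
lemma pr_empty : pr w ∅ = 0 := by simp [pr]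
lemma pr_union_le : pr w (A ∪ B) ≤ pr w A + pr w B := measureReal_union_le A B
lemma pr_compl (h : Dep A s) (hs : s.Finite) : pr w Aᶜ = 1 - pr w A := by
  simp [pr, probReal_compl_eq_one_sub (h.measurableSet hs)]
lemma one_le_pr_add_compl : 1 ≤ pr w A + pr w Aᶜ := by
  rw [← pr_univ (w := w), ← Set.union_compl_self A]; exact pr_union_le
lemma pr_biUnion_le {κ : Type*} (I : Finset κ) (f : κ → Set (ι → Bool)) :
    pr w (⋃ k ∈ I, f k) ≤ ∑ k ∈ I, pr w (f k) := measureReal_biUnion_finset_le I f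
lemma pr_diff_add_inter (A : Set (ι → Bool)) (hB : Dep B s) (hs : s.Finite) :
    pr w (A ∩ B) + pr w (A \ B) = pr w A := by
  exact measureReal_inter_add_sdiff (hB.measurableSet hs)

lemma pr_biUnion {κ : Type*} (I : Finset κ) (f : κ → Set (ι → Bool))
    (hd : ∀ i ∈ I, ∀ j ∈ I, i ≠ j → Disjoint (f i) (f j))
    (s : κ → Set ι) (hs : ∀ i ∈ I, (s i).Finite) (h : ∀ i ∈ I, Dep (f i) (s i)) :
    pr w (⋃ k ∈ I, f k) = ∑ k ∈ I, pr w (f k) :=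
  measureReal_biUnion_finset (fun i hi j hj hij => hd i hi j hj hij)
    (fun i hi => (h i hi).measurableSet (hs i hi))

lemma pr_inter (hA : Dep A s) (hB : Dep B t) (hs : s.Finite) (ht : t.Finite)
    (hst : Disjoint s t) : pr w (A ∩ B) = pr w A * pr w B := by
  classical
  have h1 : ProbabilityTheory.iIndepFun (fun (i : ι) (ξ : ι → Bool) => ξ i) (bern w) :=
    ProbabilityTheory.iIndepFun_infinitePi (X := fun _ b => b) (fun i => measurable_id)
  have h2 := h1.indepFun_finset hs.toFinset ht.toFinset
    (by simpa [Finset.disjoint_left, Set.disjoint_left] using hst) (fun i => measurable_pi_apply i)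
  have e : ∀ {C : Set (ι → Bool)} {u : Set ι} (hu : u.Finite), Dep C u →
      C = (fun ξ (i : hu.toFinset) => ξ i) ⁻¹' ((fun ξ (i : hu.toFinset) => ξ i) '' C) := by
    intro C u hu h
    refine Set.Subset.antisymm (Set.subset_preimage_image _ _) ?_
    rintro ξ ⟨ξ', h', e⟩
    refine (h ξ ξ' fun i hi => ?_).2 h'
    exact (congrFun e ⟨i, hu.mem_toFinset.2 hi⟩).symm
  have := h2.measure_inter_preimage_eq_mul _ _ (Set.toFinite ((fun ξ (i : hs.toFinset) => ξ i) '' A)).measurableSet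
    (Set.toFinite ((fun ξ (i : ht.toFinset) => ξ i) '' B)).measurableSet
  rw [← e hs hA, ← e ht hB] at this
  simp [pr, Measure.real, this]

lemma pr_site (w : ι → unitInterval) (i : ι) : pr w {ξ | ξ i = true} = w i := by
  have := bern_cyl w {i} (fun _ => true)
  simp only [Finset.mem_singleton, forall_eq, Finset.prod_singleton, if_true] at this
  rw [pr, Measure.real, this, ENNReal.toReal_ofReal (w i).2.1]

lemma pr_site_false (w : ι → unitInterval) (i : ι) : pr w {ξ | ξ i = false} = 1 - w i := by
  have := bern_cyl w {i} (fun _ => false)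
  simp only [Finset.mem_singleton, forall_eq, Finset.prod_singleton] at this
  rw [pr, Measure.real, this]
  simpa using (w i).2.2

lemma dep_site (i : ι) (b : Bool) : Dep {ξ : ι → Bool | ξ i = b} {i} := fun ξ ξ' h => by
  simp [h i rfl]

lemma pr_cyl (w : ι → unitInterval) (F : Finset ι) (e : ι → Bool) :
    pr w {ξ | ∀ x ∈ F, ξ x = e x} = ∏ x ∈ F, (if e x then (w x : ℝ) else 1 - w x) := by
  rw [pr, Measure.real, bern_cyl, ENNReal.toReal_prod]
  refine Finset.prod_congr rfl fun x _ => ?_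
  split_ifs
  · exact ENNReal.toReal_ofReal (w x).2.1
  · exact ENNReal.toReal_ofReal (by linarith [(w x).2.2])

lemma dep_cyl (F : Finset ι) (e : ι → Bool) : Dep {ξ : ι → Bool | ∀ x ∈ F, ξ x = e x} F :=
  fun ξ ξ' h => by
    refine forall₂_congr fun x hx => ?_
    rw [h x hx]

/-- The section of an event obtained by forcing the value at one coordinate. -/
def forced [DecidableEq ι] (A : Set (ι → Bool)) (i : ι) (b : Bool) : Set (ι → Bool) :=
  {ξ | Function.update ξ i b ∈ A}

lemma Dep.forced [DecidableEq ι] (h : Dep A s) (i : ι) (b : Bool) : Dep (forced A i b) (s \ {i}) := by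
  intro ξ ξ' hx
  refine h _ _ fun j hj => ?_
  by_cases hji : j = i
  · subst hji; simp
  · simp [hji, hx j ⟨hj, hji⟩]

lemma pr_eq_forced [DecidableEq ι] (h : Dep A s) (hs : s.Finite) (i : ι) :
    pr w A = w i * pr w (forced A i true) + (1 - w i) * pr w (forced A i false) := by
  have e1 : A ∩ {ξ | ξ i = true} = forced A i true ∩ {ξ | ξ i = true} := by
    ext ξ
    simp only [Set.mem_inter_iff, Set.mem_ofPred_eq, forced, and_congr_left_iff]
    intro hi; rw [← hi, Function.update_eq_self]
  have e2 : A \ {ξ | ξ i = true} = forced A i false ∩ {ξ | ξ i = false} := by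
    ext ξ
    simp only [Set.mem_sdiff, Set.mem_inter_iff, Set.mem_ofPred_eq, forced, Bool.not_eq_true,
      and_congr_left_iff]
    intro hi; rw [← hi, Function.update_eq_self]
  rw [← pr_diff_add_inter A (dep_site i true) (Set.finite_singleton i), e1, e2,
    pr_inter (h.forced i true) (dep_site i true) (hs.subset Set.sdiff_subset)
      (Set.finite_singleton i) Set.disjoint_sdiff_left,
    pr_inter (h.forced i false) (dep_site i false) (hs.subset Set.sdiff_subset)
      (Set.finite_singleton i) Set.disjoint_sdiff_left, pr_site, pr_site_false]
  ring

/-- The event `A` is increasing in the configuration. -/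
def Incr (A : Set (ι → Bool)) : Prop :=
  ∀ ξ ξ' : ι → Bool, (∀ i, ξ i = true → ξ' i = true) → ξ ∈ A → ξ' ∈ A

lemma Incr.inter (hA : Incr A) (hB : Incr B) : Incr (A ∩ B) :=
  fun _ _ h hx => ⟨hA _ _ h hx.1, hB _ _ h hx.2⟩

lemma Incr.forced [DecidableEq ι] (hA : Incr A) (i : ι) (b : Bool) : Incr (forced A i b) := by
  intro ξ ξ' h hx
  refine hA _ _ (fun j => ?_) hx
  by_cases hji : j = i
  · subst hji; simp
  · simpa [hji] using h j

lemma Incr.forced_le [DecidableEq ι] (hA : Incr A) (i : ι) : _root_.forced A i false ⊆ _root_.forced A i true := by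
  intro ξ hx
  refine hA _ _ (fun j => ?_) hx
  by_cases hji : j = i
  · subst hji; simp
  · simp [hji]

theorem harris (hs : s.Finite) (hA : Dep A s) (hB : Dep B s) (iA : Incr A) (iB : Incr B) :
    pr w A * pr w B ≤ pr w (A ∩ B) := by
  classical
  induction s, hs using Set.Finite.induction_on generalizing A B with
  | empty =>
    have : ∀ C : Set (ι → Bool), Dep C ∅ → C = ∅ ∨ C = Set.univ := by
      intro C hC
      rcases C.eq_empty_or_nonempty with h | ⟨ξ, hξ⟩
      · exact Or.inl h
      · exact Or.inr (Set.eq_univ_of_forall fun ξ' => (hC ξ ξ' (by simp)).1 hξ)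
    rcases this A hA with rfl | rfl
    · simp [pr_empty]
    · simp [pr_univ]
  | @insert i s hi hs ih =>
    have hfin := hs.insert i
    have hsub : insert i s \ {i} ⊆ s := by intro j; simp; tauto
    rw [pr_eq_forced hA hfin i, pr_eq_forced hB hfin i, pr_eq_forced (hA.inter hB) hfin i]
    have d := fun b => (hA.forced i b).mono hsub
    have d' := fun b => (hB.forced i b).mono hsub
    have h1 := ih (d true) (d' true) (iA.forced i true) (iB.forced i true)
    have h0 := ih (d false) (d' false) (iA.forced i false) (iB.forced i false)
    have m1 : pr w (forced A i false) ≤ pr w (forced A i true) := pr_mono (iA.forced_le i)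
    have m2 : pr w (forced B i false) ≤ pr w (forced B i true) := pr_mono (iB.forced_le i)
    have w0 := (w i).2.1
    have w1 := (w i).2.2
    change _ ≤ w i * pr w (forced A i true ∩ forced B i true) +
      (1 - w i) * pr w (forced A i false ∩ forced B i false)
    have k1 := mul_le_mul_of_nonneg_left h1 w0
    have k0 := mul_le_mul_of_nonneg_left h0 (sub_nonneg.2 w1)
    have k2 := mul_nonneg (mul_nonneg w0 (sub_nonneg.2 w1))
      (mul_nonneg (sub_nonneg.2 m1) (sub_nonneg.2 m2))
    nlinarith

/-- Harris' inequality for two decreasing events, written through complements. -/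
theorem harris_compl (hs : s.Finite) (hA : Dep A s) (hB : Dep B s) (iA : Incr A) (iB : Incr B) :
    pr w Aᶜ * pr w Bᶜ ≤ pr w (Aᶜ ∩ Bᶜ) := by
  have h := harris (w := w) hs hA hB iA iB
  have e : Aᶜ ∩ Bᶜ = (A ∪ B)ᶜ := (Set.compl_union A B).symm
  rw [e, pr_compl hA hs, pr_compl hB hs, pr_compl (hA.union hB) hs]
  have : pr w (A ∪ B) + pr w (A ∩ B) = pr w A + pr w B := by
    exact measureReal_union_add_inter (hB.measurableSet hs)
  nlinarith

end

lemma map_bern_comp {ι κ : Type*} (w : ι → unitInterval) (f : κ → ι) (hf : Function.Injective f) :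
    (bern w).map (fun ξ k => ξ (f k)) = bern fun k => w (f k) := by
  classical
  have hm : Measurable (fun (ξ : ι → Bool) (k : κ) => ξ (f k)) :=
    measurable_pi_lambda _ fun k => measurable_pi_apply (f k)
  have := Measure.isProbabilityMeasure_map (μ := bern w) hm.aemeasurable
  refine eq_bern _ _ fun F e => ?_
  rw [Measure.map_apply hm (measurableSet_cyl F e)]
  have : (fun (ξ : ι → Bool) (k : κ) => ξ (f k)) ⁻¹' {ξ | ∀ x ∈ F, ξ x = e x} =
      {ξ | ∀ y ∈ F.image f, ξ y = (Function.extend f e fun _ => true) y} := by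
    ext ξ
    simp [hf.extend_apply]
  rw [this, bern_cyl, Finset.prod_image (fun a _ b _ h => hf h)]
  simp [hf.extend_apply]

lemma pr_comp {ι κ : Type*} (w : ι → unitInterval) (f : κ → ι) (hf : Function.Injective f)
    {A : Set (κ → Bool)} (hA : MeasurableSet A) :
    pr w {ξ | (fun k => ξ (f k)) ∈ A} = pr (fun k => w (f k)) A := by
  have hm : Measurable (fun (ξ : ι → Bool) (k : κ) => ξ (f k)) :=
    measurable_pi_lambda _ fun k => measurable_pi_apply (f k)
  rw [pr, pr, Measure.real, Measure.real, ← map_bern_comp w f hf, Measure.map_apply hm hA]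
  rfl

/-- Conditional lower bound: on disjoint events `B k` an independent event `C k` holds with
probability at least `ρ`. -/
lemma le_pr_biUnion_inter {ι κ : Type*} {w : ι → unitInterval} (I : Finset κ)
    (B C : κ → Set (ι → Bool)) (s t : κ → Set ι) (ρ : κ → ℝ)
    (hd : ∀ i ∈ I, ∀ j ∈ I, i ≠ j → Disjoint (B i) (B j))
    (hs : ∀ i ∈ I, (s i).Finite) (ht : ∀ i ∈ I, (t i).Finite)
    (hB : ∀ i ∈ I, Dep (B i) (s i)) (hC : ∀ i ∈ I, Dep (C i) (t i))
    (hst : ∀ i ∈ I, Disjoint (s i) (t i)) (hρ : ∀ i ∈ I, ρ i ≤ pr w (C i)) :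
    ∑ k ∈ I, ρ k * pr w (B k) ≤ pr w (⋃ k ∈ I, B k ∩ C k) := by
  rw [pr_biUnion I (fun k => B k ∩ C k)
    (fun i hi j hj hij => (hd i hi j hj hij).mono Set.inter_subset_left Set.inter_subset_left)
    (fun k => s k ∪ t k) (fun i hi => (hs i hi).union (ht i hi))
    (fun i hi => ((hB i hi).mono Set.subset_union_left).inter
      ((hC i hi).mono Set.subset_union_right))]
  refine Finset.sum_le_sum fun k hk => ?_
  rw [pr_inter (hB k hk) (hC k hk) (hs k hk) (ht k hk) (hst k hk), mul_comm]
  exact mul_le_mul_of_nonneg_left (hρ k hk) pr_nonneg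

lemma pr_biUnion_inter_le {ι κ : Type*} {w : ι → unitInterval} (I : Finset κ)
    (B C : κ → Set (ι → Bool)) (s t : κ → Set ι) (ρ : ℝ)
    (hd : ∀ i ∈ I, ∀ j ∈ I, i ≠ j → Disjoint (B i) (B j))
    (hs : ∀ i ∈ I, (s i).Finite) (ht : ∀ i ∈ I, (t i).Finite)
    (hB : ∀ i ∈ I, Dep (B i) (s i)) (hC : ∀ i ∈ I, Dep (C i) (t i))
    (hst : ∀ i ∈ I, Disjoint (s i) (t i)) (hρ : ∀ i ∈ I, pr w (C i) ≤ ρ) :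
    pr w (⋃ k ∈ I, B k ∩ C k) ≤ ρ * pr w (⋃ k ∈ I, B k) := by
  rw [pr_biUnion I B hd s hs hB, Finset.mul_sum]
  refine (pr_biUnion_le I _).trans (Finset.sum_le_sum fun k hk => ?_)
  rw [pr_inter (hB k hk) (hC k hk) (hs k hk) (ht k hk) (hst k hk), mul_comm]
  exact mul_le_mul_of_nonneg_right (hρ k hk) pr_nonneg

/-- `y` is reached from `x` by steps along `adj`, every visited vertex after `x` being in `P`. -/
def Conn {V : Type*} (adj : V → V → Prop) (P : Set V) (x y : V) : Prop :=
  Relation.ReflTransGen (fun a b => adj a b ∧ b ∈ P) x y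

namespace Conn
variable {V : Type*} {adj : V → V → Prop} {P Q : Set V} {x y z : V}

lemma refl : Conn adj P x x := Relation.ReflTransGen.refl

lemma trans (h : Conn adj P x y) (h' : Conn adj P y z) : Conn adj P x z :=
  Relation.ReflTransGen.trans h h'

lemma tail (h : Conn adj P x y) (h1 : adj y z) (h2 : z ∈ P) : Conn adj P x z :=
  Relation.ReflTransGen.tail h ⟨h1, h2⟩

lemma single (h1 : adj x y) (h2 : y ∈ P) : Conn adj P x y := refl.tail h1 h2

lemma mono (h : Conn adj P x y) (hPQ : P ⊆ Q) : Conn adj Q x y := by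
  induction h with
  | refl => exact refl
  | tail _ h2 ih => exact ih.tail h2.1 (hPQ h2.2)

lemma eq_or_mem (h : Conn adj P x y) : y = x ∨ y ∈ P := by
  cases h with
  | refl => exact Or.inl rfl
  | tail _ h => exact Or.inr h.2

lemma mem (h : Conn adj P x y) (hx : x ∈ P) : y ∈ P := by
  rcases h.eq_or_mem with rfl | h
  · exact hx
  · exact h

lemma symm (hs : ∀ a b, adj a b → adj b a) (hx : x ∈ P) (h : Conn adj P x y) :
    Conn adj P y x := by
  induction h with
  | refl => exact refl
  | tail h1 h2 ih =>
    exact (single (hs _ _ h2.1) (Conn.mem h1 hx)).trans ih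

lemma last_exit {R : Set V} (hx : x ∈ R) (h : Conn adj P x y) :
    ∃ z ∈ R, (z = x ∨ z ∈ P) ∧ Conn adj (P \ R) z y := by
  induction h with
  | refl => exact ⟨x, hx, Or.inl rfl, refl⟩
  | @tail b c h1 h2 ih =>
    by_cases hc : c ∈ R
    · exact ⟨c, hc, Or.inr h2.2, refl⟩
    · obtain ⟨z, hz, hz', h3⟩ := ih
      exact ⟨z, hz, hz', h3.tail h2.1 ⟨h2.2, hc⟩⟩

lemma mem_or_first_exit {C : Set V} (hx : x ∈ C) (h : Conn adj P x y) :
    (y ∈ C ∧ Conn adj (P ∩ C) x y) ∨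
      ∃ u ∈ C, ∃ w, w ∉ C ∧ Conn adj (P ∩ C) x u ∧ adj u w ∧ w ∈ P := by
  induction h with
  | refl => exact Or.inl ⟨hx, refl⟩
  | @tail p q _ h6 ih =>
    rcases ih with h | h
    · by_cases hq : q ∈ C
      · exact Or.inl ⟨hq, h.2.tail h6.1 ⟨h6.2, hq⟩⟩
      · exact Or.inr ⟨p, h.1, q, hq, h.2, h6⟩
    · exact Or.inr h

lemma first_exit {C : Set V} (hx : x ∈ C) (hy : y ∉ C) (h : Conn adj P x y) :
    ∃ u ∈ C, ∃ w, w ∉ C ∧ Conn adj (P ∩ C) x u ∧ adj u w ∧ w ∈ P :=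
  (mem_or_first_exit hx h).resolve_left fun h => hy h.1

end Conn

/-- Nearest-neighbour adjacency on the cubic lattice. -/
def Adj {d : ℕ} (x y : Fin d → ℤ) : Prop := norm1 (y - x) = 1

section lattice
variable {d : ℕ}

lemma Adj.symm {x y : Fin d → ℤ} (h : Adj x y) : Adj y x := by
  unfold Adj norm1 at *
  rw [← h]
  refine Finset.sum_congr rfl fun i _ => ?_
  simp only [Pi.sub_apply]; omega

lemma adj_symm (x y : Fin d → ℤ) (h : Adj x y) : Adj y x := h.symm

lemma adj_add_single (x : Fin d → ℤ) (i : Fin d) {ε : ℤ} (hε : ε = 1 ∨ ε = -1) :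
    Adj x (x + Pi.single i ε) := by
  unfold Adj norm1
  rw [Finset.sum_eq_single i]
  · simp; omega
  · intro j _ hj; simp [hj]
  · simp

lemma Adj.exists_single {x y : Fin d → ℤ} (h : Adj x y) :
    ∃ i, ∃ ε : ℤ, (ε = 1 ∨ ε = -1) ∧ y = x + Pi.single i ε := by
  classical
  unfold Adj norm1 at h
  have : ∃ i, ((y - x) i).natAbs ≠ 0 := by
    by_contra! hc
    simp only [hc, Finset.sum_const_zero] at h; omega
  obtain ⟨i, hi⟩ := this
  rw [← Finset.add_sum_erase _ _ (Finset.mem_univ i)] at h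
  have h0 : ∑ j ∈ Finset.univ.erase i, ((y - x) j).natAbs = 0 := by omega
  rw [Finset.sum_eq_zero_iff] at h0
  refine ⟨i, y i - x i, by simp only [Pi.sub_apply] at *; omega, funext fun j => ?_⟩
  by_cases hj : j = i
  · subst hj; simp
  · have := h0 j (by simp [hj])
    simp only [Pi.sub_apply, Pi.add_apply, Pi.single_apply, hj, if_false] at *
    omega

lemma Adj.abs_sub_le {x y : Fin d → ℤ} (h : Adj x y) (k : Fin d) :
    |y k - x k| ≤ 1 := by
  obtain ⟨i, ε, hε, rfl⟩ := h.exists_single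
  by_cases hk : k = i
  · subst hk; rcases hε with rfl | rfl <;> simp
  · simp [hk]

lemma Adj.add_right {x y : Fin d → ℤ} (h : Adj x y) (c : Fin d → ℤ) : Adj (x + c) (y + c) := by
  unfold Adj at *; simpa using h

lemma conn_Icc {a b x y : Fin d → ℤ} (hx : x ∈ Set.Icc a b) (hy : y ∈ Set.Icc a b) :
    Conn Adj (Set.Icc a b) x y := by
  obtain ⟨n, hn⟩ : ∃ n, norm1 (y - x) = n := ⟨_, rfl⟩
  induction n generalizing x with
  | zero =>
    have : x = y := by
      funext i
      unfold norm1 at hn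
      rw [Finset.sum_eq_zero_iff] at hn
      have := hn i (Finset.mem_univ i)
      simp only [Pi.sub_apply] at this; omega
    subst this; exact Conn.refl
  | succ n ih =>
    have : ∃ i, ((y - x) i).natAbs ≠ 0 := by
      by_contra! hc
      unfold norm1 at hn
      simp only [hc, Finset.sum_const_zero] at hn; omega
    obtain ⟨i, hi⟩ := this
    simp only [Pi.sub_apply] at hi
    obtain ⟨ε, hε, hd⟩ : ∃ ε : ℤ, (ε = 1 ∨ ε = -1) ∧
        (y i - (x i + ε)).natAbs + 1 = (y i - x i).natAbs := by
      rcases lt_or_gt_of_ne (show x i ≠ y i by omega) with h | h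
      · exact ⟨1, Or.inl rfl, by omega⟩
      · exact ⟨-1, Or.inr rfl, by omega⟩
    have hx' : x + Pi.single i ε ∈ Set.Icc a b := by
      refine ⟨fun j => ?_, fun j => ?_⟩
      all_goals
        have h1 : a j ≤ x j := hx.1 j
        have h2 : x j ≤ b j := hx.2 j
        have h3 : a j ≤ y j := hy.1 j
        have h4 : y j ≤ b j := hy.2 j
        by_cases hj : j = i
        · subst hj; simp only [Pi.add_apply, Pi.single_eq_same]; omega
        · simp only [Pi.add_apply, Pi.single_eq_of_ne hj, add_zero]; assumption
    refine (Conn.single (adj_add_single x i hε) hx').trans (ih hx' ?_)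
    unfold norm1 at *
    rw [← Finset.add_sum_erase _ _ (Finset.mem_univ i)] at hn ⊢
    have e : ∑ j ∈ Finset.univ.erase i, ((y - (x + Pi.single i ε) : Fin d → ℤ) j).natAbs =
        ∑ j ∈ Finset.univ.erase i, ((y - x) j).natAbs := by
      refine Finset.sum_congr rfl fun j hj => ?_
      simp only [Pi.sub_apply, Pi.add_apply, Pi.single_eq_of_ne (Finset.mem_erase.1 hj).1, add_zero]
    rw [e]
    simp only [Pi.sub_apply, Pi.add_apply, Pi.single_eq_same] at *
    omega

/-- The `ℓ∞` ball with integer radius around `c`, as an interval. -/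
def ball (c : Fin d → ℤ) (r : ℤ) : Set (Fin d → ℤ) :=
  Set.Icc (fun i => c i - r) (fun i => c i + r)

lemma mem_ball {c x : Fin d → ℤ} {r : ℤ} : x ∈ ball c r ↔ ∀ i, |x i - c i| ≤ r := by
  simp only [ball, Set.mem_Icc, Pi.le_def, abs_le]
  constructor
  · intro h i; have := h.1 i; have := h.2 i; constructor <;> omega
  · intro h; constructor <;> intro i <;> have := h i <;> omega

lemma finite_ball (c : Fin d → ℤ) (r : ℤ) : (ball c r).Finite := Set.finite_Icc _ _

lemma self_mem_ball (c : Fin d → ℤ) {r : ℤ} (hr : 0 ≤ r) : c ∈ ball c r := by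
  simpa [mem_ball] using fun _ => hr

end lattice

section percolation
variable {d : ℕ}

/-- The set of open sites of a configuration. -/
def opn {V : Type*} (ξ : V → Bool) : Set V := {x | ξ x = true}

/-- `ball 0 m` is connected to the inner boundary of `ball 0 n` through open sites of the
annulus. -/
def annulusEvent (d m n : ℕ) : Set ((Fin d → ℤ) → Bool) :=
  {ξ | ∃ a ∈ ball (0 : Fin d → ℤ) m, ∃ u ∈ ball (0 : Fin d → ℤ) n, (∃ w, w ∉ ball (0 : Fin d → ℤ) n ∧ Adj u w) ∧
    Conn Adj ((opn ξ \ ball 0 m) ∩ ball 0 n) a u}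

lemma dep_conn_event {V : Type*} (ξ ξ' : V → Bool) (S : Set V)
    (h : ∀ i ∈ S, ξ i = ξ' i) : opn ξ ∩ S = opn ξ' ∩ S := by
  ext x
  simp only [opn, Set.mem_inter_iff, Set.mem_ofPred_eq, and_congr_left_iff]
  intro hx; rw [h x hx]

lemma ball_mono (c : Fin d → ℤ) {m n : ℤ} (h : m ≤ n) : ball c m ⊆ ball c n := by
  intro x hx; rw [mem_ball] at *; intro i; exact (hx i).trans h

lemma dep_annulusEvent (m n : ℕ) : Dep (annulusEvent d m n) (ball 0 n \ ball 0 m) := by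
  intro ξ ξ' h
  have : (opn ξ \ ball (0 : Fin d → ℤ) m) ∩ ball 0 n = (opn ξ' \ ball 0 m) ∩ ball 0 n := by
    ext x
    simp only [opn, Set.mem_inter_iff, Set.mem_sdiff, Set.mem_ofPred_eq]
    constructor <;> rintro ⟨⟨h1, h2⟩, h3⟩ <;> refine ⟨⟨?_, h2⟩, h3⟩
    · rw [← h x ⟨h3, h2⟩]; exact h1
    · rw [h x ⟨h3, h2⟩]; exact h1
  simp only [annulusEvent, Set.mem_ofPred_eq, this]

lemma annulusEvent_mono_left {m m' n : ℕ} (h : m ≤ m') :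
    annulusEvent d m n ⊆ annulusEvent d m' n := by
  rintro ξ ⟨a, ha, u, hu, hw, hc⟩
  obtain ⟨z, hz, -, hc'⟩ := hc.last_exit (ball_mono 0 (by exact_mod_cast h) ha : a ∈ ball 0 (m' : ℤ))
  exact ⟨z, hz, u, hu, hw, hc'.mono fun x hx => ⟨⟨hx.1.1.1, hx.2⟩, hx.1.2⟩⟩

lemma annulusEvent_anti_right {m n n' : ℕ} (h : m ≤ n) (h' : n ≤ n') :
    annulusEvent d m n' ⊆ annulusEvent d m n := by
  rintro ξ ⟨a, ha, u, hu, ⟨w, hw, huw⟩, hc⟩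
  have ha' : a ∈ ball 0 (n : ℤ) := ball_mono 0 (by exact_mod_cast h) ha
  by_cases hun : u ∈ ball 0 (n : ℤ)
  · rcases hc.mem_or_first_exit ha' with ⟨-, h2⟩ | ⟨u', hu', w', hw', h3, h4, -⟩
    · exact ⟨a, ha, u, hun, ⟨w, fun hh => hw (ball_mono 0 (by exact_mod_cast h') hh), huw⟩,
        h2.mono fun x hx => ⟨hx.1.1, hx.2⟩⟩
    · exact ⟨a, ha, u', hu', ⟨w', hw', h4⟩, h3.mono fun x hx => ⟨hx.1.1, hx.2⟩⟩
  · obtain ⟨u', hu', w', hw', h3, h4, -⟩ := hc.first_exit ha' hun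
    exact ⟨a, ha, u', hu', ⟨w', hw', h4⟩, h3.mono fun x hx => ⟨hx.1.1, hx.2⟩⟩

/-- Existence of an infinite open cluster, in a form manifestly invariant under finite changes. -/
def infEvent (d : ℕ) : Set ((Fin d → ℤ) → Bool) := ⋃ m : ℕ, ⋂ k : ℕ, annulusEvent d m (m + k)

lemma exists_mem_ball (x : Fin d → ℤ) : ∃ m : ℕ, x ∈ ball (0 : Fin d → ℤ) m := by
  refine ⟨∑ i, (x i).natAbs, mem_ball.2 fun i => ?_⟩
  have : (x i).natAbs ≤ ∑ i, (x i).natAbs :=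
    Finset.single_le_sum (f := fun i => (x i).natAbs) (fun _ _ => Nat.zero_le _) (Finset.mem_univ i)
  simp only [Pi.zero_apply, sub_zero, Int.abs_eq_natAbs]
  exact_mod_cast this

lemma perc_subset_infEvent : Perc d ⊆ infEvent d := by
  rintro ξ ⟨γ, hinj, hadj, hopen⟩
  obtain ⟨m, hm⟩ := exists_mem_ball (γ 0)
  refine Set.mem_iUnion.2 ⟨m, Set.mem_iInter.2 fun k => ?_⟩
  obtain ⟨l, hl⟩ : ∃ l, γ l ∉ ball (0 : Fin d → ℤ) (m + k : ℕ) := by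
    by_contra! hc
    exact (Set.infinite_range_of_injective hinj)
      ((finite_ball _ _).subset (Set.range_subset_iff.2 hc))
  have hconn : ∀ l, Conn Adj (opn ξ) (γ 0) (γ l) := by
    intro l
    induction l with
    | zero => exact Conn.refl
    | succ l ih => exact ih.tail (hadj l) (hopen _)
  obtain ⟨z, hz, -, h1⟩ := (hconn l).last_exit hm
  have hz' : z ∈ ball 0 ((m + k : ℕ) : ℤ) := ball_mono 0 (by simp) hz
  obtain ⟨u, hu, w, hw, h2, h3, -⟩ := h1.first_exit hz' hl
  exact ⟨z, hz, u, hu, ⟨w, hw, h3⟩, h2⟩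

lemma measurableSet_annulusEvent (m n : ℕ) : MeasurableSet (annulusEvent d m n) :=
  (dep_annulusEvent m n).measurableSet ((finite_ball _ _).subset Set.sdiff_subset)

lemma measurableSet_infEvent : MeasurableSet (infEvent d) :=
  MeasurableSet.iUnion fun _ => MeasurableSet.iInter fun _ => measurableSet_annulusEvent _ _

lemma monotone_iInter_annulusEvent :
    Monotone fun m : ℕ => ⋂ k : ℕ, annulusEvent d m (m + k) := by
  intro m m' h ξ hξ
  rw [Set.mem_iInter] at *
  intro k
  have := hξ (m' - m + k)
  rw [show m + (m' - m + k) = m' + k by omega] at this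
  exact annulusEvent_mono_left h this

lemma antitone_annulusEvent (m : ℕ) : Antitone fun k : ℕ => annulusEvent d m (m + k) :=
  fun _ _ h => annulusEvent_anti_right (by omega) (by omega)

open Filter Topology in
lemma tendsto_annulus (w : (Fin d → ℤ) → unitInterval) (m : ℕ) (C : Set ((Fin d → ℤ) → Bool))
    (hC : MeasurableSet C) :
    Tendsto (fun k : ℕ => bern w (annulusEvent d m (m + k) ∩ C)) atTop
      (𝓝 (bern w ((⋂ k : ℕ, annulusEvent d m (m + k)) ∩ C))) := by
  rw [Set.iInter_inter]
  refine tendsto_measure_iInter_atTop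
    (fun k => ((measurableSet_annulusEvent _ _).inter hC).nullMeasurableSet)
    (fun a b h => Set.inter_subset_inter_left _ (antitone_annulusEvent m h)) ⟨0, measure_ne_top _ _⟩

open Filter Topology in
lemma infEvent_inter_cyl (w : (Fin d → ℤ) → unitInterval) (F : Finset (Fin d → ℤ))
    (e : (Fin d → ℤ) → Bool) :
    bern w (infEvent d ∩ {ξ | ∀ x ∈ F, ξ x = e x}) =
      bern w (infEvent d) * bern w {ξ | ∀ x ∈ F, ξ x = e x} := by
  set C : Set ((Fin d → ℤ) → Bool) := {ξ | ∀ x ∈ F, ξ x = e x} with hCdef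
  have hC : MeasurableSet C := measurableSet_cyl F e
  obtain ⟨m0, hm0⟩ : ∃ m0 : ℕ, ∀ x ∈ F, x ∈ ball (0 : Fin d → ℤ) m0 := by
    choose f hf using fun x : Fin d → ℤ => exists_mem_ball x
    exact ⟨F.sup f, fun x hx => ball_mono 0 (by exact_mod_cast Finset.le_sup hx) (hf x)⟩
  have hloc : ∀ m, m0 ≤ m → ∀ k, bern w (annulusEvent d m (m + k) ∩ C) =
      bern w (annulusEvent d m (m + k)) * bern w C := by
    intro m hm k
    have := pr_inter (w := w) (dep_annulusEvent (d := d) m (m + k)) (dep_cyl F e)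
      ((finite_ball _ _).subset Set.sdiff_subset) F.finite_toSet (by
        rw [Set.disjoint_left]
        intro x hx hxF
        exact hx.2 (ball_mono 0 (by exact_mod_cast hm) (hm0 x hxF)))
    simp only [pr, Measure.real, ← ENNReal.toReal_mul] at this
    exact (ENNReal.toReal_eq_toReal_iff' (measure_ne_top _ _)
      (ENNReal.mul_ne_top (measure_ne_top _ _) (measure_ne_top _ _))).1 this
  have hG : ∀ m, m0 ≤ m → bern w ((⋂ k : ℕ, annulusEvent d m (m + k)) ∩ C) =
      bern w (⋂ k : ℕ, annulusEvent d m (m + k)) * bern w C := by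
    intro m hm
    refine tendsto_nhds_unique (tendsto_annulus w m C hC) ?_
    simp_rw [hloc m hm]
    have := tendsto_annulus w m Set.univ MeasurableSet.univ
    simp only [Set.inter_univ] at this
    exact ENNReal.Tendsto.mul_const this (Or.inr (measure_ne_top _ _))
  have h1 : Tendsto (fun m : ℕ => bern w ((⋂ k : ℕ, annulusEvent d m (m + k)) ∩ C)) atTop
      (𝓝 (bern w (infEvent d ∩ C))) := by
    rw [infEvent, Set.iUnion_inter]
    exact tendsto_measure_iUnion_atTop
      (fun a b h => Set.inter_subset_inter_left _ (monotone_iInter_annulusEvent h))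
  have h2 : Tendsto (fun m : ℕ => bern w (⋂ k : ℕ, annulusEvent d m (m + k))) atTop
      (𝓝 (bern w (infEvent d))) := tendsto_measure_iUnion_atTop monotone_iInter_annulusEvent
  refine tendsto_nhds_unique h1 ?_
  refine (ENNReal.Tendsto.mul_const h2 (Or.inr (measure_ne_top _ C))).congr' ?_
  filter_upwards [eventually_ge_atTop m0] with m hm
  exact (hG m hm).symm

/-- Zero-one law for the existence of an infinite cluster. -/
lemma infEvent_prob_one (w : (Fin d → ℤ) → unitInterval) (h : bern w (Perc d) ≠ 0) :
    bern w (infEvent d) = 1 := by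
  have hA : bern w (infEvent d) ≠ 0 := fun h0 =>
    h (le_antisymm ((measure_mono perc_subset_infEvent).trans h0.le) zero_le)
  let ν : Measure ((Fin d → ℤ) → Bool) := (bern w (infEvent d))⁻¹ • (bern w).restrict (infEvent d)
  have hν : IsProbabilityMeasure ν := by
    constructor
    simp only [ν, Measure.smul_apply, Measure.restrict_apply_univ, smul_eq_mul]
    exact ENNReal.inv_mul_cancel hA (measure_ne_top _ _)
  have heq : ν = bern w := by
    refine eq_bern w ν fun F e => ?_
    simp only [ν, Measure.smul_apply, smul_eq_mul]
    rw [Measure.restrict_apply (measurableSet_cyl F e), Set.inter_comm, infEvent_inter_cyl,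
      ← mul_assoc, ENNReal.inv_mul_cancel hA (measure_ne_top _ _), one_mul, bern_cyl]
  have : bern w (infEvent d)ᶜ = 0 := by
    rw [← heq]
    simp [ν, Measure.restrict_apply measurableSet_infEvent.compl]
  exact (prob_compl_eq_zero_iff measurableSet_infEvent).1 this

open Filter Topology in
lemma exists_annulus_prob (w : (Fin d → ℤ) → unitInterval) (h : bern w (Perc d) ≠ 0)
    {η : ℝ} (hη : 0 < η) : ∃ m : ℕ, ∀ n ≥ m, 1 - η ≤ pr w (annulusEvent d m n) := by
  have h2 : Tendsto (fun m : ℕ => bern w (⋂ k : ℕ, annulusEvent d m (m + k))) atTop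
      (𝓝 (bern w (infEvent d))) := tendsto_measure_iUnion_atTop monotone_iInter_annulusEvent
  rw [infEvent_prob_one w h] at h2
  have h3 : Tendsto (fun m : ℕ => pr w (⋂ k : ℕ, annulusEvent d m (m + k))) atTop (𝓝 1) := by
    have := (ENNReal.tendsto_toReal ENNReal.one_ne_top).comp h2
    simpa [pr, Measure.real, Function.comp_def] using this
  obtain ⟨m, hm⟩ := (h3.eventually (lt_mem_nhds (show 1 - η < 1 by linarith))).exists
  refine ⟨m, fun n hn => hm.le.trans (pr_mono ?_)⟩
  intro ξ hξ
  have := Set.mem_iInter.1 hξ (n - m)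
  rwa [show m + (n - m) = n by omega] at this

end percolation

section boundary
variable {d : ℕ}

/-- The points of the inner boundary of `ball 0 n` joined to `ball 0 m` inside `ball 0 n`. -/
def hitSet (m n : ℕ) (ξ : (Fin d → ℤ) → Bool) : Set (Fin d → ℤ) :=
  {x | x ∈ ball 0 (n : ℤ) ∧ (∃ k, |x k| = n) ∧
    ∃ b ∈ ball (0 : Fin d → ℤ) m, Conn Adj (opn ξ ∩ ball 0 n) b x}

lemma exists_abs_eq {u w : Fin d → ℤ} {n : ℕ} (hu : u ∈ ball (0 : Fin d → ℤ) n)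
    (hw : w ∉ ball (0 : Fin d → ℤ) n) (h : Adj u w) : ∃ k, |u k| = n := by
  rw [mem_ball] at hu hw
  push Not at hw
  obtain ⟨k, hk⟩ := hw
  refine ⟨k, ?_⟩
  have h1 := hu k
  have h2 := h.abs_sub_le k
  simp only [Pi.zero_apply, sub_zero] at *
  have h3 := abs_sub_abs_le_abs_sub (w k) (u k)
  linarith [show |u k| + 1 ≥ n + 1 by omega]

lemma hitSet_subset (m n : ℕ) (ξ : (Fin d → ℤ) → Bool) : hitSet m n ξ ⊆ ball 0 n := fun _ h => h.1

lemma hitSet_finite (m n : ℕ) (ξ : (Fin d → ℤ) → Bool) : (hitSet m n ξ).Finite :=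
  (finite_ball _ _).subset (hitSet_subset m n ξ)

lemma hitSet_congr (m n : ℕ) {ξ ξ' : (Fin d → ℤ) → Bool}
    (h : ∀ i ∈ ball (0 : Fin d → ℤ) n, ξ i = ξ' i) : hitSet m n ξ = hitSet m n ξ' := by
  simp only [hitSet, dep_conn_event ξ ξ' _ h]

lemma dep_hitSet (m n : ℕ) (P : Set (Fin d → ℤ) → Prop) :
    Dep {ξ | P (hitSet m n ξ)} (ball (0 : Fin d → ℤ) n) := fun ξ ξ' h => by
  simp only [Set.mem_ofPred_eq, hitSet_congr m n h]

lemma hitSet_mono (m n : ℕ) {ξ ξ' : (Fin d → ℤ) → Bool} (h : ∀ i, ξ i = true → ξ' i = true) :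
    hitSet m n ξ ⊆ hitSet m n ξ' := by
  rintro x ⟨h1, h2, b, hb, hc⟩
  exact ⟨h1, h2, b, hb, hc.mono fun y hy => ⟨h y hy.1, hy.2⟩⟩

lemma hitSet_nonempty_of_annulusEvent {m n : ℕ} {ξ : (Fin d → ℤ) → Bool}
    (h : ξ ∈ annulusEvent d m n) : (hitSet m n ξ).Nonempty := by
  obtain ⟨a, ha, u, hu, ⟨w, hw, huw⟩, hc⟩ := h
  exact ⟨u, hu, exists_abs_eq hu hw huw, a, ha, hc.mono fun x hx => ⟨hx.1.1, hx.2⟩⟩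

lemma exists_exit_of_hitSet_succ {m n : ℕ} (hmn : m ≤ n) {ξ : (Fin d → ℤ) → Bool}
    (h : (hitSet m (n + 1) ξ).Nonempty) :
    ∃ u ∈ hitSet m n ξ, ∃ w ∉ ball (0 : Fin d → ℤ) n, Adj u w ∧ ξ w = true := by
  obtain ⟨x, hx, ⟨k, hk⟩, b, hb, hc⟩ := h
  have hxn : x ∉ ball (0 : Fin d → ℤ) n := fun hh => by
    have := mem_ball.1 hh k
    simp only [Pi.zero_apply, sub_zero, hk] at this
    push_cast at this; omega
  have hb' : b ∈ ball (0 : Fin d → ℤ) n := ball_mono 0 (by exact_mod_cast hmn) hb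
  obtain ⟨u, hu, w, hw, h2, h3, h4⟩ := hc.first_exit hb' hxn
  exact ⟨u, ⟨hu, exists_abs_eq hu hw h3, b, hb, h2.mono fun y hy => ⟨hy.1.1, hy.2⟩⟩, w, hw, h3, h4.1⟩

/-- The neighbours of a lattice point. -/
noncomputable def nbrs (x : Fin d → ℤ) : Finset (Fin d → ℤ) :=
  Finset.univ.image fun i : Fin d × Bool => x + Pi.single i.1 (if i.2 then 1 else -1)

lemma mem_nbrs {x y : Fin d → ℤ} (h : Adj x y) : y ∈ nbrs x := by
  obtain ⟨i, ε, hε, rfl⟩ := h.exists_single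
  rcases hε with rfl | rfl
  · exact Finset.mem_image.2 ⟨(i, true), by simp, by simp⟩
  · exact Finset.mem_image.2 ⟨(i, false), by simp, by simp⟩

lemma card_nbrs_le (x : Fin d → ℤ) : (nbrs x).card ≤ d * 2 :=
  Finset.card_image_le.trans (by simp)

open Filter Topology in
/-- The number of boundary hits is unlikely to be positive and bounded. -/
lemma tendsto_few_hits (p : unitInterval) (hp : (p : ℝ) < 1) (m K : ℕ) :
    Tendsto (fun n : ℕ => pr (fun _ => p)
      {ξ : (Fin d → ℤ) → Bool | (hitSet m n ξ).Nonempty ∧ (hitSet m n ξ).ncard ≤ K})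
      atTop (𝓝 0) := by
  classical
  set a : ℕ → ℝ := fun n => pr (fun _ => p) {ξ : (Fin d → ℤ) → Bool | (hitSet m n ξ).Nonempty}
    with ha
  have hfin : ∀ n : ℕ, (ball (0 : Fin d → ℤ) n).Finite := fun n => finite_ball _ _
  have hsub : ∀ n, m ≤ n → {ξ : (Fin d → ℤ) → Bool | (hitSet m (n + 1) ξ).Nonempty} ⊆
      {ξ | (hitSet m n ξ).Nonempty} := by
    intro n hn ξ hξ
    obtain ⟨u, hu, -⟩ := exists_exit_of_hitSet_succ hn hξ
    exact ⟨u, hu⟩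
  have hanti : Antitone fun n => a (m + n) :=
    antitone_nat_of_succ_le fun n => pr_mono (hsub (m + n) (by omega))
  have hconv : ∃ l, Tendsto (fun n => a (m + n)) atTop (𝓝 l) :=
    ⟨_, tendsto_atTop_ciInf hanti ⟨0, by rintro _ ⟨n, rfl⟩; exact pr_nonneg⟩⟩
  obtain ⟨l, hl⟩ := hconv
  have hl' : Tendsto a atTop (𝓝 l) := by
    have := (tendsto_add_atTop_iff_nat (f := a) m).1 (by simpa [add_comm] using hl)
    exact this
  have hdiff : Tendsto (fun n => (a n - a (n + 1)) / (1 - p : ℝ) ^ (K * (d * 2))) atTop (𝓝 0) := by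
    have h := (hl'.sub ((tendsto_add_atTop_iff_nat 1).2 hl')).div_const ((1 - p : ℝ) ^ (K * (d * 2)))
    simpa using h
  refine squeeze_zero' (Eventually.of_forall fun n => pr_nonneg) ?_ hdiff
  filter_upwards [eventually_ge_atTop m] with n hn
  have hq : (0 : ℝ) < 1 - p := by linarith
  rw [le_div_iff₀ (pow_pos hq _)]
  let I : Finset (Finset (Fin d → ℤ)) :=
    (hfin n).toFinset.powerset.filter fun W => W.Nonempty ∧ W.card ≤ K
  let F : Finset (Fin d → ℤ) → Finset (Fin d → ℤ) := fun W =>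
    (W.biUnion nbrs).filter fun y => y ∉ ball (0 : Fin d → ℤ) n
  let B : Finset (Fin d → ℤ) → Set ((Fin d → ℤ) → Bool) := fun W => {ξ | hitSet m n ξ = W}
  let C : Finset (Fin d → ℤ) → Set ((Fin d → ℤ) → Bool) := fun W => {ξ | ∀ x ∈ F W, ξ x = false}
  have hdisj : ∀ i ∈ I, ∀ j ∈ I, i ≠ j → Disjoint (B i) (B j) := by
    intro i _ j _ hij
    rw [Set.disjoint_left]
    intro ξ h1 h2
    exact hij (Finset.coe_injective (h1.symm.trans h2))
  have hB : ∀ i ∈ I, Dep (B i) (ball (0 : Fin d → ℤ) n) := fun i _ =>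
    dep_hitSet m n (fun X => X = (i : Set (Fin d → ℤ)))
  have hP : pr (fun _ => p) {ξ : (Fin d → ℤ) → Bool |
      (hitSet m n ξ).Nonempty ∧ (hitSet m n ξ).ncard ≤ K} ≤ ∑ W ∈ I, pr (fun _ => p) (B W) := by
    refine le_trans (pr_mono ?_) (pr_biUnion_le I B)
    rintro ξ ⟨h1, h2⟩
    refine Set.mem_iUnion₂.2 ⟨(hitSet_finite m n ξ).toFinset, ?_, ?_⟩
    · simp only [I, Finset.mem_filter, Finset.mem_powerset, Set.Finite.toFinset_subset_toFinset,
        Set.Finite.toFinset_nonempty]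
      exact ⟨hitSet_subset m n ξ, h1, by rwa [← Set.ncard_eq_toFinset_card _ (hitSet_finite m n ξ)]⟩
    · simp [B]
  have hC : ∀ i ∈ I, (1 - p : ℝ) ^ (K * (d * 2)) ≤ pr (fun _ => p) (C i) := by
    intro i hi
    have h1 := pr_cyl (fun _ : Fin d → ℤ => p) (F i) (fun _ => false)
    simp only [Bool.false_eq_true, if_false, Finset.prod_const] at h1
    change _ ≤ pr _ {ξ | ∀ x ∈ F i, ξ x = false}
    rw [h1]
    refine pow_le_pow_of_le_one hq.le (by linarith [p.2.1]) ?_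
    refine (Finset.card_filter_le _ _).trans (Finset.card_biUnion_le.trans ?_)
    refine (Finset.sum_le_card_nsmul _ _ _ fun x _ => card_nbrs_le x).trans ?_
    rw [smul_eq_mul]
    exact Nat.mul_le_mul_right _ (Finset.mem_filter.1 hi).2.2
  have key := le_pr_biUnion_inter (w := fun _ => p) I B C (fun _ => ball 0 n) (fun W => F W)
    (fun _ => (1 - p : ℝ) ^ (K * (d * 2))) hdisj (fun i _ => hfin n) (fun i _ => (F i).finite_toSet)
    hB (fun i _ => dep_cyl (F i) _) (fun i _ => by
      rw [Set.disjoint_left]; intro x hx hx'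
      exact (Finset.mem_filter.1 hx').2 hx) hC
  rw [← Finset.mul_sum] at key
  have hfinal : pr (fun _ => p) (⋃ k ∈ I, B k ∩ C k) ≤ a n - a (n + 1) := by
    have h1 := pr_diff_add_inter (w := fun _ => p) {ξ : (Fin d → ℤ) → Bool | (hitSet m n ξ).Nonempty}
      (dep_hitSet m (n + 1) fun X => X.Nonempty) (hfin (n + 1))
    rw [Set.inter_eq_self_of_subset_right (hsub n hn)] at h1
    have h2 : pr (fun _ => p) (⋃ k ∈ I, B k ∩ C k) ≤ pr (fun _ => p)
        ({ξ : (Fin d → ℤ) → Bool | (hitSet m n ξ).Nonempty} \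
          {ξ | (hitSet m (n + 1) ξ).Nonempty}) := by
      refine pr_mono ?_
      intro ξ hξ
      obtain ⟨W, hW, hBW, hCW⟩ := Set.mem_iUnion₂.1 hξ
      have hBW' : hitSet m n ξ = W := hBW
      refine ⟨?_, fun hne => ?_⟩
      · change (hitSet m n ξ).Nonempty
        rw [hBW']; exact (Finset.mem_filter.1 hW).2.1
      · obtain ⟨u, hu, w, hw, h3, h4⟩ := exists_exit_of_hitSet_succ hn hne
        rw [hBW'] at hu
        have := hCW w (Finset.mem_filter.2 ⟨Finset.mem_biUnion.2 ⟨u, hu, mem_nbrs h3⟩, hw⟩)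
        rw [h4] at this; exact absurd this (by simp)
    have h3 : a (n + 1) + pr (fun _ => p)
        ({ξ : (Fin d → ℤ) → Bool | (hitSet m n ξ).Nonempty} \
          {ξ | (hitSet m (n + 1) ξ).Nonempty}) = a n := h1
    linarith
  calc _ ≤ (∑ W ∈ I, pr (fun _ => p) (B W)) * (1 - p : ℝ) ^ (K * (d * 2)) :=
        mul_le_mul_of_nonneg_right hP (pow_pos hq _).le
    _ ≤ _ := by rw [mul_comm]; exact key.trans hfinal

open Filter Topology in
lemma exists_many_hits (p : unitInterval) (hp : (p : ℝ) < 1)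
    (hperc : bern (fun _ : Fin d → ℤ => p) (Perc d) ≠ 0) {η : ℝ} (hη : 0 < η) :
    ∃ m : ℕ, ∀ K : ℕ, ∃ n0 : ℕ, ∀ n ≥ n0,
      pr (fun _ => p) {ξ : (Fin d → ℤ) → Bool | (hitSet m n ξ).ncard ≤ K} ≤ η := by
  obtain ⟨m, hm⟩ := exists_annulus_prob _ hperc (half_pos hη)
  refine ⟨m, fun K => ?_⟩
  obtain ⟨n0, hn0⟩ := eventually_atTop.1
    ((tendsto_few_hits (d := d) p hp m K).eventually (gt_mem_nhds (half_pos hη)))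
  refine ⟨max m n0, fun n hn => ?_⟩
  have h1 := hm n ((le_max_left _ _).trans hn)
  have h2 := hn0 n ((le_max_right _ _).trans hn)
  have h3 : {ξ : (Fin d → ℤ) → Bool | (hitSet m n ξ).ncard ≤ K} ⊆ (annulusEvent d m n)ᶜ ∪
      {ξ | (hitSet m n ξ).Nonempty ∧ (hitSet m n ξ).ncard ≤ K} := by
    intro ξ hξ
    by_cases h : ξ ∈ annulusEvent d m n
    · exact Or.inr ⟨hitSet_nonempty_of_annulusEvent h, hξ⟩
    · exact Or.inl h
  have h4 := (pr_mono (w := fun _ => p) h3).trans pr_union_le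
  rw [pr_compl (dep_annulusEvent m n) ((finite_ball _ _).subset Set.sdiff_subset)] at h4
  linarith

end boundary

lemma harris_compl_prod {ι κ : Type*} {w : ι → unitInterval} {s : Set ι} (hs : s.Finite)
    (I : Finset κ) (A : κ → Set (ι → Bool)) (hA : ∀ k, Dep (A k) s) (iA : ∀ k, Incr (A k)) :
    ∏ k ∈ I, pr w (A k)ᶜ ≤ pr w (⋂ k ∈ I, (A k)ᶜ) := by
  classical
  have hdep : ∀ I : Finset κ, Dep (⋃ k ∈ I, A k) s ∧ Incr (⋃ k ∈ I, A k) := by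
    intro I
    constructor
    · intro ξ ξ' h
      simp only [Set.mem_iUnion]
      exact exists_congr fun k => exists_congr fun _ => hA k ξ ξ' h
    · intro ξ ξ' h
      simp only [Set.mem_iUnion]
      exact fun ⟨k, hk, hx⟩ => ⟨k, hk, iA k ξ ξ' h hx⟩
  induction I using Finset.induction_on with
  | empty => simp [pr_univ]
  | insert k I hk ih =>
    rw [Finset.prod_insert hk, Finset.set_biInter_insert]
    have e : (⋂ k ∈ I, (A k)ᶜ) = (⋃ k ∈ I, A k)ᶜ := by simp
    rw [e] at ih ⊢
    exact (mul_le_mul_of_nonneg_left ih pr_nonneg).trans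
      (harris_compl hs (hA k) (hdep I).1 (iA k) (hdep I).2)

lemma Conn.map {V W : Type*} {adj : V → V → Prop} {adj' : W → W → Prop} {P : Set V} {Q : Set W}
    (f : V → W) (hf : ∀ a b, adj a b → adj' (f a) (f b)) (hPQ : ∀ a ∈ P, f a ∈ Q) {x y : V}
    (h : Conn adj P x y) : Conn adj' Q (f x) (f y) := by
  induction h with
  | refl => exact Conn.refl
  | tail _ h2 ih => exact ih.tail (hf _ _ h2.1) (hPQ _ h2.2)

section symmetry
variable {d : ℕ}

/-- The integer sign attached to a Boolean. -/
def sgn (b : Bool) : ℤ := if b then 1 else -1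

lemma sgn_mul_self (b : Bool) : sgn b * sgn b = 1 := by cases b <;> simp [sgn]
lemma abs_sgn (b : Bool) : |sgn b| = 1 := by cases b <;> simp [sgn]
lemma sgn_eq (b : Bool) : sgn b = 1 ∨ sgn b = -1 := by cases b <;> simp [sgn]

/-- The signed permutation of coordinates exchanging `i` and `j` and multiplying by signs. -/
def signedSwap (i j : Fin d) (τ : Fin d → Bool) : (Fin d → ℤ) ≃ (Fin d → ℤ) where
  toFun x k := sgn (τ k) * x (Equiv.swap i j k)
  invFun x k := sgn (τ (Equiv.swap i j k)) * x (Equiv.swap i j k)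
  left_inv x := by funext k; simp [← mul_assoc, sgn_mul_self]
  right_inv x := by funext k; simp [← mul_assoc, sgn_mul_self]

lemma signedSwap_apply (i j : Fin d) (τ : Fin d → Bool) (x : Fin d → ℤ) (k : Fin d) :
    signedSwap i j τ x k = sgn (τ k) * x (Equiv.swap i j k) := rfl

lemma norm1_signedSwap (i j : Fin d) (τ : Fin d → Bool) (x y : Fin d → ℤ) :
    norm1 (signedSwap i j τ x - signedSwap i j τ y) = norm1 (x - y) := by
  unfold norm1
  rw [← Equiv.sum_comp (Equiv.swap i j) (fun k => ((x - y) k).natAbs)]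
  refine Finset.sum_congr rfl fun k _ => ?_
  simp only [Pi.sub_apply, signedSwap_apply, ← mul_sub, Int.natAbs_mul]
  rcases sgn_eq (τ k) with h | h <;> simp [h]

lemma adj_signedSwap (i j : Fin d) (τ : Fin d → Bool) (x y : Fin d → ℤ) :
    Adj (signedSwap i j τ x) (signedSwap i j τ y) ↔ Adj x y := by
  unfold Adj; rw [norm1_signedSwap]

lemma signedSwap_mem_ball (i j : Fin d) (τ : Fin d → Bool) (x : Fin d → ℤ) (r : ℤ) :
    signedSwap i j τ x ∈ ball 0 r ↔ x ∈ ball 0 r := by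
  simp only [mem_ball, signedSwap_apply, Pi.zero_apply, sub_zero, abs_mul, abs_sgn, one_mul]
  exact (Equiv.swap i j).forall_congr_left.trans (by simp)

lemma mem_hitSet_signedSwap (i j : Fin d) (τ : Fin d → Bool) (m n : ℕ) (ξ : (Fin d → ℤ) → Bool)
    (x : Fin d → ℤ) :
    x ∈ hitSet m n (fun y => ξ (signedSwap i j τ y)) ↔ signedSwap i j τ x ∈ hitSet m n ξ := by
  simp only [hitSet, Set.mem_ofPred_eq, signedSwap_mem_ball]
  refine and_congr Iff.rfl (and_congr ?_ ?_)
  · simp only [signedSwap_apply, abs_mul, abs_sgn, one_mul]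
    exact (Equiv.swap i j).exists_congr_left.trans (by simp)
  · constructor
    · rintro ⟨b, hb, hc⟩
      refine ⟨signedSwap i j τ b, (signedSwap_mem_ball ..).2 hb, hc.map _
        (fun a b h => (adj_signedSwap ..).2 h) ?_⟩
      rintro a ⟨h1, h2⟩
      exact ⟨h1, (signedSwap_mem_ball ..).2 h2⟩
    · rintro ⟨b, hb, hc⟩
      obtain ⟨b, rfl⟩ := (signedSwap i j τ).surjective b
      refine ⟨b, (signedSwap_mem_ball ..).1 hb, ?_⟩
      have := hc.map (adj' := Adj) (Q := opn (fun y => ξ (signedSwap i j τ y)) ∩ ball 0 n)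
        (signedSwap i j τ).symm
        (fun a b h => by rw [← adj_signedSwap i j τ]; simpa using h) (by
          rintro a ⟨h1, h2⟩
          obtain ⟨a, rfl⟩ := (signedSwap i j τ).surjective a
          rw [Equiv.symm_apply_apply]
          exact ⟨h1, (signedSwap_mem_ball ..).1 h2⟩)
      simpa using this

/-- A piece of the boundary of `ball 0 n`: the face in direction `i` cut by an orthant. -/
def facePiece (i : Fin d) (τ : Fin d → Bool) (n : ℕ) : Set (Fin d → ℤ) :=
  {x | sgn (τ i) * x i = n ∧ ∀ k, 0 ≤ sgn (τ k) * x k}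

lemma signedSwap_mem_facePiece (i j : Fin d) (τ : Fin d → Bool) (n : ℕ) (x : Fin d → ℤ) :
    signedSwap i j τ x ∈ facePiece j τ n ↔ x ∈ facePiece i (fun _ => true) n := by
  simp only [facePiece, Set.mem_ofPred_eq, signedSwap_apply, ← mul_assoc, sgn_mul_self, one_mul,
    Equiv.swap_apply_right]
  refine and_congr (by simp [sgn]) ?_
  have : ∀ k, sgn true * x k = x k := fun k => by simp [sgn]
  simp only [this]
  exact (Equiv.swap i j).forall_congr_left.trans (by simp)

lemma dep_facePiece_hits (m n K : ℕ) (i : Fin d) (τ : Fin d → Bool) :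
    Dep {ξ | K ≤ (hitSet m n ξ ∩ facePiece i τ n).ncard} (ball (0 : Fin d → ℤ) n) :=
  dep_hitSet m n (fun X => K ≤ (X ∩ facePiece i τ n).ncard)

lemma pr_facePiece_hits (p : unitInterval) (m n K : ℕ) (i j : Fin d) (τ : Fin d → Bool) :
    pr (fun _ => p) {ξ | K ≤ (hitSet m n ξ ∩ facePiece j τ n).ncard} =
      pr (fun _ => p) {ξ | K ≤ (hitSet m n ξ ∩ facePiece i (fun _ => true) n).ncard} := by
  have h := pr_comp (fun _ : Fin d → ℤ => p) (signedSwap i j τ) (signedSwap i j τ).injective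
    ((dep_facePiece_hits m n K i (fun _ => true)).measurableSet (finite_ball _ _))
  rw [← h]
  congr 1
  ext ξ
  simp only [Set.mem_ofPred_eq]
  have : signedSwap i j τ '' (hitSet m n (fun y => ξ (signedSwap i j τ y)) ∩
      facePiece i (fun _ => true) n) = hitSet m n ξ ∩ facePiece j τ n := by
    ext x
    obtain ⟨x, rfl⟩ := (signedSwap i j τ).surjective x
    rw [(signedSwap i j τ).injective.mem_set_image]
    exact and_congr (mem_hitSet_signedSwap ..) (signedSwap_mem_facePiece ..).symm
  rw [← this, Set.ncard_image_of_injective _ (signedSwap i j τ).injective]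

lemma exists_mem_facePiece {m n : ℕ} {ξ : (Fin d → ℤ) → Bool} {x : Fin d → ℤ}
    (hx : x ∈ hitSet m n ξ) : ∃ a : Fin d × (Fin d → Bool), x ∈ facePiece a.1 a.2 n := by
  obtain ⟨-, ⟨k, hk⟩, -⟩ := hx
  have h : ∀ k, sgn (decide (0 ≤ x k)) * x k = |x k| := by
    intro k
    by_cases h0 : 0 ≤ x k
    · simp [sgn, h0, abs_of_nonneg]
    · simp [sgn, h0, abs_of_neg (not_le.1 h0)]
  refine ⟨(k, fun k => decide (0 ≤ x k)), ?_, fun k => ?_⟩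
  · rw [h, hk]
  · rw [h]; exact abs_nonneg _

/-- Square root trick: every piece of the boundary is hit many times. -/
lemma exists_many_facePiece_hits (p : unitInterval) (hp : (p : ℝ) < 1)
    (hperc : bern (fun _ : Fin d → ℤ => p) (Perc d) ≠ 0) {η : ℝ} (hη : 0 < η) :
    ∃ m : ℕ, ∀ K : ℕ, ∃ n0 : ℕ, ∀ n ≥ n0, ∀ (i : Fin d) (τ : Fin d → Bool),
      pr (fun _ => p) {ξ : (Fin d → ℤ) → Bool |
        K ≤ (hitSet m n ξ ∩ facePiece i τ n).ncard}ᶜ ≤ η := by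
  classical
  let κ := Fin d × (Fin d → Bool)
  obtain ⟨m, hm⟩ := exists_many_hits p hp hperc (pow_pos hη (Fintype.card κ))
  refine ⟨m, fun K => ?_⟩
  obtain ⟨n0, hn0⟩ := hm (Fintype.card κ * K)
  refine ⟨n0, fun n hn i τ => ?_⟩
  let A : κ → Set ((Fin d → ℤ) → Bool) := fun a =>
    {ξ | K ≤ (hitSet m n ξ ∩ facePiece a.1 a.2 n).ncard}
  have hinc : ∀ a, Incr (A a) := by
    intro a ξ ξ' h hx
    exact le_trans hx (Set.ncard_le_ncard (Set.inter_subset_inter_left _ (hitSet_mono m n h))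
      ((hitSet_finite m n ξ').subset Set.inter_subset_left))
  have h1 := harris_compl_prod (w := fun _ => p) (finite_ball (0 : Fin d → ℤ) n) Finset.univ A
    (fun a => dep_facePiece_hits m n K a.1 a.2) hinc
  have h2 : ∀ a : κ, pr (fun _ => p) (A a)ᶜ = pr (fun _ => p) (A (i, τ))ᶜ := by
    intro a
    rw [pr_compl (dep_facePiece_hits m n K a.1 a.2) (finite_ball _ _),
      pr_compl (dep_facePiece_hits m n K i τ) (finite_ball _ _)]
    rw [pr_facePiece_hits p m n K i a.1 a.2, pr_facePiece_hits p m n K i i τ]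
  rw [Finset.prod_congr rfl fun a _ => h2 a, Finset.prod_const, Finset.card_univ] at h1
  have h3 : (⋂ k ∈ (Finset.univ : Finset κ), (A k)ᶜ) ⊆
      {ξ | (hitSet m n ξ).ncard ≤ Fintype.card κ * K} := by
    intro ξ hξ
    simp only [Finset.mem_univ, Set.iInter_true, Set.mem_iInter] at hξ
    have hX : hitSet m n ξ ⊆ ⋃ a ∈ (Finset.univ : Finset κ), (hitSet m n ξ ∩ facePiece a.1 a.2 n) := by
      intro x hx
      obtain ⟨a, ha⟩ := exists_mem_facePiece hx
      exact Set.mem_iUnion₂.2 ⟨a, Finset.mem_univ a, hx, ha⟩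
    have hfin : (⋃ a ∈ (Finset.univ : Finset κ), (hitSet m n ξ ∩ facePiece a.1 a.2 n)).Finite :=
      (hitSet_finite m n ξ).subset (Set.iUnion₂_subset fun _ _ => Set.inter_subset_left)
    refine (Set.ncard_le_ncard hX hfin).trans ((Finset.set_ncard_biUnion_le _ _).trans ?_)
    refine (Finset.sum_le_card_nsmul _ _ K fun a _ => ?_).trans (by simp)
    have : ¬ K ≤ (hitSet m n ξ ∩ facePiece a.1 a.2 n).ncard := hξ a
    exact (not_le.1 this).le
  have h4 := h1.trans ((pr_mono h3).trans (hn0 n hn))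
  have hcard : Fintype.card κ ≠ 0 := (Fintype.card_pos_iff.2 ⟨(i, τ)⟩).ne'
  exact (pow_le_pow_iff_left₀ pr_nonneg hη.le hcard).1 h4

end symmetry

section exploration
variable {d : ℕ}

/-- Weights of the layered configuration: `p` on the bottom layer and `δ` on the others. -/
def layerWt (d : ℕ) (p δ : unitInterval) : (Fin d → ℤ) × ℕ → unitInterval :=
  fun a => if a.2 = 0 then p else δ

/-- Sites of `Λ` which are open in one of the layers not yet used at that site. -/
def availSet (Λ : Set (Fin d → ℤ)) (r : ℕ) (β : (Fin d → ℤ) → ℕ)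
    (ω : (Fin d → ℤ) × ℕ → Bool) : Set (Fin d → ℤ) :=
  {z | z ∈ Λ ∧ ∃ l, β z ≤ l ∧ l < r ∧ ω (z, l) = true}

/-- The event that the target `Q` is reached from `R` using only unused layers. -/
def reachEvent (Λ Q : Set (Fin d → ℤ)) (r : ℕ) (R : Set (Fin d → ℤ)) (β : (Fin d → ℤ) → ℕ) :
    Set ((Fin d → ℤ) × ℕ → Bool) :=
  {ω | ∃ x ∈ R, ∃ y ∈ Q, Conn Adj (availSet Λ r β ω) x y}

/-- The set reached from `R` inside `D` by looking at the first unused layer. -/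
def explored (D R : Set (Fin d → ℤ)) (β : (Fin d → ℤ) → ℕ) (ω : (Fin d → ℤ) × ℕ → Bool) :
    Set (Fin d → ℤ) :=
  {y | ∃ x ∈ R, Conn Adj {z | z ∈ D ∧ z ∉ R ∧ ω (z, β z) = true} x y}

open Classical in
/-- The number of used layers after an exploration of `D` with outcome `R₀`. -/
noncomputable def bump (D R : Set (Fin d → ℤ)) (β : (Fin d → ℤ) → ℕ) (R₀ : Set (Fin d → ℤ)) :
    (Fin d → ℤ) → ℕ :=
  fun y => if y ∈ D ∧ y ∉ R ∧ ∃ x ∈ R₀, Adj x y then β y + 1 else β y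

lemma le_bump (D R : Set (Fin d → ℤ)) (β : (Fin d → ℤ) → ℕ) (R₀ : Set (Fin d → ℤ)) (y) :
    β y ≤ bump D R β R₀ y := by
  unfold bump; split_ifs <;> omega

lemma bump_le (D R : Set (Fin d → ℤ)) (β : (Fin d → ℤ) → ℕ) (R₀ : Set (Fin d → ℤ)) (y) :
    bump D R β R₀ y ≤ β y + 1 := by
  unfold bump; split_ifs <;> omega

lemma bump_of_notMem {D : Set (Fin d → ℤ)} (R : Set (Fin d → ℤ)) (β : (Fin d → ℤ) → ℕ)
    (R₀ : Set (Fin d → ℤ)) {y} (hy : y ∉ D) : bump D R β R₀ y = β y := by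
  unfold bump; rw [if_neg fun h => hy h.1]

lemma subset_explored (D R : Set (Fin d → ℤ)) (β : (Fin d → ℤ) → ℕ) (ω) :
    R ⊆ explored D R β ω := fun x hx => ⟨x, hx, Conn.refl⟩

lemma explored_subset (D R : Set (Fin d → ℤ)) (β : (Fin d → ℤ) → ℕ) (ω) :
    explored D R β ω ⊆ R ∪ D := by
  rintro y ⟨x, hx, h⟩
  rcases h.eq_or_mem with rfl | h
  · exact Or.inl hx
  · exact Or.inr h.1

lemma explored_step {D R : Set (Fin d → ℤ)} {β : (Fin d → ℤ) → ℕ} {ω} {a b : Fin d → ℤ}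
    (ha : a ∈ explored D R β ω) (hab : Adj a b) (hb : b ∈ D) (h : b ∈ R ∨ ω (b, β b) = true) :
    b ∈ explored D R β ω := by
  by_cases hR : b ∈ R
  · exact subset_explored _ _ _ _ hR
  · obtain ⟨x, hx, hc⟩ := ha
    exact ⟨x, hx, hc.tail hab ⟨hb, hR, h.resolve_left hR⟩⟩

lemma dep_reachEvent (Λ Q : Set (Fin d → ℤ)) (r : ℕ) (R : Set (Fin d → ℤ))
    (β : (Fin d → ℤ) → ℕ) :
    Dep (reachEvent Λ Q r R β) {a | a.1 ∈ Λ ∧ a.1 ∉ R ∧ β a.1 ≤ a.2 ∧ a.2 < r} := by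
  have key : ∀ ω ω' : (Fin d → ℤ) × ℕ → Bool,
      (∀ a ∈ {a : (Fin d → ℤ) × ℕ | a.1 ∈ Λ ∧ a.1 ∉ R ∧ β a.1 ≤ a.2 ∧ a.2 < r}, ω a = ω' a) →
      ω ∈ reachEvent Λ Q r R β → ω' ∈ reachEvent Λ Q r R β := by
    rintro ω ω' h ⟨x, hx, y, hy, hc⟩
    obtain ⟨z, hz, -, hc'⟩ := hc.last_exit hx
    refine ⟨z, hz, y, hy, hc'.mono ?_⟩
    rintro a ⟨⟨ha, l, h1, h2, h3⟩, haR⟩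
    exact ⟨ha, l, h1, h2, by rw [← h (a, l) ⟨ha, haR, h1, h2⟩]; exact h3⟩
  exact fun ω ω' h => ⟨key ω ω' h, key ω' ω fun a ha => (h a ha).symm⟩

lemma finite_reach_support {Λ : Set (Fin d → ℤ)} (hΛ : Λ.Finite) (r : ℕ) (R : Set (Fin d → ℤ))
    (β : (Fin d → ℤ) → ℕ) :
    {a : (Fin d → ℤ) × ℕ | a.1 ∈ Λ ∧ a.1 ∉ R ∧ β a.1 ≤ a.2 ∧ a.2 < r}.Finite :=
  (hΛ.prod (Set.finite_Iio r)).subset fun _ h => ⟨h.1, h.2.2.2⟩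

lemma dep_explored (D R : Set (Fin d → ℤ)) (β : (Fin d → ℤ) → ℕ) (R₀ : Set (Fin d → ℤ)) :
    Dep {ω | explored D R β ω = R₀}
      {a | a.1 ∈ D ∧ a.1 ∉ R ∧ (∃ x ∈ R₀, Adj x a.1) ∧ a.2 = β a.1} := by
  have key : ∀ ω ω' : (Fin d → ℤ) × ℕ → Bool,
      (∀ a ∈ {a : (Fin d → ℤ) × ℕ | a.1 ∈ D ∧ a.1 ∉ R ∧ (∃ x ∈ R₀, Adj x a.1) ∧ a.2 = β a.1},
        ω a = ω' a) → explored D R β ω = R₀ → explored D R β ω' = R₀ := by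
    intro ω ω' h h0
    refine Set.Subset.antisymm ?_ ?_
    · rintro y ⟨x, hx, hc⟩
      induction hc with
      | refl => rw [← h0]; exact subset_explored _ _ _ _ hx
      | @tail a b _ hab ih =>
        obtain ⟨h1, h2, h3, h4⟩ := hab
        rw [← h0] at ih ⊢
        refine explored_step ih h1 h2 (Or.inr ?_)
        rw [h (b, β b) ⟨h2, h3, ⟨a, h0 ▸ ih, h1⟩, rfl⟩]; exact h4
    · rw [← h0]
      rintro y ⟨x, hx, hc⟩
      suffices H : y ∈ explored D R β ω ∧ y ∈ explored D R β ω' from H.2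
      induction hc with
      | refl => exact ⟨subset_explored _ _ _ _ hx, subset_explored _ _ _ _ hx⟩
      | @tail a b _ hab ih =>
        obtain ⟨h1, h2, h3, h4⟩ := hab
        refine ⟨explored_step ih.1 h1 h2 (Or.inr h4), explored_step ih.2 h1 h2 (Or.inr ?_)⟩
        rw [← h (b, β b) ⟨h2, h3, ⟨a, h0 ▸ ih.1, h1⟩, rfl⟩]; exact h4
  exact fun ω ω' h => ⟨key ω ω' h, key ω' ω fun a ha => (h a ha).symm⟩

lemma finite_explored_support {D : Set (Fin d → ℤ)} (hD : D.Finite) (R : Set (Fin d → ℤ))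
    (β : (Fin d → ℤ) → ℕ) (R₀ : Set (Fin d → ℤ)) :
    {a : (Fin d → ℤ) × ℕ | a.1 ∈ D ∧ a.1 ∉ R ∧ (∃ x ∈ R₀, Adj x a.1) ∧ a.2 = β a.1}.Finite :=
  (hD.image fun y => (y, β y)).subset fun a h => ⟨a.1, h.1, Prod.ext rfl h.2.2.2.symm⟩

/-- One exploration step: if it succeeds with probability at least `1 - ε`, the probability of
reaching the target is bounded below by a convex combination. -/
lemma le_pr_reachEvent (w : (Fin d → ℤ) × ℕ → unitInterval) {Λ Q D R : Set (Fin d → ℤ)} {r : ℕ}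
    {β : (Fin d → ℤ) → ℕ} (hΛ : Λ.Finite) (hD : D ⊆ Λ) (hβ : ∀ y ∈ D, β y < r)
    (G : Set (Fin d → ℤ) → Prop) {q₀ q₁ ε : ℝ} (hq : q₀ ≤ q₁)
    (h₀ : ∀ R₀, R ⊆ R₀ → R₀ ⊆ R ∪ D → (∃ ω, explored D R β ω = R₀) →
      q₀ ≤ pr w (reachEvent Λ Q r R₀ (bump D R β R₀)))
    (h₁ : ∀ R₀, R ⊆ R₀ → R₀ ⊆ R ∪ D → (∃ ω, explored D R β ω = R₀) → G R₀ →
      q₁ ≤ pr w (reachEvent Λ Q r R₀ (bump D R β R₀)))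
    (hG : pr w {ω | ¬ G (explored D R β ω)} ≤ ε) :
    (1 - ε) * q₁ + ε * q₀ ≤ pr w (reachEvent Λ Q r R β) := by
  classical
  have hDf : D.Finite := hΛ.subset hD
  let I : Finset (Set (Fin d → ℤ)) := (hDf.toFinset.powerset.image fun E : Finset (Fin d → ℤ) => R ∪ (E : Set (Fin d → ℤ))).filter
    fun R₀ => ∃ ω, explored D R β ω = R₀
  let B : Set (Fin d → ℤ) → Set ((Fin d → ℤ) × ℕ → Bool) := fun R₀ => {ω | explored D R β ω = R₀}
  let C : Set (Fin d → ℤ) → Set ((Fin d → ℤ) × ℕ → Bool) := fun R₀ =>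
    reachEvent Λ Q r R₀ (bump D R β R₀)
  let q : Set (Fin d → ℤ) → ℝ := fun R₀ => if G R₀ then q₁ else q₀
  have hI : ∀ ω, explored D R β ω ∈ I := by
    intro ω
    refine Finset.mem_filter.2 ⟨Finset.mem_image.2
      ⟨hDf.toFinset.filter fun y => y ∈ explored D R β ω, by simp, ?_⟩, ω, rfl⟩
    ext y
    simp only [Finset.coe_filter, Set.Finite.mem_toFinset, Set.mem_union, Set.mem_ofPred_eq]
    constructor
    · rintro (h | h)
      · exact subset_explored _ _ _ _ h
      · exact h.2
    · intro h
      rcases explored_subset _ _ _ _ h with h' | h'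
      · exact Or.inl h'
      · exact Or.inr ⟨h', h⟩
  have hI' : ∀ R₀ ∈ I, R ⊆ R₀ ∧ R₀ ⊆ R ∪ D ∧ ∃ ω, explored D R β ω = R₀ := by
    intro R₀ h
    obtain ⟨-, ω, rfl⟩ := Finset.mem_filter.1 h
    exact ⟨subset_explored _ _ _ _, explored_subset _ _ _ _, ω, rfl⟩
  have hdisj : ∀ i ∈ I, ∀ j ∈ I, i ≠ j → Disjoint (B i) (B j) := by
    intro i _ j _ hij
    rw [Set.disjoint_left]
    intro ω h1 h2
    exact hij (h1.symm.trans h2)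
  have hBd : ∀ i ∈ I, Dep (B i) _ := fun i _ => dep_explored D R β i
  have hBf := fun i (_ : i ∈ I) => finite_explored_support hDf R β i
  have key := le_pr_biUnion_inter (w := w) I B C _ _ q hdisj hBf
    (fun i _ => finite_reach_support hΛ r i (bump D R β i)) hBd (fun i _ => dep_reachEvent _ _ _ _ _)
    (fun i _ => by
      rw [Set.disjoint_left]
      rintro ⟨y, l⟩ ⟨h1, h2, h3, h4⟩ ⟨_, _, h7, _⟩
      simp only at h1 h2 h3 h4 h7
      rw [bump, if_pos ⟨h1, h2, h3⟩] at h7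
      omega)
    (fun i hi => by
      obtain ⟨a, b, c⟩ := hI' i hi
      by_cases hGi : G i
      · simp only [q, if_pos hGi]; exact h₁ i a b c hGi
      · simp only [q, if_neg hGi]; exact h₀ i a b c)
  have hsub : (⋃ k ∈ I, B k ∩ C k) ⊆ reachEvent Λ Q r R β := by
    intro ω hω
    obtain ⟨R₀, -, hB, x, hx, y, hy, hc⟩ := Set.mem_iUnion₂.1 hω
    have hB' : explored D R β ω = R₀ := hB
    rw [← hB'] at hx
    obtain ⟨x', hx', hc'⟩ := hx
    refine ⟨x', hx', y, hy, (hc'.mono ?_).trans (hc.mono ?_)⟩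
    · rintro z ⟨h1, -, h3⟩
      exact ⟨hD h1, β z, le_rfl, hβ z h1, h3⟩
    · rintro z ⟨h1, l, h2, h3⟩
      exact ⟨h1, l, (le_bump _ _ _ _ _).trans h2, h3⟩
  have hsum : ∑ k ∈ I, pr w (B k) = 1 := by
    rw [← pr_biUnion I B hdisj _ hBf hBd, ← pr_univ (w := w)]
    congr 1
    exact Set.eq_univ_of_forall fun ω => Set.mem_iUnion₂.2 ⟨_, hI ω, rfl⟩
  have hbad : ∑ k ∈ I with ¬ G k, pr w (B k) ≤ ε := by
    rw [← pr_biUnion _ B (fun i hi j hj => hdisj i (Finset.mem_filter.1 hi).1 j (Finset.mem_filter.1 hj).1)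
      _ (fun i hi => hBf i (Finset.mem_filter.1 hi).1) (fun i hi => hBd i (Finset.mem_filter.1 hi).1)]
    refine (pr_mono ?_).trans hG
    intro ω hω
    obtain ⟨R₀, hR₀, hB⟩ := Set.mem_iUnion₂.1 hω
    have hB' : explored D R β ω = R₀ := hB
    change ¬ G (explored D R β ω)
    rw [hB']; exact (Finset.mem_filter.1 hR₀).2
  have hq' : ∀ k ∈ I, q k * pr w (B k) = q₁ * pr w (B k) - (q₁ - q₀) * (if ¬ G k then pr w (B k) else 0) := by
    intro k _
    by_cases hGk : G k <;> simp [q, hGk]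
    ring
  rw [Finset.sum_congr rfl hq', Finset.sum_sub_distrib, ← Finset.mul_sum, ← Finset.mul_sum, hsum,
    ← Finset.sum_filter] at key
  have := mul_le_mul_of_nonneg_left hbad (sub_nonneg.2 hq)
  have := key.trans (pr_mono hsub)
  linarith

end exploration

section microstep
variable {d : ℕ}

lemma pr_biInter {ι κ : Type*} {w : ι → unitInterval} (I : Finset κ) (A : κ → Set (ι → Bool))
    (s : κ → Set ι) (hs : ∀ i ∈ I, (s i).Finite) (hA : ∀ i ∈ I, Dep (A i) (s i))
    (hd : ∀ i ∈ I, ∀ j ∈ I, i ≠ j → Disjoint (s i) (s j)) :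
    pr w (⋂ k ∈ I, A k) = ∏ k ∈ I, pr w (A k) := by
  classical
  induction I using Finset.induction_on with
  | empty => simp [pr_univ]
  | @insert a I ha ih =>
    have ih' := ih (fun i hi => hs i (Finset.mem_insert_of_mem hi))
      (fun i hi => hA i (Finset.mem_insert_of_mem hi))
      (fun i hi j hj => hd i (Finset.mem_insert_of_mem hi) j (Finset.mem_insert_of_mem hj))
    rw [Finset.prod_insert ha, Finset.set_biInter_insert, ← ih']
    refine pr_inter (hA a (Finset.mem_insert_self _ _)) (t := ⋃ k ∈ I, s k) ?_
      (hs a (Finset.mem_insert_self _ _)) ?_ ?_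
    · intro ξ ξ' h
      simp only [Set.mem_iInter]
      refine forall₂_congr fun k hk => hA k (Finset.mem_insert_of_mem hk) _ _ fun i hi => h i ?_
      exact Set.mem_iUnion₂.2 ⟨k, hk, hi⟩
    · exact I.finite_toSet.biUnion fun i hi => hs i (Finset.mem_insert_of_mem hi)
    · rw [Set.disjoint_iUnion₂_right]
      exact fun k hk => hd a (Finset.mem_insert_self _ _) k (Finset.mem_insert_of_mem hk)
        (by rintro rfl; exact ha hk)

lemma ball_eq_image (c : Fin d → ℤ) (r : ℤ) : ball c r = (fun x => x + c) '' ball 0 r := by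
  ext x
  simp only [Set.mem_image, mem_ball]
  constructor
  · intro h; exact ⟨x - c, by simpa using h, by simp⟩
  · rintro ⟨y, h, rfl⟩; simpa using h

lemma ncard_ball (c : Fin d → ℤ) (r : ℤ) : (ball c r).ncard = (ball (0 : Fin d → ℤ) r).ncard := by
  rw [ball_eq_image, Set.ncard_image_of_injective _ (add_left_injective c)]

/-- The event that all sites of `S` outside `R` are open in their first unused layer. -/
def seedEvent (S R : Set (Fin d → ℤ)) (β : (Fin d → ℤ) → ℕ) : Set ((Fin d → ℤ) × ℕ → Bool) :=
  {ω | ∀ y ∈ S, y ∈ R ∨ ω (y, β y) = true}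

lemma dep_seedEvent (S R : Set (Fin d → ℤ)) (β : (Fin d → ℤ) → ℕ) :
    Dep (seedEvent S R β) ((fun y => (y, β y)) '' S) := by
  intro ω ω' h
  refine forall₂_congr fun y hy => ?_
  rw [h _ ⟨y, hy, rfl⟩]

lemma le_pr_seedEvent (w : (Fin d → ℤ) × ℕ → unitInterval) {ρ : ℝ} (hρ : 0 ≤ ρ)
    (hw : ∀ a, ρ ≤ w a) {S : Set (Fin d → ℤ)} (hS : S.Finite)
    (R : Set (Fin d → ℤ)) (β : (Fin d → ℤ) → ℕ) :
    ρ ^ S.ncard ≤ pr w (seedEvent S R β) := by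
  classical
  have h1 : {ω : (Fin d → ℤ) × ℕ → Bool | ∀ a ∈ hS.toFinset.image (fun y => (y, β y)),
      ω a = true} ⊆ seedEvent S R β := by
    intro ω hω y hy
    exact Or.inr (hω _ (Finset.mem_image.2 ⟨y, by simpa using hy, rfl⟩))
  refine le_trans ?_ (pr_mono h1)
  rw [pr_cyl w _ (fun _ => true), Finset.prod_image (fun a _ b _ h => (Prod.ext_iff.1 h).1),
    Set.ncard_eq_toFinset_card S hS, ← Finset.prod_const]
  exact Finset.prod_le_prod (fun _ _ => hρ) fun y _ => by simpa using hw (y, β y)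

/-- Centre of the seed attached to the boundary point `x`. -/
def ctr (c : Fin d → ℤ) (i : Fin d) (τ : Fin d → Bool) (m : ℕ) (x : Fin d → ℤ) : Fin d → ℤ :=
  c + x + Pi.single i (sgn (τ i) * (m + 1))

lemma ctr_same (c : Fin d → ℤ) (i : Fin d) (τ : Fin d → Bool) (m : ℕ) (x : Fin d → ℤ) :
    ctr c i τ m x i = c i + x i + sgn (τ i) * (m + 1) := by simp [ctr]

lemma ctr_ne (c : Fin d → ℤ) {i k : Fin d} (h : k ≠ i) (τ : Fin d → Bool) (m : ℕ)
    (x : Fin d → ℤ) : ctr c i τ m x k = c k + x k := by simp [ctr, h]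

variable {c : Fin d → ℤ} {i : Fin d} {τ : Fin d → Bool} {m n : ℕ} {x y : Fin d → ℤ}

lemma facePiece_same (hx : x ∈ facePiece i τ n) : x i = sgn (τ i) * n := by
  rcases sgn_eq (τ i) with h | h <;> have := hx.1 <;> rw [h] at this ⊢ <;> omega

lemma ctr_ball_subset (hx : x ∈ facePiece i τ n) (hx' : x ∈ ball (0 : Fin d → ℤ) n) :
    ball (ctr c i τ m x) m ⊆ ball c (n + 2 * m + 1) := by
  intro y hy
  rw [mem_ball] at *
  intro k
  have h1 := hy k
  have h2 := hx' k
  by_cases hk : k = i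
  · subst hk
    rw [ctr_same, facePiece_same hx] at h1
    rcases sgn_eq (τ k) with h | h <;> rw [h] at h1 <;> rw [abs_le] at * <;> omega
  · rw [ctr_ne _ hk] at h1
    simp only [Pi.zero_apply] at h2
    rw [abs_le] at *; omega

lemma notMem_ball_of_ctr (hx : x ∈ facePiece i τ n)
    (hy : y ∈ ball (ctr c i τ m x) m) : y ∉ ball c n := by
  intro h
  rw [mem_ball] at *
  have h1 := hy i
  have h2 := h i
  rw [ctr_same, facePiece_same hx] at h1
  rcases sgn_eq (τ i) with h | h <;> rw [h] at h1 <;> rw [abs_le] at * <;> omega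

/-- Many boundary points make it likely that one of the attached seeds is good. -/
lemma pr_no_seed_le (w : (Fin d → ℤ) × ℕ → unitInterval) {ρ : ℝ} (hρ : 0 ≤ ρ)
    (hw : ∀ a, ρ ≤ w a) (R : Set (Fin d → ℤ)) (β : (Fin d → ℤ) → ℕ)
    {K' : ℕ} {X : Set (Fin d → ℤ)} (hX : X.Finite) (hK : K' * (2 * m + 1) ^ d ≤ X.ncard) :
    pr w {ω | ∀ x ∈ X, ω ∉ seedEvent (ball (ctr c i τ m x) m) R β} ≤
      (1 - ρ ^ (ball (0 : Fin d → ℤ) m).ncard) ^ K' := by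
  classical
  let g : (Fin d → ℤ) → (Fin d → ZMod (2 * m + 1)) := fun x k => (x k : ZMod (2 * m + 1))
  obtain ⟨v, -, hv⟩ := Finset.exists_le_card_fiber_of_mul_le_card_of_maps_to
    (s := hX.toFinset) (t := Finset.univ) (f := g) (n := K') (fun _ _ => Finset.mem_univ _)
    ⟨0, Finset.mem_univ _⟩ (by
      rw [← Set.ncard_eq_toFinset_card X hX]
      refine le_trans (le_of_eq ?_) hK
      simp [ZMod.card, mul_comm])
  obtain ⟨T, hT, hTc⟩ := Finset.exists_subset_card_eq hv
  have hTX : ∀ x ∈ T, x ∈ X := fun x hx => by simpa using (Finset.mem_filter.1 (hT hx)).1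
  have hg : ∀ x ∈ T, g x = v := fun x hx => (Finset.mem_filter.1 (hT hx)).2
  have hsub : {ω | ∀ x ∈ X, ω ∉ seedEvent (ball (ctr c i τ m x) m) R β} ⊆
      ⋂ x ∈ T, (seedEvent (ball (ctr c i τ m x) m) R β)ᶜ := by
    intro ω hω
    exact Set.mem_iInter₂.2 fun x hx => hω x (hTX x hx)
  refine (pr_mono hsub).trans ?_
  rw [pr_biInter T _ (fun x => (fun y => (y, β y)) '' ball (ctr c i τ m x) m)
    (fun x _ => (finite_ball _ _).image _) (fun x _ => (dep_seedEvent _ R β).compl), ← hTc,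
    ← Finset.prod_const]
  · refine Finset.prod_le_prod (fun _ _ => pr_nonneg) fun x _ => ?_
    rw [pr_compl (dep_seedEvent _ R β) ((finite_ball _ _).image _)]
    have := le_pr_seedEvent w hρ hw (finite_ball (ctr c i τ m x) m) R β
    rw [ncard_ball] at this
    linarith
  · intro x hx x' hx' hne
    rw [Set.disjoint_left]
    rintro _ ⟨y, hy, rfl⟩ ⟨y', hy', h⟩
    obtain rfl : y' = y := (Prod.ext_iff.1 h).1
    apply hne
    funext k
    have h1 : ((x k : ZMod (2 * m + 1))) = (x' k : ZMod (2 * m + 1)) :=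
      congrFun ((hg x hx).trans (hg x' hx').symm) k
    rw [ZMod.intCast_eq_intCast_iff_dvd_sub] at h1
    obtain ⟨q, hq⟩ := h1
    have h2 := mem_ball.1 hy k
    have h3 := mem_ball.1 hy' k
    have h4 : ctr c i τ m x' k - ctr c i τ m x k = x' k - x k := by simp [ctr]
    rw [abs_le] at h2 h3
    have h5 : |x' k - x k| < (2 * m + 1 : ℤ) := by rw [abs_lt]; omega
    have := Int.eq_zero_of_abs_lt_dvd (m := (2 * m + 1 : ℤ)) (x := x' k - x k)
      ⟨q, by push_cast at hq; exact hq⟩ h5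
    omega

end microstep

section microstep
variable {d : ℕ}

/-- Bottom-layer configuration seen from `c`. -/
def bottom (c : Fin d → ℤ) (ω : (Fin d → ℤ) × ℕ → Bool) : (Fin d → ℤ) → Bool :=
  fun y => ω (y + c, 0)

lemma pr_bottom (p δ : unitInterval) (c : Fin d → ℤ) {A : Set ((Fin d → ℤ) → Bool)}
    (hA : MeasurableSet A) :
    pr (layerWt d p δ) {ω | bottom c ω ∈ A} = pr (fun _ => p) A := by
  change pr _ {ω : (Fin d → ℤ) × ℕ → Bool | (fun y => ω (y + c, 0)) ∈ A} = _
  have := pr_comp (layerWt d p δ) (fun y : Fin d → ℤ => (y + c, 0))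
    (fun a b h => add_left_injective c (Prod.ext_iff.1 h).1) hA
  simpa [layerWt] using this

/-- Boundary points of the ball around `c`, on the prescribed piece of a face, reached from the
inner ball. -/
def faceHits (c : Fin d → ℤ) (i : Fin d) (τ : Fin d → Bool) (m n : ℕ)
    (ω : (Fin d → ℤ) × ℕ → Bool) : Set (Fin d → ℤ) :=
  hitSet m n (bottom c ω) ∩ facePiece i τ n

lemma dep_faceHits (c : Fin d → ℤ) (i : Fin d) (τ : Fin d → Bool) (m n : ℕ)
    (P : Set (Fin d → ℤ) → Prop) :
    Dep {ω | P (faceHits c i τ m n ω)} ((fun y => (y, 0)) '' ball c n) := by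
  intro ω ω' h
  have : hitSet m n (bottom c ω) = hitSet m n (bottom c ω') := by
    refine hitSet_congr m n fun y hy => h _ ⟨y + c, ?_, rfl⟩
    rw [ball_eq_image]; exact ⟨y, hy, rfl⟩
  simp only [Set.mem_ofPred_eq, faceHits, this]

variable (p δ : unitInterval) (c : Fin d → ℤ) (i : Fin d) (τ : Fin d → Bool) (m n : ℕ)
  (R : Set (Fin d → ℤ)) (β : (Fin d → ℤ) → ℕ)

/-- Probability that no reached boundary point carries a good seed. -/
lemma pr_no_hit_seed_le {η ρ : ℝ} {K K' : ℕ} (hρ : 0 ≤ ρ) (hρp : ρ ≤ p) (hρδ : ρ ≤ δ)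
    (hL : pr (fun _ => p) {ξ | K ≤ (hitSet m n ξ ∩ facePiece i τ n).ncard}ᶜ ≤ η)
    (hK : K' * (2 * m + 1) ^ d ≤ K) :
    pr (layerWt d p δ) {ω | ∀ x ∈ faceHits c i τ m n ω,
        ω ∉ seedEvent (ball (ctr c i τ m x) m) R β} ≤
      η + (1 - ρ ^ (ball (0 : Fin d → ℤ) m).ncard) ^ K' := by
  classical
  have hw : ∀ a, ρ ≤ layerWt d p δ a := by
    intro a; unfold layerWt; split_ifs <;> assumption
  set w := layerWt d p δ
  let I : Finset (Set (Fin d → ℤ)) := ((finite_ball (0 : Fin d → ℤ) n).toFinset.powerset.image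
    fun E : Finset (Fin d → ℤ) => (E : Set (Fin d → ℤ))).filter
      fun X => K ≤ X.ncard ∧ X ⊆ facePiece i τ n
  let B : Set (Fin d → ℤ) → Set ((Fin d → ℤ) × ℕ → Bool) := fun X => {ω | faceHits c i τ m n ω = X}
  let C : Set (Fin d → ℤ) → Set ((Fin d → ℤ) × ℕ → Bool) := fun X =>
    {ω | ∀ x ∈ X, ω ∉ seedEvent (ball (ctr c i τ m x) m) R β}
  have hIb : ∀ X ∈ I, X ⊆ ball (0 : Fin d → ℤ) n ∧ K ≤ X.ncard ∧ X ⊆ facePiece i τ n := by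
    intro X hX
    obtain ⟨h1, h2⟩ := Finset.mem_filter.1 hX
    obtain ⟨E, hE, rfl⟩ := Finset.mem_image.1 h1
    refine ⟨fun x hx => ?_, h2⟩
    simpa using Finset.mem_powerset.1 hE hx
  have hsub : {ω | ∀ x ∈ faceHits c i τ m n ω, ω ∉ seedEvent (ball (ctr c i τ m x) m) R β} ⊆
      {ω | bottom c ω ∈ {ξ | K ≤ (hitSet m n ξ ∩ facePiece i τ n).ncard}ᶜ} ∪
        ⋃ X ∈ I, B X ∩ C X := by
    intro ω hω
    by_cases hc : K ≤ (faceHits c i τ m n ω).ncard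
    · refine Or.inr (Set.mem_iUnion₂.2 ⟨faceHits c i τ m n ω, ?_, rfl, hω⟩)
      refine Finset.mem_filter.2 ⟨Finset.mem_image.2
        ⟨(finite_ball (0 : Fin d → ℤ) n).toFinset.filter (· ∈ faceHits c i τ m n ω), by simp, ?_⟩,
        hc, Set.inter_subset_right⟩
      ext x
      simp only [Finset.coe_filter, Set.Finite.mem_toFinset, Set.mem_ofPred_eq,
        and_iff_right_iff_imp]
      exact fun h => hitSet_subset _ _ _ h.1
    · exact Or.inl hc
  refine (pr_mono hsub).trans (pr_union_le.trans (add_le_add ?_ ?_))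
  · rw [pr_bottom]
    · exact hL
    · exact ((dep_facePiece_hits m n K i τ).compl).measurableSet (finite_ball _ _)
  · have hD : ∀ X ∈ I, Dep (C X) ((fun y => (y, β y)) '' (ball c (n + 2 * m + 1) \ ball c n)) := by
      intro X hX ω ω' h
      refine forall₂_congr fun x hx => not_congr (dep_seedEvent _ R β _ _ ?_)
      rintro _ ⟨y, hy, rfl⟩
      exact h _ ⟨y, ⟨ctr_ball_subset ((hIb X hX).2.2 hx) ((hIb X hX).1 hx) hy,
        notMem_ball_of_ctr ((hIb X hX).2.2 hx) hy⟩, rfl⟩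
    have := pr_biUnion_inter_le (w := w) I B C _ _
      ((1 - ρ ^ (ball (0 : Fin d → ℤ) m).ncard) ^ K')
      (fun X _ Y _ hXY => Set.disjoint_left.2 fun ω h1 h2 => hXY (h1.symm.trans h2))
      (fun _ _ => (finite_ball c n).image _)
      (fun _ _ => (((finite_ball c (n + 2 * m + 1)).subset Set.sdiff_subset).image _))
      (fun X _ => dep_faceHits c i τ m n (· = X)) hD
      (fun X hX => by
        rw [Set.disjoint_left]
        rintro _ ⟨y, hy, rfl⟩ ⟨y', hy', h⟩
        obtain rfl : y' = y := (Prod.ext_iff.1 h).1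
        exact hy'.2 hy)
      (fun X hX => pr_no_seed_le w hρ hw R β ((finite_ball _ _).subset (hIb X hX).1)
        (hK.trans (hIb X hX).2.1))
    refine this.trans (mul_le_of_le_one_right ?_ pr_le_one)
    exact pow_nonneg (sub_nonneg.2 (pow_le_one₀ hρ (hρp.trans p.2.2))) _

/-- Used sites, from which a boundary point carrying a good seed can be reached through unused
sites of the ball. -/
def approach (ω : (Fin d → ℤ) × ℕ → Bool) : Set (Fin d → ℤ) :=
  {z | z ∈ ball c n ∧ (z ∈ R ∨ 1 ≤ β z) ∧ ∃ x ∈ facePiece i τ n, x ∈ ball (0 : Fin d → ℤ) n ∧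
    ω ∈ seedEvent (ball (ctr c i τ m x) m) R β ∧
    Conn Adj {y | ω (y, 0) = true ∧ y ∈ ball c n ∧ y ∉ R ∧ β y = 0} z (c + x)}

lemma dep_approach (W : Set (Fin d → ℤ)) :
    Dep {ω | approach c i τ m n R β ω = W}
      ((fun y => (y, 0)) '' {y | y ∈ ball c n ∧ y ∉ R ∧ β y = 0} ∪
        (fun y => (y, β y)) '' (ball c (n + 2 * m + 1) \ ball c n)) := by
  intro ω ω' h
  have : approach c i τ m n R β ω = approach c i τ m n R β ω' := by
    unfold approach
    ext z
    refine and_congr_right fun _ => and_congr_right fun _ => exists_congr fun x =>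
      and_congr_right fun hx => and_congr_right fun hx' => and_congr (dep_seedEvent _ R β _ _ ?_) ?_
    · rintro _ ⟨y, hy, rfl⟩
      exact h _ (Or.inr ⟨y, ⟨ctr_ball_subset hx hx' hy, notMem_ball_of_ctr hx hy⟩, rfl⟩)
    · have : {y | ω (y, 0) = true ∧ y ∈ ball c n ∧ y ∉ R ∧ β y = 0} =
          {y | ω' (y, 0) = true ∧ y ∈ ball c n ∧ y ∉ R ∧ β y = 0} := by
        ext y
        refine and_congr_left fun hy => ?_
        rw [h (y, 0) (Or.inl ⟨y, hy, rfl⟩)]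
      rw [this]
  simp only [Set.mem_ofPred_eq, this]

/-- Failure of a step: no translate of the seed in the prescribed direction is reached. -/
def stepGoal (R₀ : Set (Fin d → ℤ)) : Prop :=
  ∃ c' : Fin d → ℤ, c' i = c i + sgn (τ i) * (n + m + 1) ∧
    (∀ k, k ≠ i → 0 ≤ sgn (τ k) * (c' k - c k) ∧ sgn (τ k) * (c' k - c k) ≤ n) ∧ ball c' m ⊆ R₀

variable {c i τ m n R β}

lemma stepGoal_of_mem {ω : (Fin d → ℤ) × ℕ → Bool} {x : Fin d → ℤ}
    (hx : x ∈ facePiece i τ n) (hx' : x ∈ ball (0 : Fin d → ℤ) n)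
    (hs : ω ∈ seedEvent (ball (ctr c i τ m x) m) R β)
    (h : c + x ∈ explored (ball c (n + 2 * m + 1)) R β ω) :
    stepGoal c i τ m n (explored (ball c (n + 2 * m + 1)) R β ω) := by
  refine ⟨ctr c i τ m x, ?_, ?_, ?_⟩
  · rw [ctr_same, facePiece_same hx]; ring
  · intro k hk
    rw [ctr_ne _ hk, add_sub_cancel_left]
    refine ⟨hx.2 k, ?_⟩
    have := mem_ball.1 hx' k
    simp only [Pi.zero_apply, sub_zero] at this
    rw [abs_le] at this
    rcases sgn_eq (τ k) with h | h <;> rw [h] <;> omega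
  · have hstep : ∀ a ∈ explored (ball c (n + 2 * m + 1)) R β ω, ∀ b ∈ ball (ctr c i τ m x) m,
        Adj a b → b ∈ explored (ball c (n + 2 * m + 1)) R β ω := by
      intro a ha b hb hab
      exact explored_step ha hab (ctr_ball_subset hx hx' hb) (hs b hb)
    have hsg : c + x + Pi.single i (sgn (τ i)) ∈ ball (ctr c i τ m x) m := by
      rw [mem_ball]
      intro k
      by_cases hk : k = i
      · subst hk
        rw [ctr_same]
        simp only [Pi.add_apply, Pi.single_eq_same]
        rcases sgn_eq (τ k) with h | h <;> rw [h, abs_le] <;> omega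
      · rw [ctr_ne _ hk]; simp [hk]
    have h1 := hstep _ h _ hsg (adj_add_single _ _ (sgn_eq _))
    intro y hy
    have hc : Conn Adj (ball (ctr c i τ m x) m) (c + x + Pi.single i (sgn (τ i))) y :=
      conn_Icc hsg hy
    clear hy
    induction hc with
    | refl => exact h1
    | tail _ h2 ih => exact hstep _ ih _ h2.2 h2.1

lemma layerWt_eq (p δ : unitInterval) (y : Fin d → ℤ) (l : ℕ) :
    (layerWt d p δ (y, l) : ℝ) = if l = 0 then (p : ℝ) else δ := by
  unfold layerWt; split_ifs <;> rfl

lemma pr_step_le (p δ : unitInterval) {ε η : ℝ} {t : ℕ} (hp : (p : ℝ) < 1)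
    (hmn : m ≤ n) (hR : ball c m ⊆ R) (hbd : ∀ y ∉ R, 1 ≤ β y → ∃ x ∈ R, Adj x y)
    (hno : pr (layerWt d p δ) {ω | ∀ x ∈ faceHits c i τ m n ω,
        ω ∉ seedEvent (ball (ctr c i τ m x) m) R β} ≤ η)
    (ht : (1 - (δ : ℝ)) ^ t ≤ ε / 2) (hη : η ≤ ε / 2 * (1 - (p : ℝ)) ^ t) :
    pr (layerWt d p δ) {ω | ¬ stepGoal c i τ m n (explored (ball c (n + 2 * m + 1)) R β ω)} ≤
      ε := by
  classical
  set w := layerWt d p δ with hw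
  set W := approach c i τ m n R β with hW
  have hWb : ∀ ω, W ω ⊆ ball c n := fun ω z hz => hz.1
  have hWf : ∀ ω, (W ω).Finite := fun ω => (finite_ball c n).subset (hWb ω)
  -- no site of `W` is explored on the failure event
  have hfail : ∀ ω, ¬ stepGoal c i τ m n (explored (ball c (n + 2 * m + 1)) R β ω) →
      ∀ z ∈ W ω, z ∉ R ∧ ω (z, β z) = false := by
    intro ω hω
    have h1 : ∀ z ∈ W ω, z ∉ explored (ball c (n + 2 * m + 1)) R β ω := by
      rintro z ⟨-, -, x, hx, hx', hs, hc⟩ hz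
      refine hω (stepGoal_of_mem hx hx' hs ?_)
      obtain ⟨a, ha, hc'⟩ := hz
      refine ⟨a, ha, hc'.trans (hc.mono ?_)⟩
      rintro y ⟨h1, h2, h3, h4⟩
      refine ⟨ball_mono c (by omega) h2, h3, by rw [h4]; exact h1⟩
    intro z hz
    have hzR : z ∉ R := fun h => h1 z hz (subset_explored _ _ _ _ h)
    refine ⟨hzR, ?_⟩
    by_contra hc
    obtain ⟨a, ha, haz⟩ := hbd z hzR (hz.2.1.resolve_left hzR)
    exact h1 z hz (explored_step (subset_explored _ _ _ _ ha) haz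
      (ball_mono c (by omega) (hWb ω hz)) (Or.inr (by simpa using hc)))
  have hclosed : ∀ ω, (∀ z ∈ W ω, z ∉ R ∧ ω (z, 0) = false) →
      ∀ x ∈ faceHits c i τ m n ω, ω ∉ seedEvent (ball (ctr c i τ m x) m) R β := by
    rintro ω hω x ⟨⟨hx', -, b, hb, hc⟩, hx⟩ hs
    have hc1 : Conn Adj {y | ω (y, 0) = true ∧ y ∈ ball c n} (b + c) (x + c) := by
      refine hc.map (fun y => y + c) (fun _ _ h => h.add_right c) ?_
      rintro y ⟨h1, h2⟩
      exact ⟨h1, by rw [ball_eq_image]; exact ⟨y, h2, rfl⟩⟩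
    have hbU : b + c ∈ R := hR (by rw [ball_eq_image]; exact ⟨b, hb, rfl⟩)
    obtain ⟨z, hz, hz', hc2⟩ := hc1.last_exit (R := {y | y ∈ R ∨ 1 ≤ β y}) (Or.inl hbU)
    have hc3 : Conn Adj {y | ω (y, 0) = true ∧ y ∈ ball c n ∧ y ∉ R ∧ β y = 0} z (c + x) := by
      rw [add_comm c x]
      refine hc2.mono ?_
      rintro y ⟨⟨h1, h2⟩, h3⟩
      have h3' : ¬ (y ∈ R ∨ 1 ≤ β y) := h3
      push Not at h3'
      exact ⟨h1, h2, h3'.1, by omega⟩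
    have hzb : z ∈ ball c n → z ∈ W ω := fun h => ⟨h, hz, x, hx, hx', hs, hc3⟩
    rcases hz' with rfl | hz'
    · refine (hω _ (hzb ?_)).1 hbU
      rw [ball_eq_image]
      exact ⟨b, ball_mono 0 (by exact_mod_cast hmn) hb, rfl⟩
    · have := (hω z (hzb hz'.2)).2
      rw [hz'.1] at this
      exact absurd this (by simp)
  let I : Finset (Set (Fin d → ℤ)) := ((finite_ball c n).toFinset.powerset.image
    fun E : Finset (Fin d → ℤ) => (E : Set (Fin d → ℤ))).filter fun V => ∀ z ∈ V, z ∉ R ∧ 1 ≤ β z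
  have hIb : ∀ V ∈ I, V ⊆ ball c n ∧ ∀ z ∈ V, z ∉ R ∧ 1 ≤ β z := by
    intro V hV
    obtain ⟨h1, h2⟩ := Finset.mem_filter.1 hV
    obtain ⟨E, hE, rfl⟩ := Finset.mem_image.1 h1
    exact ⟨fun x hx => by simpa using Finset.mem_powerset.1 hE hx, h2⟩
  have hI : ∀ ω, ¬ stepGoal c i τ m n (explored (ball c (n + 2 * m + 1)) R β ω) → W ω ∈ I := by
    intro ω hω
    refine Finset.mem_filter.2 ⟨Finset.mem_image.2
      ⟨(finite_ball c n).toFinset.filter (· ∈ W ω), by simp, ?_⟩, fun z hz =>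
        ⟨(hfail ω hω z hz).1, hz.2.1.resolve_left (hfail ω hω z hz).1⟩⟩
    ext x
    simp only [Finset.coe_filter, Set.Finite.mem_toFinset, Set.mem_ofPred_eq,
      and_iff_right_iff_imp]
    exact fun h => h.1
  let B : Set (Fin d → ℤ) → Set ((Fin d → ℤ) × ℕ → Bool) := fun V => {ω | W ω = V}
  let C : ((Fin d → ℤ) → ℕ) → Set (Fin d → ℤ) → Set ((Fin d → ℤ) × ℕ → Bool) := fun l V =>
    {ω | ∀ z ∈ V, ω (z, l z) = false}
  have hBdisj : ∀ V V', V ≠ V' → Disjoint (B V) (B V') := fun V V' h =>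
    Set.disjoint_left.2 fun ω h1 h2 => h (h1.symm.trans h2)
  set s₀ : Set ((Fin d → ℤ) × ℕ) := ((fun y => (y, 0)) '' {y | y ∈ ball c n ∧ y ∉ R ∧ β y = 0} ∪
        (fun y => (y, β y)) '' (ball c (n + 2 * m + 1) \ ball c n)) with hs₀
  have hs₀f : s₀.Finite := (((finite_ball c n).subset fun y hy => hy.1).image _).union
    (((finite_ball c (n + 2 * m + 1)).subset Set.sdiff_subset).image _)
  have hBdep : ∀ V, Dep (B V) s₀ := fun V => dep_approach c i τ m n R β V
  have hCdep : ∀ l V, Dep (C l V) ((fun y => (y, l y)) '' V) := by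
    intro l V ω ω' h
    refine forall₂_congr fun z hz => ?_
    rw [h _ ⟨z, hz, rfl⟩]
  have hdisj : ∀ l : (Fin d → ℤ) → ℕ, (∀ y, l y = 0 ∨ l y = β y) → ∀ V ∈ I,
      Disjoint s₀ ((fun y => (y, l y)) '' V) := by
    intro l hl V hV
    rw [Set.disjoint_left]
    rintro _ h ⟨z, hz, rfl⟩
    obtain ⟨h1, h2⟩ := hIb V hV
    rcases h with ⟨y, hy, h⟩ | ⟨y, hy, h⟩
    · obtain rfl : y = z := (Prod.ext_iff.1 h).1
      have := (h2 y hz).2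
      have := hy.2.2
      omega
    · obtain rfl : y = z := (Prod.ext_iff.1 h).1
      exact hy.2 (h1 hz)
  have hCpr : ∀ (l : (Fin d → ℤ) → ℕ) (V) (hV : V ∈ I), pr w (C l V) =
      ∏ z ∈ ((finite_ball c n).subset (hIb V hV).1).toFinset, (1 - (w (z, l z) : ℝ)) := by
    intro l V hV
    have : C l V = {ω | ∀ a ∈ ((finite_ball c n).subset (hIb V hV).1).toFinset.image
        (fun z => (z, l z)), ω a = false} := by
      ext ω; simp [C]
    rw [this, pr_cyl w _ (fun _ => false),
      Finset.prod_image (fun a _ b _ h => (Prod.ext_iff.1 h).1)]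
    simp
  have hδ0 : (0 : ℝ) ≤ 1 - δ := sub_nonneg.2 δ.2.2
  have hp0 : (0 : ℝ) < 1 - p := sub_pos.2 hp
  -- many used sites
  have hmany := pr_biUnion_inter_le (w := w) (I.filter fun V => t ≤ V.ncard) B (C β) _ _
    ((1 - (δ : ℝ)) ^ t) (fun V _ V' _ h => hBdisj V V' h) (fun _ _ => hs₀f)
    (fun V hV => (((finite_ball c n).subset (hIb V (Finset.mem_filter.1 hV).1).1).image _))
    (fun V _ => hBdep V) (fun V _ => hCdep β V)
    (fun V hV => hdisj β (fun _ => Or.inr rfl) V (Finset.mem_filter.1 hV).1)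
    (fun V hV => by
      obtain ⟨hV1, hV2⟩ := Finset.mem_filter.1 hV
      have hfin := (finite_ball c n).subset (hIb V hV1).1
      rw [hCpr β V hV1]
      calc _ = ∏ z ∈ hfin.toFinset, (1 - (δ : ℝ)) := by
            refine Finset.prod_congr rfl fun z hz => ?_
            have := ((hIb V hV1).2 z (by simpa using hz)).2
            rw [hw, layerWt_eq, if_neg (by omega)]
        _ = (1 - (δ : ℝ)) ^ V.ncard := by
            rw [Finset.prod_const, Set.ncard_eq_toFinset_card V hfin]
        _ ≤ _ := pow_le_pow_of_le_one hδ0 (by linarith [δ.2.1]) hV2)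
  -- few used sites
  have hfew := le_pr_biUnion_inter (w := w) (I.filter fun V => V.ncard < t) B (C fun _ => 0) _ _
    (fun _ => (1 - (p : ℝ)) ^ t) (fun V _ V' _ h => hBdisj V V' h) (fun _ _ => hs₀f)
    (fun V hV => (((finite_ball c n).subset (hIb V (Finset.mem_filter.1 hV).1).1).image _))
    (fun V _ => hBdep V) (fun V _ => hCdep (fun _ => 0) V)
    (fun V hV => hdisj (fun _ => 0) (fun _ => Or.inl rfl) V (Finset.mem_filter.1 hV).1)
    (fun V hV => by
      obtain ⟨hV1, hV2⟩ := Finset.mem_filter.1 hV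
      have hfin := (finite_ball c n).subset (hIb V hV1).1
      rw [hCpr (fun _ => 0) V hV1]
      calc (1 - (p : ℝ)) ^ t ≤ (1 - (p : ℝ)) ^ V.ncard :=
            pow_le_pow_of_le_one hp0.le (by linarith [p.2.1]) hV2.le
        _ = ∏ z ∈ hfin.toFinset, (1 - (p : ℝ)) := by
            rw [Finset.prod_const, Set.ncard_eq_toFinset_card V hfin]
        _ = _ := Finset.prod_congr rfl fun z _ => by rw [hw, layerWt_eq, if_pos rfl])
  rw [← Finset.mul_sum, ← pr_biUnion _ B (fun V _ V' _ h => hBdisj V V' h) (fun _ => s₀)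
    (fun _ _ => hs₀f) (fun V _ => hBdep V)] at hfew
  have hfew' : pr w (⋃ V ∈ I.filter fun V => V.ncard < t, B V) ≤ ε / 2 := by
    have h1 := hfew.trans ((pr_mono ?_).trans (hno.trans hη))
    · rw [mul_comm] at h1
      exact le_of_mul_le_mul_right h1 (pow_pos hp0 t)
    · intro ω hω
      obtain ⟨V, hV, hB, hC⟩ := Set.mem_iUnion₂.1 hω
      have hB' : W ω = V := hB
      refine hclosed ω fun z hz => ⟨((hIb V (Finset.mem_filter.1 hV).1).2 z (hB' ▸ hz)).1,
        hC z (hB' ▸ hz)⟩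
  have hmany' : pr w (⋃ V ∈ I.filter fun V => t ≤ V.ncard, B V ∩ C β V) ≤ ε / 2 :=
    hmany.trans ((mul_le_of_le_one_right (pow_nonneg hδ0 t) pr_le_one).trans ht)
  have hsub : {ω | ¬ stepGoal c i τ m n (explored (ball c (n + 2 * m + 1)) R β ω)} ⊆
      (⋃ V ∈ I.filter fun V => t ≤ V.ncard, B V ∩ C β V) ∪
        ⋃ V ∈ I.filter fun V => V.ncard < t, B V := by
    intro ω hω
    rcases le_or_gt t (W ω).ncard with h | h
    · exact Or.inl (Set.mem_iUnion₂.2 ⟨W ω, Finset.mem_filter.2 ⟨hI ω hω, h⟩, rfl,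
        fun z hz => (hfail ω hω z hz).2⟩)
    · exact Or.inr (Set.mem_iUnion₂.2 ⟨W ω, Finset.mem_filter.2 ⟨hI ω hω, h⟩, rfl⟩)
  have := (pr_mono hsub).trans (pr_union_le.trans (add_le_add hmany' hfew'))
  linarith

end microstep

section coarse
variable {d : ℕ}

open Filter Topology in
/-- With suitable scales, a step succeeds with probability close to one in every situation. -/
lemma exists_pr_step_le (p δ : unitInterval) (hp0 : 0 < (p : ℝ)) (hp : (p : ℝ) < 1)
    (hδ : 0 < (δ : ℝ))
    (hperc : bern (fun _ : Fin d → ℤ => p) (Perc d) ≠ 0) {ε : ℝ} (hε : 0 < ε) :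
    ∃ m n : ℕ, m ≤ n ∧ ∀ (c : Fin d → ℤ) (i : Fin d) (τ : Fin d → Bool) (R : Set (Fin d → ℤ))
      (β : (Fin d → ℤ) → ℕ), ball c m ⊆ R → (∀ y ∉ R, 1 ≤ β y → ∃ x ∈ R, Adj x y) →
      pr (layerWt d p δ)
        {ω | ¬ stepGoal c i τ m n (explored (ball c (n + 2 * m + 1)) R β ω)} ≤ ε := by
  obtain ⟨t, ht⟩ := exists_pow_lt_of_lt_one (half_pos hε) (show 1 - (δ : ℝ) < 1 by linarith)
  have hp1 : 0 < 1 - (p : ℝ) := by linarith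
  set η := ε / 4 * (1 - (p : ℝ)) ^ t with hη
  have hη0 : 0 < η := by positivity
  obtain ⟨m, hm⟩ := exists_many_facePiece_hits p hp hperc hη0
  set ρ := min (p : ℝ) δ with hρ
  have hρ0 : 0 < ρ := lt_min hp0 hδ
  have hρL : 0 < ρ ^ (ball (0 : Fin d → ℤ) m).ncard := pow_pos hρ0 _
  obtain ⟨K', hK'⟩ := exists_pow_lt_of_lt_one hη0
    (show 1 - ρ ^ (ball (0 : Fin d → ℤ) m).ncard < 1 by linarith)
  obtain ⟨n0, hn0⟩ := hm (K' * (2 * m + 1) ^ d)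
  refine ⟨m, max m n0, le_max_left _ _, fun c i τ R β hR hbd => ?_⟩
  refine pr_step_le p δ hp (le_max_left _ _) hR hbd (η := 2 * η) ?_ ht.le (le_of_eq ?_)
  · have := pr_no_hit_seed_le p δ c i τ m (max m n0) R β hρ0.le (min_le_left _ _)
      (min_le_right _ _) (hn0 _ (le_max_right _ _) i τ) le_rfl
    linarith
  · rw [hη]; ring

/-- Embedding of a coarse lattice of spacing `s` spanned by two coordinate directions. -/
def emb (o : Fin d → ℤ) (s : ℤ) (e : Fin 2 → Fin d) (z : Fin 2 → ℤ) : Fin d → ℤ :=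
  o + ∑ a, Pi.single (e a) (s * z a)

lemma emb_same (o : Fin d → ℤ) (s : ℤ) {e : Fin 2 → Fin d} (he : Function.Injective e)
    (z : Fin 2 → ℤ) (a : Fin 2) : emb o s e z (e a) = o (e a) + s * z a := by
  simp only [emb, Pi.add_apply, Finset.sum_apply, Pi.single_apply, he.eq_iff]
  simp

lemma emb_ne (o : Fin d → ℤ) (s : ℤ) {e : Fin 2 → Fin d} (z : Fin 2 → ℤ) {k : Fin d}
    (h : ∀ a, k ≠ e a) : emb o s e z k = o k := by
  simp [emb, h]

lemma emb_add_single (o : Fin d → ℤ) (s : ℤ) (e : Fin 2 → Fin d) (z : Fin 2 → ℤ) (a : Fin 2)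
    (ε : ℤ) : emb o s e (z + Pi.single a ε) = emb o s e z + Pi.single (e a) (s * ε) := by
  simp only [emb, add_assoc]
  congr 1
  have : ∀ b, s * (z + Pi.single a ε : Fin 2 → ℤ) b = s * z b + if b = a then s * ε else 0 := by
    intro b; by_cases h : b = a
    · subst h; simp [mul_add]
    · simp [h]
  simp only [this, Pi.single_add, Finset.sum_add_distrib]
  congr 1
  rw [Finset.sum_eq_single a] <;> simp +contextual

/-- The number of layers needed by the exploration. -/
noncomputable def numLayers : ℕ := (ball (0 : Fin 2 → ℤ) 4).ncard + 1

open Classical in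
/-- Number of sites of `T` whose exploration may look at `y`. -/
noncomputable def usage (o : Fin d → ℤ) (s : ℤ) (e : Fin 2 → Fin d) (T : Finset (Fin 2 → ℤ))
    (y : Fin d → ℤ) : ℕ :=
  (T.filter fun w => y ∈ ball (emb o s e w) (4 * s)).card

lemma usage_lt (o : Fin d → ℤ) {s : ℤ} (hs : 0 < s) {e : Fin 2 → Fin d}
    (he : Function.Injective e) (T : Finset (Fin 2 → ℤ)) (y : Fin d → ℤ) :
    usage o s e T y < numLayers := by
  classical
  refine Nat.lt_succ_of_le ?_
  rw [usage, ← ncard_ball fun a => (y (e a) - o (e a)) / s, ← Set.ncard_coe_finset]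
  refine Set.ncard_le_ncard ?_ (finite_ball _ _)
  intro w hw
  have hw' := (Finset.mem_filter.1 hw).2
  rw [mem_ball] at hw' ⊢
  intro a
  have h1 := hw' (e a)
  rw [emb_same o s he, abs_le] at h1
  have h2 := Int.mul_ediv_add_emod (y (e a) - o (e a)) s
  have h3 := Int.emod_nonneg (y (e a) - o (e a)) hs.ne'
  have h4 := Int.emod_lt_of_pos (y (e a) - o (e a)) hs
  set k := (y (e a) - o (e a)) / s
  rw [abs_le]
  constructor
  · by_contra hc
    have : s * (w a + 5) ≤ s * k := mul_le_mul_of_nonneg_left (by omega) hs.le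
    rw [mul_add] at this; omega
  · by_contra hc
    have : s * (k + 5) ≤ s * w a := mul_le_mul_of_nonneg_left (by omega) hs.le
    rw [mul_add] at this; omega

/-- Coarse connection event given explored open sites `S` and explored closed sites `X`. -/
def coarseEvent (Γ S X : Finset (Fin 2 → ℤ)) (b : Fin 2 → ℤ) : Set ((Fin 2 → ℤ) → Bool) :=
  {ζ | ∃ a ∈ S, Conn Adj {z | z ∈ Γ ∧ z ∉ X ∧ (z ∈ S ∨ ζ z = true)} a b}

lemma dep_coarseEvent (Γ S X : Finset (Fin 2 → ℤ)) (b : Fin 2 → ℤ) :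
    Dep (coarseEvent Γ S X b) (Γ : Set (Fin 2 → ℤ)) := by
  intro ζ ζ' h
  have : {z | z ∈ Γ ∧ z ∉ X ∧ (z ∈ S ∨ ζ z = true)} =
      {z | z ∈ Γ ∧ z ∉ X ∧ (z ∈ S ∨ ζ' z = true)} := by
    ext z
    refine and_congr_right fun hz => ?_
    rw [h z hz]
  simp only [coarseEvent, Set.mem_ofPred_eq, this]

variable (p δ : unitInterval) (m n : ℕ) (o : Fin d → ℤ) (e : Fin 2 → Fin d)

/-- The state of the coarse exploration is consistent. -/
structure Consistent (m n : ℕ) (o : Fin d → ℤ) (e : Fin 2 → Fin d) (S X : Finset (Fin 2 → ℤ))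
    (R : Set (Fin d → ℤ)) (β : (Fin d → ℤ) → ℕ) : Prop where
  seed : ∀ v ∈ S, ∃ c ∈ ball (emb o (n + m + 1) e v) (n + m + 1), ball c m ⊆ R
  bdry : ∀ y ∉ R, 1 ≤ β y → ∃ x ∈ R, Adj x y
  count : ∀ y, β y ≤ usage o (n + m + 1) e (S ∪ X) y

variable {m n o e}

lemma Consistent.bdry_bump {D R R₀ : Set (Fin d → ℤ)} {β : (Fin d → ℤ) → ℕ}
    (h : ∀ y ∉ R, 1 ≤ β y → ∃ x ∈ R, Adj x y) (hR : R ⊆ R₀) :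
    ∀ y ∉ R₀, 1 ≤ bump D R β R₀ y → ∃ x ∈ R₀, Adj x y := by
  intro y hy hb
  unfold bump at hb
  split_ifs at hb with hc
  · exact hc.2.2
  · obtain ⟨x, hx, hxy⟩ := h y (fun h => hy (hR h)) hb
    exact ⟨x, hR hx, hxy⟩

lemma usage_mono (o : Fin d → ℤ) (s : ℤ) (e : Fin 2 → Fin d) {T T' : Finset (Fin 2 → ℤ)}
    (h : T ⊆ T') (y : Fin d → ℤ) : usage o s e T y ≤ usage o s e T' y := by
  classical exact Finset.card_le_card (Finset.filter_subset_filter _ h)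

lemma bump_le_usage {s : ℤ} {D R R₀ : Set (Fin d → ℤ)} {β : (Fin d → ℤ) → ℕ}
    {T : Finset (Fin 2 → ℤ)} {w : Fin 2 → ℤ} (h : ∀ y, β y ≤ usage o s e T y) (hw : w ∉ T)
    (hD : D ⊆ ball (emb o s e w) (4 * s)) (y : Fin d → ℤ) :
    bump D R β R₀ y ≤ usage o s e (insert w T) y := by
  classical
  by_cases hy : y ∈ D
  · refine (bump_le _ _ _ _ _).trans ?_
    unfold usage at *
    rw [Finset.filter_insert, if_pos (hD hy), Finset.card_insert_of_notMem
      (fun hc => hw (Finset.mem_filter.1 hc).1)]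
    have := h y
    convert Nat.succ_le_succ this
  · rw [bump_of_notMem _ _ _ hy]
    exact (h y).trans (usage_mono o s e (Finset.subset_insert _ _) y)

/-- The coarse exploration dominates a supercritical coarse percolation. -/
lemma coarseEvent_le_reachEvent {ε : ℝ} (hmn : m ≤ n)
    (he : Function.Injective e) {q : unitInterval} (hq : (q : ℝ) = 1 - ε)
    (hstep : ∀ (c : Fin d → ℤ) (i : Fin d) (τ : Fin d → Bool) (R : Set (Fin d → ℤ))
      (β : (Fin d → ℤ) → ℕ), ball c m ⊆ R → (∀ y ∉ R, 1 ≤ β y → ∃ x ∈ R, Adj x y) →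
      pr (layerWt d p δ)
        {ω | ¬ stepGoal c i τ m n (explored (ball c (n + 2 * m + 1)) R β ω)} ≤ ε)
    {Λ : Set (Fin d → ℤ)} (hΛ : Λ.Finite) {Γ : Finset (Fin 2 → ℤ)}
    (hΓ : ∀ w ∈ Γ, ball (emb o (n + m + 1) e w) (4 * (n + m + 1)) ⊆ Λ) (b : Fin 2 → ℤ)
    (S X : Finset (Fin 2 → ℤ)) (hSX : Disjoint S X)
    (R : Set (Fin d → ℤ)) (β : (Fin d → ℤ) → ℕ) (hcons : Consistent m n o e S X R β) :
    pr (fun _ => q) (coarseEvent Γ S X b) ≤ pr (layerWt d p δ)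
      (reachEvent Λ (ball (emb o (n + m + 1) e b) (n + m + 1)) numLayers R β) := by
  classical
  obtain ⟨N, hN⟩ : ∃ N, (Γ \ (S ∪ X)).card = N := ⟨_, rfl⟩
  induction N using Nat.strong_induction_on generalizing S X R β with
  | _ N ih =>
  set s : ℤ := n + m + 1 with hs
  have hs0 : 0 < s := by omega
  by_cases hw : ∃ w ∈ Γ, w ∉ S ∧ w ∉ X ∧ ∃ v ∈ S, Adj v w
  · obtain ⟨w, hwΓ, hwS, hwX, v, hvS, hvw⟩ := hw
    have hwSX : w ∉ S ∪ X := by simp [hwS, hwX]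
    have hcard : ∀ S' X' : Finset (Fin 2 → ℤ), S' ∪ X' = insert w (S ∪ X) →
        (Γ \ (S' ∪ X')).card < N := by
      intro S' X' h
      rw [h, ← hN]
      refine Finset.card_lt_card (Finset.ssubset_iff_of_subset
        (Finset.sdiff_subset_sdiff le_rfl (Finset.subset_insert _ _)) |>.2 ⟨w, ?_, ?_⟩)
      · simp [hwΓ, hwS, hwX]
      · simp
    -- the coarse recursion
    have hrec : pr (fun _ => q) (coarseEvent Γ S X b) ≤
        (1 - ε) * pr (fun _ => q) (coarseEvent Γ (insert w S) X b) +
          ε * pr (fun _ => q) (coarseEvent Γ S (insert w X) b) := by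
      rw [pr_eq_forced (dep_coarseEvent Γ S X b) Γ.finite_toSet w, hq]
      have hε : 0 ≤ ε := by have := q.2.2; linarith
      have hε' : 0 ≤ 1 - ε := hq ▸ q.2.1
      rw [sub_sub_cancel]
      refine add_le_add (mul_le_mul_of_nonneg_left (pr_mono ?_) hε')
        (mul_le_mul_of_nonneg_left (pr_mono ?_) hε)
      · rintro ζ ⟨a, ha, hc⟩
        refine ⟨a, Finset.mem_insert_of_mem ha, hc.mono ?_⟩
        rintro z ⟨h1, h2, h3⟩
        refine ⟨h1, h2, ?_⟩
        by_cases hzw : z = w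
        · exact Or.inl (by simp [hzw])
        · rw [Function.update_of_ne hzw] at h3
          exact h3.imp_left Finset.mem_insert_of_mem
      · rintro ζ ⟨a, ha, hc⟩
        refine ⟨a, ha, hc.mono ?_⟩
        rintro z ⟨h1, h2, h3⟩
        have hzw : z ≠ w := by
          rintro rfl
          simp [hwS] at h3
        rw [Function.update_of_ne hzw] at h3
        exact ⟨h1, by simp [hzw, h2], h3⟩
    refine hrec.trans ?_
    obtain ⟨c, hc, hcR⟩ := hcons.seed v hvS
    obtain ⟨a, σ, hσ, hwv⟩ := hvw.exists_single
    have hemb : emb o s e w = emb o s e v + Pi.single (e a) (s * σ) := by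
      rw [hwv, emb_add_single]
    let τ : Fin d → Bool := fun k =>
      if k = e a then decide (σ = 1) else decide (c k ≤ emb o s e v k)
    have hτa : sgn (τ (e a)) = σ := by
      simp only [τ, if_true]
      rcases hσ with h | h <;> simp [sgn, h]
    have hcv : ∀ k, |c k - emb o s e v k| ≤ s := mem_ball.1 hc
    have hD : ball c (n + 2 * m + 1) ⊆ ball (emb o s e w) (4 * s) := by
      intro y hy
      rw [mem_ball] at hy ⊢
      intro k
      have h1 := hy k
      have h2 := hcv k
      have h3 : |emb o s e w k - emb o s e v k| ≤ s := by
        rw [hemb, Pi.add_apply, add_sub_cancel_left]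
        by_cases hk : k = e a
        · subst hk
          rw [Pi.single_eq_same]
          rcases hσ with h | h <;> rw [h, abs_le] <;> omega
        · simp [hk, hs0.le]
      rw [abs_le] at *
      omega
    refine le_pr_reachEvent (layerWt d p δ) hΛ (hD.trans (hΓ w hwΓ))
      (fun y _ => (hcons.count y).trans_lt (usage_lt o hs0 he _ _))
      (stepGoal c (e a) τ m n) (pr_mono ?_) ?_ ?_ (hstep c (e a) τ R β hcR hcons.bdry)
    · rintro ζ ⟨x, hx, h⟩
      refine ⟨x, Finset.mem_insert_of_mem hx, h.mono ?_⟩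
      rintro z ⟨h1, h2, h3⟩
      exact ⟨h1, fun h => h2 (Finset.mem_insert_of_mem h), h3.imp_left Finset.mem_insert_of_mem⟩
    · intro R₀ hR₀ _ _
      have hun : S ∪ insert w X = insert w (S ∪ X) := Finset.union_insert _ _ _
      refine ih _ (hcard _ _ hun) S (insert w X)
        (Finset.disjoint_insert_right.2 ⟨hwS, hSX⟩) R₀ _ ⟨?_, ?_, ?_⟩ rfl
      · intro u hu
        obtain ⟨c', h1, h2⟩ := hcons.seed u hu
        exact ⟨c', h1, h2.trans hR₀⟩
      · exact Consistent.bdry_bump hcons.bdry hR₀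
      · rw [hun]
        exact fun y => bump_le_usage hcons.count hwSX hD y
    · intro R₀ hR₀ _ _ hgoal
      have hun : insert w S ∪ X = insert w (S ∪ X) := Finset.insert_union _ _ _
      refine ih _ (hcard _ _ hun) (insert w S) X
        (Finset.disjoint_insert_left.2 ⟨hwX, hSX⟩) R₀ _ ⟨?_, ?_, ?_⟩ rfl
      · intro u hu
        rcases Finset.mem_insert.1 hu with rfl | hu
        · obtain ⟨c', h1, h2, h3⟩ := hgoal
          refine ⟨c', mem_ball.2 fun k => ?_, h3⟩
          have h4 := hcv k
          rw [hemb, Pi.add_apply]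
          by_cases hk : k = e a
          · subst hk
            rw [h1, hτa, Pi.single_eq_same, mul_comm, ← hs]
            rwa [add_sub_add_right_eq_sub]
          · have h5 := h2 k hk
            have h6 : τ k = decide (c k ≤ emb o s e v k) := by simp only [τ, if_neg hk]
            rw [Pi.single_eq_of_ne hk, add_zero]
            rw [h6] at h5
            by_cases h7 : c k ≤ emb o s e v k
            · simp only [sgn, h7, decide_true, if_true] at h5
              rw [abs_le] at *
              omega
            · simp only [sgn, h7, decide_false] at h5
              simp only [Bool.false_eq_true, if_false] at h5
              rw [abs_le] at *
              omega
        · obtain ⟨c', h1, h2⟩ := hcons.seed u hu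
          exact ⟨c', h1, h2.trans hR₀⟩
      · exact Consistent.bdry_bump hcons.bdry hR₀
      · rw [hun]
        exact fun y => bump_le_usage hcons.count hwSX hD y
  · push Not at hw
    rcases (coarseEvent Γ S X b).eq_empty_or_nonempty with h | ⟨ζ, a, ha, hc⟩
    · rw [h, pr_empty]; exact pr_nonneg
    · have hb : b ∈ S := by
        clear ih
        induction hc with
        | refl => exact ha
        | @tail y z _ h2 ih =>
          by_contra hz
          exact hw z h2.2.1 hz h2.2.2.1 y ih h2.1
      obtain ⟨c, h1, h2⟩ := hcons.seed b hb
      have : reachEvent Λ (ball (emb o s e b) s) numLayers R β = Set.univ :=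
        Set.eq_univ_of_forall fun ω => ⟨c, h2 (self_mem_ball _ (by positivity)), c, h1, Conn.refl⟩
      rw [this, pr_univ]; exact pr_le_one

lemma coarse_conn_le {ε : ℝ} (hmn : m ≤ n)
    (he : Function.Injective e) {q : unitInterval} (hq : (q : ℝ) = 1 - ε)
    (hstep : ∀ (c : Fin d → ℤ) (i : Fin d) (τ : Fin d → Bool) (R : Set (Fin d → ℤ))
      (β : (Fin d → ℤ) → ℕ), ball c m ⊆ R → (∀ y ∉ R, 1 ≤ β y → ∃ x ∈ R, Adj x y) →
      pr (layerWt d p δ)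
        {ω | ¬ stepGoal c i τ m n (explored (ball c (n + 2 * m + 1)) R β ω)} ≤ ε)
    {Λ : Set (Fin d → ℤ)} (hΛ : Λ.Finite) {Γ : Finset (Fin 2 → ℤ)}
    (hΓ : ∀ w ∈ Γ, ball (emb o (n + m + 1) e w) (4 * (n + m + 1)) ⊆ Λ) (a b : Fin 2 → ℤ) :
    pr (fun _ => q) {ζ | Conn Adj {z | z ∈ Γ ∧ ζ z = true} a b} ≤ pr (layerWt d p δ)
      (reachEvent Λ (ball (emb o (n + m + 1) e b) (n + m + 1)) numLayers
        (ball (emb o (n + m + 1) e a) m) fun _ => 0) := by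
  refine le_trans (pr_mono ?_) (coarseEvent_le_reachEvent p δ hmn he hq hstep hΛ hΓ b {a} ∅
    (by simp) _ _ ⟨?_, ?_, ?_⟩)
  · intro ζ h
    exact ⟨a, by simp, h.mono fun z hz => ⟨hz.1, by simp, Or.inr hz.2⟩⟩
  · intro v hv
    rw [Finset.mem_singleton.1 hv]
    exact ⟨_, self_mem_ball _ (by positivity), le_rfl⟩
  · intro _ _ h; omega
  · intro _; exact Nat.zero_le _

end coarse

section hierarchical

lemma eq_or_eq_of_ne {k k' : Fin 2} (h : k' ≠ k) (l : Fin 2) : l = k ∨ l = k' := by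
  revert k k' l; decide

/-- The nine subcells of a cell. -/
def kids (u : Fin 2 → ℤ) : Set (Fin 2 → ℤ) := Set.Icc (fun k => 3 * u k) (fun k => 3 * u k + 2)

lemma mem_kids {u w : Fin 2 → ℤ} : w ∈ kids u ↔ ∀ k, 3 * u k ≤ w k ∧ w k ≤ 3 * u k + 2 := by
  simp only [kids, Set.mem_Icc, Pi.le_def, forall_and]

/-- A cell is good when at most one of its subcells is bad. -/
def Good (ζ : (Fin 2 → ℤ) → Bool) : ℕ → (Fin 2 → ℤ) → Prop
  | 0, u => ζ u = true
  | j + 1, u => ∃ w₀, ∀ w ∈ kids u, w ≠ w₀ → Good ζ j w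

/-- The sites all of whose ancestors below level `j` are good. -/
def core (ζ : (Fin 2 → ℤ) → Bool) : ℕ → (Fin 2 → ℤ) → Set (Fin 2 → ℤ)
  | 0, u => {u}
  | j + 1, u => {z | ∃ w ∈ kids u, Good ζ j w ∧ z ∈ core ζ j w}

/-- The sites of a cell of level `j`. -/
def cell (j : ℕ) (u : Fin 2 → ℤ) : Set (Fin 2 → ℤ) :=
  Set.Icc (fun k => 3 ^ j * u k) (fun k => 3 ^ j * u k + (3 ^ j - 1))

lemma mem_cell {j : ℕ} {u w : Fin 2 → ℤ} :
    w ∈ cell j u ↔ ∀ k, 3 ^ j * u k ≤ w k ∧ w k ≤ 3 ^ j * u k + (3 ^ j - 1) := by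
  simp only [cell, Set.mem_Icc, Pi.le_def, forall_and]

lemma cell_zero (u : Fin 2 → ℤ) : cell 0 u = {u} := by
  simp [cell]

lemma cell_subset {j : ℕ} {u w : Fin 2 → ℤ} (hw : w ∈ kids u) : cell j w ⊆ cell (j + 1) u := by
  intro z hz
  rw [mem_cell] at *
  rw [mem_kids] at hw
  intro k
  have h1 := hz k
  have h2 := hw k
  have h3 : (0 : ℤ) < 3 ^ j := by positivity
  rw [pow_succ]
  constructor <;> nlinarith

lemma disjoint_cell {j : ℕ} {u v : Fin 2 → ℤ} (h : u ≠ v) : Disjoint (cell j u) (cell j v) := by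
  rw [Set.disjoint_left]
  intro z hu hv
  apply h
  funext k
  have h1 := mem_cell.1 hu k
  have h2 := mem_cell.1 hv k
  have h3 : (0 : ℤ) < 3 ^ j := by positivity
  by_contra hne
  rcases lt_or_gt_of_ne hne with h | h
  · have : (3 : ℤ) ^ j * (u k + 1) ≤ 3 ^ j * v k := mul_le_mul_of_nonneg_left (by omega) h3.le
    nlinarith
  · have : (3 : ℤ) ^ j * (v k + 1) ≤ 3 ^ j * u k := mul_le_mul_of_nonneg_left (by omega) h3.le
    nlinarith

lemma good_congr {ζ ζ' : (Fin 2 → ℤ) → Bool} {j : ℕ} {u : Fin 2 → ℤ}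
    (h : ∀ z ∈ cell j u, ζ z = ζ' z) : Good ζ j u ↔ Good ζ' j u := by
  induction j generalizing u with
  | zero => unfold Good; rw [h u (by simp [cell_zero])]
  | succ j ih =>
    unfold Good
    refine exists_congr fun w₀ => forall₂_congr fun w hw => imp_congr_right fun _ => ?_
    exact ih fun z hz => h z (cell_subset hw hz)

lemma dep_good (j : ℕ) (u : Fin 2 → ℤ) : Dep {ζ | Good ζ j u} (cell j u) :=
  fun _ _ h => good_congr h

lemma core_subset {ζ : (Fin 2 → ℤ) → Bool} {j : ℕ} {u : Fin 2 → ℤ} (hu : Good ζ j u) :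
    core ζ j u ⊆ {z | z ∈ cell j u ∧ ζ z = true} := by
  induction j generalizing u with
  | zero =>
    rintro z hz
    obtain rfl : z = u := hz
    exact ⟨by simp [cell_zero], hu⟩
  | succ j ih =>
    rintro z ⟨w, hw, hg, hz⟩
    exact ⟨cell_subset hw (ih hg hz).1, (ih hg hz).2⟩

lemma exists_adj_core {ζ : (Fin 2 → ℤ) → Bool} {j : ℕ} {u v : Fin 2 → ℤ} (hu : Good ζ j u)
    (hv : Good ζ j v) (huv : Adj u v) : ∃ x ∈ core ζ j u, ∃ y ∈ core ζ j v, Adj x y := by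
  induction j generalizing u v with
  | zero => exact ⟨u, rfl, v, rfl, huv⟩
  | succ j ih =>
    obtain ⟨k, σ, hσ, rfl⟩ := huv.exists_single
    obtain ⟨a, ha⟩ := hu
    obtain ⟨b, hb⟩ := hv
    obtain ⟨k', hk'⟩ : ∃ k' : Fin 2, k' ≠ k := ⟨k + 1, by fin_cases k <;> decide⟩
    have hkk : ∀ l : Fin 2, l = k ∨ l = k' := eq_or_eq_of_ne hk'
    obtain ⟨t, ht0, ht2, hta, htb⟩ : ∃ t : ℤ, 0 ≤ t ∧ t ≤ 2 ∧ 3 * u k' + t ≠ a k' ∧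
        3 * u k' + t ≠ b k' := by
      by_contra! hc
      have h0 := hc 0 (by norm_num) (by norm_num)
      have h1 := hc 1 (by norm_num) (by norm_num)
      have h2 := hc 2 (by norm_num) (by norm_num)
      omega
    set w : Fin 2 → ℤ := fun l => if l = k then 3 * u l + (1 + σ) else 3 * u l + t with hw
    have hwk : w k = 3 * u k + (1 + σ) := by simp [hw]
    have hwk' : w k' = 3 * u k' + t := by simp [hw, hk']
    have h1 : Good ζ j w := by
      refine ha w (mem_kids.2 fun l => ?_) fun h => hta (by rw [← h, hwk'])
      rcases hkk l with rfl | rfl <;> omega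
    have hw' : ∀ l, (w + Pi.single k σ : Fin 2 → ℤ) l = w l + if l = k then σ else 0 := by
      intro l; by_cases h : l = k
      · subst h; simp
      · simp [h]
    have hu' : ∀ l, (u + Pi.single k σ : Fin 2 → ℤ) l = u l + if l = k then σ else 0 := by
      intro l; by_cases h : l = k
      · subst h; simp
      · simp [h]
    have h2 : Good ζ j (w + Pi.single k σ) := by
      refine hb _ (mem_kids.2 fun l => ?_) fun h => htb ?_
      · rw [hw', hu']
        rcases hkk l with rfl | rfl
        · rw [if_pos rfl]; omega
        · rw [if_neg hk']; omega
      · rw [← h, hw', if_neg hk', hwk', add_zero]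
    obtain ⟨x, hx, y, hy, hxy⟩ := ih h1 h2 (adj_add_single w k hσ)
    refine ⟨x, ⟨w, mem_kids.2 fun l => ?_, h1, hx⟩, y,
      ⟨w + Pi.single k σ, mem_kids.2 fun l => ?_, h2, hy⟩, hxy⟩
    · rcases hkk l with rfl | rfl <;> omega
    · rw [hw', hu']
      rcases hkk l with rfl | rfl
      · rw [if_pos rfl]; omega
      · rw [if_neg hk']; omega

/-- The nine subcells with one removed form a connected graph. -/
lemma conn_kids {u x y w₀ : Fin 2 → ℤ} (hx : x ∈ kids u) (hy : y ∈ kids u) (hx0 : x ≠ w₀)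
    (hy0 : y ≠ w₀) : Conn Adj {w | w ∈ kids u ∧ w ≠ w₀} x y := by
  obtain ⟨h, hh⟩ : ∃ h : Fin 2 → ℤ, ∀ k, 3 * u k ≤ h k ∧ h k ≤ 3 * u k + 2 ∧ h k ≠ w₀ k := by
    have : ∀ k, ∃ t, 3 * u k ≤ t ∧ t ≤ 3 * u k + 2 ∧ t ≠ w₀ k := by
      intro k
      by_cases hc : 3 * u k = w₀ k
      · exact ⟨3 * u k + 1, by omega, by omega, by omega⟩
      · exact ⟨3 * u k, by omega, by omega, hc⟩
    choose h hh using this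
    exact ⟨h, hh⟩
  have key : ∀ x ∈ kids u, x ≠ w₀ → Conn Adj {w | w ∈ kids u ∧ w ≠ w₀} x h := by
    intro x hx hx0
    obtain ⟨k, hk⟩ : ∃ k, x k ≠ w₀ k := by
      by_contra! hc; exact hx0 (funext hc)
    obtain ⟨k', hk'⟩ : ∃ k' : Fin 2, k' ≠ k := ⟨k + 1, by fin_cases k <;> decide⟩
    have hkk : ∀ l : Fin 2, l = k ∨ l = k' := eq_or_eq_of_ne hk'
    rw [mem_kids] at hx
    have line : ∀ (k k' : Fin 2) (a b : Fin 2 → ℤ), k' ≠ k → (∀ l : Fin 2, l = k ∨ l = k') →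
        a ∈ kids u → b ∈ kids u →
        a k = b k → a k ≠ w₀ k → Conn Adj {w | w ∈ kids u ∧ w ≠ w₀} a b := by
      intro k k' a b hk' hkk ha hb hab hak
      rw [mem_kids] at ha hb
      have hc : Conn Adj (Set.Icc (Function.update a k' (3 * u k'))
          (Function.update a k' (3 * u k' + 2))) a b := by
        refine conn_Icc ⟨fun l => ?_, fun l => ?_⟩ ⟨fun l => ?_, fun l => ?_⟩ <;>
        rcases hkk l with rfl | rfl
        · rw [Function.update_of_ne hk'.symm]
        · rw [Function.update_self]; exact (ha _).1
        · rw [Function.update_of_ne hk'.symm]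
        · rw [Function.update_self]; exact (ha _).2
        · rw [Function.update_of_ne hk'.symm]; exact hab.le
        · rw [Function.update_self]; exact (hb _).1
        · rw [Function.update_of_ne hk'.symm]; exact hab.ge
        · rw [Function.update_self]; exact (hb _).2
      refine hc.mono fun z hz => ?_
      have h1 : ∀ l, _ := hz.1
      have h2 : ∀ l, _ := hz.2
      have e1 := h1 k
      have e2 := h2 k
      have e3 := h1 k'
      have e4 := h2 k'
      rw [Function.update_of_ne hk'.symm] at e1 e2
      rw [Function.update_self] at e3 e4
      have hzk : z k = a k := le_antisymm e2 e1
      refine ⟨mem_kids.2 fun l => ?_, fun hz0 => hak (by rw [← hzk, hz0])⟩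
      rcases hkk l with rfl | rfl
      · rw [hzk]; exact ha _
      · exact ⟨e3, e4⟩
    have hy : Function.update x k' (h k') ∈ kids u := by
      rw [mem_kids]; intro l
      rcases hkk l with rfl | rfl
      · rw [Function.update_of_ne hk'.symm]; exact hx _
      · rw [Function.update_self]; exact ⟨(hh _).1, (hh _).2.1⟩
    refine (line k k' x _ hk' hkk (mem_kids.2 hx) hy ?_ hk).trans
      (line k' k _ h hk'.symm (fun l => (hkk l).symm) hy
        (mem_kids.2 fun l => ⟨(hh l).1, (hh l).2.1⟩) ?_ ?_)
    · rw [Function.update_of_ne hk'.symm]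
    · rw [Function.update_self]
    · rw [Function.update_self]; exact (hh _).2.2
  exact (key x hx hx0).trans ((key y hy hy0).symm adj_symm ⟨hy, hy0⟩)

lemma conn_core {ζ : (Fin 2 → ℤ) → Bool} {j : ℕ} {u x y : Fin 2 → ℤ} (hu : Good ζ j u)
    (hx : x ∈ core ζ j u) (hy : y ∈ core ζ j u) : Conn Adj (core ζ j u) x y := by
  induction j generalizing u x y with
  | zero =>
    obtain rfl : x = u := hx
    obtain rfl : y = x := hy
    exact Conn.refl
  | succ j ih =>
    obtain ⟨w₀, hw₀⟩ := hu
    have hsub : ∀ w ∈ kids u, Good ζ j w → core ζ j w ⊆ core ζ (j + 1) u :=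
      fun w hw hg z hz => ⟨w, hw, hg, hz⟩
    obtain ⟨a, ha, hga, hxa⟩ := hx
    obtain ⟨b, hb, hgb, hyb⟩ := hy
    have hab : Conn Adj {w | w ∈ kids u ∧ Good ζ j w} a b := by
      by_cases h : ∀ w ∈ kids u, Good ζ j w
      · exact (conn_Icc ha hb : Conn Adj (kids u) a b).mono fun w hw => ⟨hw, h w hw⟩
      · push Not at h
        obtain ⟨w, hw, hgw⟩ := h
        have : w = w₀ := by by_contra hc; exact hgw (hw₀ w hw hc)
        subst this
        refine (conn_kids ha hb (w₀ := w) (fun h => hgw (by rw [← h]; exact hga))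
          (fun h => hgw (by rw [← h]; exact hgb))).mono ?_
        exact fun w' hw' => ⟨hw'.1, hw₀ w' hw'.1 hw'.2⟩
    clear hb hgb
    induction hab generalizing y with
    | refl => exact (ih hga hxa hyb).mono (hsub a ha hga)
    | @tail c b' hac hcb ihc =>
      have hc : c ∈ {w | w ∈ kids u ∧ Good ζ j w} := Conn.mem hac ⟨ha, hga⟩
      obtain ⟨p, hp, p', hp', hpp⟩ := exists_adj_core hc.2 hcb.2.2 hcb.1
      have h1 := ihc hp
      have h2 := (ih hcb.2.2 hp' hyb).mono (hsub _ hcb.2.1 hcb.2.2)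
      exact (h1.tail hpp (hsub _ hcb.2.1 hcb.2.2 hp')).trans h2

end hierarchical

section connIn
variable {d : ℕ} {S T : Set (Fin d → ℤ)} {a b c : Fin d → ℤ}

/-- The event that `a` is joined to `b` by a path whose steps land on open sites of `S`. -/
def connIn (S : Set (Fin d → ℤ)) (a b : Fin d → ℤ) : Set ((Fin d → ℤ) → Bool) :=
  {ξ | Conn Adj {w | w ∈ S ∧ ξ w = true} a b}

lemma dep_connIn : Dep (connIn S a b) S := by
  intro ξ ξ' h
  have : {w | w ∈ S ∧ ξ w = true} = {w | w ∈ S ∧ ξ' w = true} := by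
    ext w
    simp only [Set.mem_ofPred_eq, and_congr_right_iff]
    intro hw; rw [h w hw]
  change Conn Adj _ a b ↔ Conn Adj _ a b
  rw [this]

lemma incr_connIn : Incr (connIn S a b) :=
  fun _ _ h hx => Conn.mono hx fun w hw => ⟨hw.1, h w hw.2⟩

lemma connIn_mono (h : S ⊆ T) : connIn S a b ⊆ connIn T a b :=
  fun _ hx => Conn.mono hx fun _ hw => ⟨h hw.1, hw.2⟩

lemma mul_pr_connIn_le {w : (Fin d → ℤ) → unitInterval} (hS : S.Finite) :
    pr w (connIn S a b) * pr w (connIn S b c) ≤ pr w (connIn S a c) :=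
  (harris hS dep_connIn dep_connIn incr_connIn incr_connIn).trans
    (pr_mono fun _ h => Conn.trans h.1 h.2)

end connIn

section coarse
variable {q : unitInterval}

lemma finite_cell (j : ℕ) (u : Fin 2 → ℤ) : (cell j u).Finite := Set.finite_Icc _ _

lemma pr_not_good_le (hq : 1 - (q : ℝ) ≤ 1 / 162) (j : ℕ) (u : Fin 2 → ℤ) :
    pr (fun _ => q) {ζ | ¬ Good ζ j u} ≤ 1 / 162 / 2 ^ j := by
  induction j generalizing u with
  | zero =>
    have : {ζ : (Fin 2 → ℤ) → Bool | ¬ Good ζ 0 u} = {ζ | ζ u = false} := by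
      ext ζ; simp [Good]
    rw [this, pr_site_false]
    simpa using hq
  | succ j ih =>
    classical
    set I : Finset (Fin 2 → ℤ) := Finset.Icc (fun k => 3 * u k) (fun k => 3 * u k + 2) with hI
    have hcard : I.card = 9 := by
      rw [hI, Pi.card_Icc, Fin.prod_univ_two, Int.card_Icc, Int.card_Icc]
      have : ∀ x : ℤ, (3 * x + 2 + 1 - 3 * x).toNat = 3 := fun x => by omega
      rw [this, this]; rfl
    have hsub : {ζ | ¬ Good ζ (j + 1) u} ⊆
        ⋃ p ∈ I.offDiag, {ζ | ¬ Good ζ j p.1} ∩ {ζ | ¬ Good ζ j p.2} := by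
      intro ζ hζ
      simp only [Set.mem_ofPred_eq, Good] at hζ
      push Not at hζ
      obtain ⟨w, hw, -, hgw⟩ := hζ 0
      obtain ⟨w', hw', hne, hgw'⟩ := hζ w
      simp only [Set.mem_iUnion]
      exact ⟨(w, w'), Finset.mem_offDiag.2 ⟨Finset.mem_Icc.2 hw, Finset.mem_Icc.2 hw', hne.symm⟩,
        hgw, hgw'⟩
    refine (pr_mono hsub).trans ((pr_biUnion_le _ _).trans ?_)
    calc ∑ p ∈ I.offDiag, pr (fun _ => q) ({ζ | ¬ Good ζ j p.1} ∩ {ζ | ¬ Good ζ j p.2})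
        ≤ ∑ p ∈ I.offDiag, (1 / 162 / 2 ^ j) * (1 / 162 / 2 ^ j : ℝ) := by
          refine Finset.sum_le_sum fun p hp => ?_
          have hi := pr_inter (w := fun _ => q) (dep_good j p.1).compl (dep_good j p.2).compl (finite_cell _ _)
            (finite_cell _ _) (disjoint_cell (j := j) (Finset.mem_offDiag.1 hp).2.2)
          exact hi.le.trans (mul_le_mul (ih _) (ih _) pr_nonneg (by positivity))
      _ = 72 * ((1 / 162 / 2 ^ j) * (1 / 162 / 2 ^ j)) := by
          rw [Finset.sum_const, Finset.offDiag_card, hcard]; norm_num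
      _ ≤ 1 / 162 / 2 ^ (j + 1) := by
          have h1 : (1 : ℝ) / 162 / 2 ^ j ≤ 1 / 162 := div_le_self (by norm_num) (one_le_pow₀ (by norm_num))
          have h2 : (0 : ℝ) ≤ 1 / 162 / 2 ^ j := by positivity
          rw [pow_succ, ← div_div]
          nlinarith

/-- The cell of level `j` containing `z`. -/
def anc (j : ℕ) (z : Fin 2 → ℤ) : Fin 2 → ℤ := fun k => z k / 3 ^ j

lemma mem_core_anc {ζ : (Fin 2 → ℤ) → Bool} {J : ℕ} {z : Fin 2 → ℤ}
    (h : ∀ j < J, Good ζ j (anc j z)) : z ∈ core ζ J (anc J z) := by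
  induction J with
  | zero =>
    have : z = anc 0 z := by funext k; simp [anc]
    exact this
  | succ J ih =>
    refine ⟨anc J z, mem_kids.2 fun k => ?_, h J J.lt_succ_self, ih fun j hj => h j (by omega)⟩
    have : z k / 3 ^ (J + 1) = z k / 3 ^ J / 3 := by
      rw [pow_succ, Int.ediv_ediv_of_nonneg (by positivity)]
    simp only [anc, this]
    omega

lemma pr_exists_not_good_le (hq : 1 - (q : ℝ) ≤ 1 / 162) (J : ℕ) (z : Fin 2 → ℤ) :
    pr (fun _ => q) {ζ | ∃ j < J + 1, ¬ Good ζ j (anc j z)} ≤ 1 / 81 := by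
  have hsub : {ζ : (Fin 2 → ℤ) → Bool | ∃ j < J + 1, ¬ Good ζ j (anc j z)} ⊆
      ⋃ j ∈ Finset.range (J + 1), {ζ | ¬ Good ζ j (anc j z)} := by
    rintro ζ ⟨j, hj, h⟩
    simp only [Set.mem_iUnion]
    exact ⟨j, Finset.mem_range.2 hj, h⟩
  refine (pr_mono hsub).trans ((pr_biUnion_le _ _).trans
    ((Finset.sum_le_sum fun j _ => pr_not_good_le hq j _).trans ?_))
  have : ∀ J : ℕ, ∑ j ∈ Finset.range J, (1 / 162 / 2 ^ j : ℝ) = 1 / 81 - 1 / 81 / 2 ^ J := by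
    intro J
    induction J with
    | zero => simp
    | succ J ih => rw [Finset.sum_range_succ, ih, pow_succ]; field_simp; ring
  rw [this]
  have : (0 : ℝ) ≤ 1 / 81 / 2 ^ (J + 1) := by positivity
  linarith

lemma half_le_pr_connIn_cell (hq : 1 - (q : ℝ) ≤ 1 / 162) (J : ℕ) {u z z' : Fin 2 → ℤ}
    (hz : anc J z = u) (hz' : anc J z' = u) :
    1 / 2 ≤ pr (fun _ => q) (connIn (cell J u) z z') := by
  have hsub : (connIn (cell J u) z z')ᶜ ⊆
      {ζ | ∃ j < J + 1, ¬ Good ζ j (anc j z)} ∪ {ζ | ∃ j < J + 1, ¬ Good ζ j (anc j z')} := by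
    intro ζ hζ
    by_contra hc
    rw [Set.mem_union, not_or] at hc
    obtain ⟨h1, h2⟩ := hc
    simp only [Set.mem_ofPred_eq] at h1 h2
    push Not at h1 h2
    have hu : Good ζ J u := hz ▸ h1 J J.lt_succ_self
    refine hζ ((conn_core hu ?_ ?_).mono (core_subset hu))
    · rw [← hz]; exact mem_core_anc fun j hj => h1 j (by omega)
    · rw [← hz']; exact mem_core_anc fun j hj => h2 j (by omega)
  have h1 := (pr_mono (w := fun _ => q) hsub).trans pr_union_le
  have h2 := pr_exists_not_good_le hq J z
  have h3 := pr_exists_not_good_le hq J z'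
  have h4 := one_le_pr_add_compl (w := fun _ => q) (A := connIn (cell J u) z z')
  linarith

lemma half_le_pr_connIn_window (hq : 1 - (q : ℝ) ≤ 1 / 162) (J : ℕ) {o z z' : Fin 2 → ℤ}
    (hz : ∀ k, o k ≤ z k ∧ z k ≤ o k + (3 ^ J - 1))
    (hz' : ∀ k, o k ≤ z' k ∧ z' k ≤ o k + (3 ^ J - 1)) :
    1 / 2 ≤ pr (fun _ => q) (connIn (Set.Icc o fun k => o k + (3 ^ J - 1)) z z') := by
  have ha : ∀ z : Fin 2 → ℤ, (∀ k, o k ≤ z k ∧ z k ≤ o k + (3 ^ J - 1)) → anc J (z - o) = 0 := by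
    intro z hz
    funext k
    have := hz k
    exact Int.ediv_eq_zero_of_lt (by simp; omega) (by simp; omega)
  refine (half_le_pr_connIn_cell hq J (ha z hz) (ha z' hz')).trans ?_
  rw [← pr_comp (fun _ => q) (fun x : Fin 2 → ℤ => x + o) (add_left_injective o)
    (dep_connIn.measurableSet (finite_cell _ _))]
  refine pr_mono fun ξ hξ => ?_
  have := Conn.map (adj' := Adj) (Q := {w | w ∈ Set.Icc o (fun k => o k + (3 ^ J - 1)) ∧ ξ w = true})
    (fun x => x + o) (fun a b h => h.add_right o) ?_ hξ
  · simp only [sub_add_cancel] at this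
    exact this
  · rintro x ⟨hx, hx'⟩
    rw [mem_cell] at hx
    refine ⟨⟨fun k => ?_, fun k => ?_⟩, hx'⟩
    · have := hx k; simp at this; simp; omega
    · have := hx k; simp at this; simp; omega

/-- The square `[0, N)²`. -/
noncomputable def sqr (N : ℤ) : Finset (Fin 2 → ℤ) := Finset.Icc 0 fun _ => N - 1

lemma mem_sqr {N : ℤ} {z : Fin 2 → ℤ} : z ∈ sqr N ↔ ∀ k, 0 ≤ z k ∧ z k ≤ N - 1 := by
  simp only [sqr, Finset.mem_Icc, Pi.le_def, forall_and, Pi.zero_apply]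

lemma sq_le_pr_connIn_sqr {N D : ℤ} {ρ : ℝ} (hρ : 0 ≤ ρ)
    (h : ∀ z ∈ sqr N, ∀ z' ∈ sqr N, (∀ k, |z' k - z k| ≤ D) →
      ρ ≤ pr (fun _ => q) (connIn (sqr N : Set (Fin 2 → ℤ)) z z')) :
    ∀ z ∈ sqr N, ∀ z' ∈ sqr N, (∀ k, |z' k - z k| ≤ 2 * D) →
      ρ * ρ ≤ pr (fun _ => q) (connIn (sqr N : Set (Fin 2 → ℤ)) z z') := by
  intro z hz z' hz' hD
  set m : Fin 2 → ℤ := fun k => (z k + z' k) / 2 with hm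
  have hmk : ∀ k, m k = (z k + z' k) / 2 := fun _ => rfl
  have hms : m ∈ sqr N := by
    rw [mem_sqr] at *
    intro k; have := hz k; have := hz' k; rw [hmk]; omega
  refine le_trans (mul_le_mul (h z hz m hms fun k => ?_) (h m hms z' hz' fun k => ?_) hρ pr_nonneg)
    (mul_pr_connIn_le (Finset.finite_toSet _))
  · have := hD k; rw [abs_le] at *; rw [hmk]; omega
  · have := hD k; rw [abs_le] at *; rw [hmk]; omega

theorem le_pr_connIn_sqr (hq : 1 - (q : ℝ) ≤ 1 / 162) {N : ℕ} (hN : 3 ≤ N) {z z' : Fin 2 → ℤ}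
    (hz : z ∈ sqr N) (hz' : z' ∈ sqr N) :
    1 / 16 ≤ pr (fun _ => q) (connIn (sqr N : Set (Fin 2 → ℤ)) z z') := by
  set J := Nat.log 3 N with hJ
  have h1 : 3 ^ J ≤ N := Nat.pow_log_le_self 3 (by omega)
  have h2 : N < 3 ^ (J + 1) := Nat.lt_pow_succ_log_self (by norm_num) N
  have hJ1 : 1 ≤ J := (Nat.le_log_iff_pow_le (by norm_num) (by omega)).2 (by simpa using hN)
  have h3 : 3 ^ 1 ≤ 3 ^ J := Nat.pow_le_pow_right (by norm_num) hJ1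
  rw [pow_succ] at h2
  obtain ⟨G, hG⟩ : ∃ G : ℤ, G = 3 ^ J := ⟨_, rfl⟩
  have h1' : G ≤ N := by rw [hG]; exact_mod_cast h1
  have h2' : (N : ℤ) < G * 3 := by rw [hG]; exact_mod_cast h2
  have h3' : 3 ≤ G := by rw [hG]; exact_mod_cast h3
  have base : ∀ z ∈ sqr N, ∀ z' ∈ sqr N, (∀ k, |z' k - z k| ≤ G - 1) →
      (1 / 2 : ℝ) ≤ pr (fun _ => q) (connIn (sqr N : Set (Fin 2 → ℤ)) z z') := by
    intro z hz z' hz' hD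
    rw [mem_sqr] at hz hz'
    set o : Fin 2 → ℤ := fun k => min (min (z k) (z' k)) (N - G) with ho
    have hok : ∀ k, o k = min (min (z k) (z' k)) (N - G) := fun _ => rfl
    refine (half_le_pr_connIn_window hq J (o := o) (fun k => ?_) fun k => ?_).trans
      (pr_mono (connIn_mono ?_))
    · have a1 := hz k; have a2 := hz' k; have a3 := hD k
      rw [abs_le] at a3; rw [← hG, hok]; omega
    · have a1 := hz k; have a2 := hz' k; have a3 := hD k
      rw [abs_le] at a3; rw [← hG, hok]; omega
    · rintro x ⟨hx1, hx2⟩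
      rw [Finset.mem_coe, mem_sqr]
      intro k
      have b1 : o k ≤ x k := hx1 k
      have b2 : x k ≤ o k + (3 ^ J - 1) := hx2 k
      have a1 := hz k; have a2 := hz' k; have a3 := hD k
      rw [abs_le] at a3
      rw [← hG] at b2
      rw [hok] at b1 b2; omega
  have s1 := sq_le_pr_connIn_sqr (by norm_num) base
  have s2 := sq_le_pr_connIn_sqr (by norm_num) s1
  refine le_trans (by norm_num) (s2 z hz z' hz' fun k => ?_)
  rw [mem_sqr] at hz hz'
  have a1 := hz k; have a2 := hz' k
  rw [abs_le]; omega

end coarse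

section flatten
variable {d : ℕ}

/-- A site is open in the flattened configuration when it is open in one of the first `r` layers. -/
def flat (r : ℕ) (ω : (Fin d → ℤ) × ℕ → Bool) (y : Fin d → ℤ) : Bool :=
  decide (∃ l < r, ω (y, l) = true)

lemma flat_eq_false {r : ℕ} {ω : (Fin d → ℤ) × ℕ → Bool} {y : Fin d → ℤ} :
    flat r ω y = false ↔ ∀ l < r, ω (y, l) = false := by
  simp [flat]

lemma dep_flat (r : ℕ) (y : Fin d → ℤ) (b : Bool) :
    Dep {ω | flat r ω y = b} (Prod.mk y '' Set.Iio r) := by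
  intro ω ω' h
  have : flat r ω y = flat r ω' y := by
    unfold flat
    congr 1
    refine propext (exists_congr fun l => and_congr_right fun hl => ?_)
    rw [h (y, l) ⟨l, hl, rfl⟩]
  change flat r ω y = b ↔ flat r ω' y = b
  rw [this]

lemma finite_flat_support (r : ℕ) (y : Fin d → ℤ) :
    (Prod.mk y '' Set.Iio r : Set ((Fin d → ℤ) × ℕ)).Finite := (Set.finite_Iio r).image _

lemma measurable_flat (r : ℕ) :
    Measurable (flat r : ((Fin d → ℤ) × ℕ → Bool) → (Fin d → ℤ) → Bool) :=
  measurable_pi_lambda _ fun y => measurable_to_bool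
    ((dep_flat r y true).measurableSet (finite_flat_support r y))

lemma pr_flat {p δ α : unitInterval} {r : ℕ}
    (h : 1 - (α : ℝ) = (1 - p) * (1 - δ) ^ r) (y : Fin d → ℤ) (b : Bool) :
    pr (layerWt d p δ) {ω | flat (r + 1) ω y = b} = if b then (α : ℝ) else 1 - α := by
  have hf : pr (layerWt d p δ) {ω | flat (r + 1) ω y = false} = 1 - α := by
    have : {ω : (Fin d → ℤ) × ℕ → Bool | flat (r + 1) ω y = false} =
        {ω | ∀ x ∈ (Finset.range (r + 1)).image (Prod.mk y), ω x = (fun _ => false) x} := by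
      ext ω; simp only [Set.mem_ofPred_eq, flat_eq_false]; simp
    rw [this, pr_cyl, Finset.prod_image (fun a _ b _ h => (Prod.mk.inj h).2)]
    simp only [layerWt_eq]
    rw [Finset.prod_range_succ']
    simp [h, mul_comm]
  cases b with
  | false => simpa using hf
  | true =>
    have h1 := pr_compl (w := layerWt d p δ) (dep_flat (r + 1) y false)
      (finite_flat_support (r + 1) y)
    have h2 : {ω : (Fin d → ℤ) × ℕ → Bool | flat (r + 1) ω y = false}ᶜ =
        {ω | flat (r + 1) ω y = true} := by
      ext ω; simp
    rw [h2, hf] at h1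
    simpa using h1

lemma map_flat {p δ α : unitInterval} {r : ℕ}
    (h : 1 - (α : ℝ) = (1 - p) * (1 - δ) ^ r) :
    (bern (layerWt d p δ)).map (flat (r + 1)) = bern fun _ => α := by
  have hm := measurable_flat (d := d) (r + 1)
  have := Measure.isProbabilityMeasure_map (μ := bern (layerWt d p δ)) hm.aemeasurable
  refine eq_bern _ _ fun F e => ?_
  rw [Measure.map_apply hm (measurableSet_cyl F e)]
  have h1 : flat (r + 1) ⁻¹' {ξ : (Fin d → ℤ) → Bool | ∀ x ∈ F, ξ x = e x} =
      ⋂ x ∈ F, {ω | flat (r + 1) ω x = e x} := by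
    ext ω; simp
  have h2 := pr_biInter (w := layerWt d p δ) F (fun x => {ω | flat (r + 1) ω x = e x}) _
    (fun x _ => finite_flat_support (r + 1) x) (fun x _ => dep_flat _ _ _) (by
      intro x _ y _ hxy
      rw [Set.disjoint_left]
      rintro _ ⟨l, _, rfl⟩ ⟨l', _, h⟩
      exact hxy (Prod.mk.inj h).1.symm)
  simp only [pr_flat h] at h2
  rw [h1, ← ofReal_measureReal]
  change ENNReal.ofReal (pr _ _) = _
  rw [h2, ENNReal.ofReal_prod_of_nonneg]
  · refine Finset.prod_congr rfl fun x _ => ?_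
    split_ifs <;> rfl
  · intro x _
    split_ifs
    · exact α.2.1
    · linarith [α.2.2]

lemma pr_flat_mem {p δ α : unitInterval} {r : ℕ}
    (h : 1 - (α : ℝ) = (1 - p) * (1 - δ) ^ r) {A : Set ((Fin d → ℤ) → Bool)}
    (hA : MeasurableSet A) :
    pr (layerWt d p δ) {ω | flat (r + 1) ω ∈ A} = pr (fun _ => α) A := by
  rw [pr, pr, Measure.real, Measure.real, ← map_flat h,
    Measure.map_apply (measurable_flat _) hA]
  rfl

/-- The event that the set `A` is joined to the set `B` inside `Λ`. -/
def joinEvent (Λ A B : Set (Fin d → ℤ)) : Set ((Fin d → ℤ) → Bool) :=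
  {ξ | ∃ x ∈ A, ∃ y ∈ B, ξ ∈ connIn Λ x y}

lemma dep_joinEvent (Λ A B : Set (Fin d → ℤ)) : Dep (joinEvent Λ A B) Λ := fun ξ ξ' h =>
  exists_congr fun _ => and_congr_right fun _ => exists_congr fun _ => and_congr_right fun _ =>
    dep_connIn ξ ξ' h

lemma incr_joinEvent (Λ A B : Set (Fin d → ℤ)) : Incr (joinEvent Λ A B) :=
  fun ξ ξ' h ⟨x, hx, y, hy, hc⟩ => ⟨x, hx, y, hy, incr_connIn ξ ξ' h hc⟩

lemma pr_reachEvent_eq {p δ α : unitInterval} {r : ℕ}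
    (h : 1 - (α : ℝ) = (1 - p) * (1 - δ) ^ r) {Λ : Set (Fin d → ℤ)} (hΛ : Λ.Finite)
    (Q R : Set (Fin d → ℤ)) :
    pr (layerWt d p δ) (reachEvent Λ Q (r + 1) R fun _ => 0) =
      pr (fun _ => α) (joinEvent Λ R Q) := by
  rw [← pr_flat_mem h ((dep_joinEvent Λ R Q).measurableSet hΛ)]
  congr 1
  ext ω
  have : availSet Λ (r + 1) (fun _ => 0) ω = {w | w ∈ Λ ∧ flat (r + 1) ω w = true} := by
    ext w
    simp [availSet, flat]
  simp only [reachEvent, joinEvent, connIn, Set.mem_ofPred_eq, this]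

lemma exists_layer_weight {p α : unitInterval} (hpα : (p : ℝ) < α) (hα : (α : ℝ) < 1) {r : ℕ}
    (hr : r ≠ 0) : ∃ δ : unitInterval, 0 < (δ : ℝ) ∧ 1 - (α : ℝ) = (1 - p) * (1 - δ) ^ r := by
  have hp1 : 0 < 1 - (p : ℝ) := by linarith
  set c := (1 - (α : ℝ)) / (1 - p) with hc
  have hc0 : 0 ≤ c := div_nonneg (by linarith) hp1.le
  have hc1 : c < 1 := (div_lt_one hp1).2 (by linarith)
  have hx0 : 0 ≤ c ^ ((r : ℝ)⁻¹) := Real.rpow_nonneg hc0 _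
  have hx : (c ^ ((r : ℝ)⁻¹)) ^ r = c := Real.rpow_inv_natCast_pow hc0 hr
  have hx1 : c ^ ((r : ℝ)⁻¹) < 1 := by
    by_contra! hge
    have := one_le_pow₀ hge (n := r)
    linarith
  refine ⟨⟨1 - c ^ ((r : ℝ)⁻¹), by linarith, by linarith⟩, by simpa using hx1, ?_⟩
  simp only [sub_sub_cancel, hx]
  rw [hc, mul_div_cancel₀ _ hp1.ne']

lemma one_le_ncard_ball : (ball (0 : Fin 2 → ℤ) 4).ncard ≠ 0 := by
  exact Set.ncard_ne_zero_of_mem (self_mem_ball 0 (by norm_num)) (finite_ball _ _)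

theorem exists_le_pr_joinEvent {α : unitInterval} (hα0 : 0 < (α : ℝ)) (hα1 : (α : ℝ) < 1)
    (hpc : pcrit d < α) : ∃ s : ℕ, 0 < s ∧ ∀ (o : Fin d → ℤ) (e : Fin 2 → Fin d)
      (Λ : Set (Fin d → ℤ)) (N : ℕ), Function.Injective e → Λ.Finite → 3 ≤ N →
      (∀ w ∈ sqr N, ball (emb o s e w) (4 * s) ⊆ Λ) → ∀ a ∈ sqr N, ∀ b ∈ sqr N,
      1 / 16 ≤ pr (fun _ => α) (joinEvent Λ (ball (emb o s e a) s) (ball (emb o s e b) s)) := by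
  obtain ⟨p, hp1, hp2⟩ := exists_between (max_lt hpc hα0)
  have hp0 : 0 < p := (le_max_right _ _).trans_lt hp1
  have hpI : p ∈ Set.Icc (0 : ℝ) 1 := ⟨hp0.le, by linarith⟩
  have hnot : p ∉ {p : ℝ | p ∈ Set.Icc (0 : ℝ) 1 ∧
      ∀ μ : Measure ((Fin d → ℤ) → Bool), IsBernoulliProduct d p μ → μ (Perc d) = 0} := by
    intro hmem
    have : p ≤ pcrit d := le_csSup ⟨1, fun x hx => hx.1.2⟩ hmem
    exact absurd (this.trans (le_max_left _ _)) hp1.not_ge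
  simp only [Set.mem_ofPred_eq, not_and] at hnot
  have hperc := hnot hpI
  push Not at hperc
  obtain ⟨ν, hν, hν0⟩ := hperc
  have hνp := hν.1
  rw [eq_bern (fun _ => ⟨p, hpI⟩) ν hν.2] at hν0
  obtain ⟨δ, hδ0, hδ⟩ := exists_layer_weight (p := ⟨p, hpI⟩) (α := α) hp2 hα1 one_le_ncard_ball
  obtain ⟨m, n, hmn, hstep⟩ := exists_pr_step_le ⟨p, hpI⟩ δ hp0 (by simpa using hp2.trans hα1) hδ0
    hν0 (show (0 : ℝ) < 1 / 162 by norm_num)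
  refine ⟨n + m + 1, by omega, fun o e Λ N he hΛ hN hsub a ha b hb => ?_⟩
  push_cast at hsub ⊢
  have hq : (1 - 1 / 162 : ℝ) ∈ Set.Icc (0 : ℝ) 1 := ⟨by norm_num, by norm_num⟩
  have h1 := coarse_conn_le ⟨p, hpI⟩ δ hmn he (q := ⟨1 - 1 / 162, hq⟩) rfl hstep hΛ hsub a b
  have h2 := le_pr_connIn_sqr (q := ⟨1 - 1 / 162, hq⟩) (by norm_num) hN ha hb
  have h3 := pr_reachEvent_eq hδ hΛ (ball (emb o (n + m + 1) e b) (n + m + 1))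
    (ball (emb o (n + m + 1) e a) m)
  refine (h2.trans (h1.trans h3.le)).trans (pr_mono ?_)
  rintro ξ ⟨x, hx, y, hy, hc⟩
  exact ⟨x, ball_mono _ (by omega) hx, y, hy, hc⟩

end flatten

section link
variable {d : ℕ}

/-- The event that every site of `Q` is open. -/
def allOpen (Q : Set (Fin d → ℤ)) : Set ((Fin d → ℤ) → Bool) := {ξ | ∀ x ∈ Q, ξ x = true}

lemma dep_allOpen (Q : Set (Fin d → ℤ)) : Dep (allOpen Q) Q := fun ξ ξ' h =>
  forall₂_congr fun x hx => by rw [h x hx]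

lemma incr_allOpen (Q : Set (Fin d → ℤ)) : Incr (allOpen Q) := fun _ _ h hξ x hx => h x (hξ x hx)

lemma le_pr_allOpen (α : unitInterval) {Q : Set (Fin d → ℤ)} {x : Fin d → ℤ} {r : ℕ}
    (hQ : Q ⊆ ball x r) : (α : ℝ) ^ (ball (0 : Fin d → ℤ) r).ncard ≤ pr (fun _ => α) (allOpen Q) := by
  have hf := (finite_ball x (r : ℤ)).subset hQ
  have : allOpen Q = {ξ | ∀ y ∈ hf.toFinset, ξ y = (fun _ => true) y} := by
    ext ξ; simp [allOpen]
  rw [this, pr_cyl]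
  simp only [if_true, Finset.prod_const]
  refine pow_le_pow_of_le_one α.2.1 α.2.2 ?_
  rw [← Set.ncard_eq_toFinset_card Q hf, ← ncard_ball x]
  exact Set.ncard_le_ncard hQ (finite_ball _ _)

lemma conn_open_box {a b x y z : Fin d → ℤ} {r : ℤ} {ξ : (Fin d → ℤ) → Bool}
    (hy : y ∈ Set.Icc a b) (hyx : y ∈ ball x r) (hz : z ∈ Set.Icc a b) (hzx : z ∈ ball x r)
    (h : ξ ∈ allOpen (Set.Icc a b ∩ ball x r)) : ξ ∈ connIn (Set.Icc a b) y z := by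
  have hc : Conn Adj (Set.Icc (fun k => max (a k) (x k - r)) fun k => min (b k) (x k + r)) y z := by
    rw [mem_ball] at hyx hzx
    refine conn_Icc ⟨fun k => ?_, fun k => ?_⟩ ⟨fun k => ?_, fun k => ?_⟩
    · have h1 := hy.1 k; have h2 := hyx k; rw [abs_le] at h2
      exact max_le h1 (by linarith)
    · have h1 := hy.2 k; have h2 := hyx k; rw [abs_le] at h2
      exact le_min h1 (by linarith)
    · have h1 := hz.1 k; have h2 := hzx k; rw [abs_le] at h2
      exact max_le h1 (by linarith)
    · have h1 := hz.2 k; have h2 := hzx k; rw [abs_le] at h2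
      exact le_min h1 (by linarith)
  refine Conn.mono hc fun w hw => ?_
  have h1 : w ∈ Set.Icc a b :=
    ⟨fun k => (le_max_left _ _).trans (hw.1 k), fun k => (hw.2 k).trans (min_le_left _ _)⟩
  refine ⟨h1, h w ⟨h1, mem_ball.2 fun k => ?_⟩⟩
  have h2 := (le_max_right _ _).trans (hw.1 k)
  have h3 := (hw.2 k).trans (min_le_right _ _)
  rw [abs_le]
  constructor <;> linarith

/-- Integer clamping to `[l, u]`. -/
def clamp (l u t : ℤ) : ℤ := max l (min u t)

variable {α : unitInterval} {s : ℕ}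

lemma le_pr_connIn_line (hs : 0 < s)
    (hjoin : ∀ (o : Fin d → ℤ) (e : Fin 2 → Fin d)
      (Λ : Set (Fin d → ℤ)) (N : ℕ), Function.Injective e → Λ.Finite → 3 ≤ N →
      (∀ w ∈ sqr N, ball (emb o s e w) (4 * s) ⊆ Λ) → ∀ a ∈ sqr N, ∀ b ∈ sqr N,
      1 / 16 ≤ pr (fun _ => α) (joinEvent Λ (ball (emb o s e a) s) (ball (emb o s e b) s)))
    {a b x y : Fin d → ℤ} {i₁ i₂ : Fin d} (hi : i₁ ≠ i₂) {W : ℤ} (hW : 10 * s ≤ W)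
    (h1 : b i₁ - a i₁ = W) (h2 : b i₂ - a i₂ = W) (hab : ∀ k, 8 * s ≤ b k - a k)
    (hx : x ∈ Set.Icc a b) (hy : y ∈ Set.Icc a b) (hxy : ∀ k, k ≠ i₁ → x k = y k) :
    ((α : ℝ) ^ (ball (0 : Fin d → ℤ) (6 * s : ℕ)).ncard) ^ 2 / 16 ≤
      pr (fun _ => α) (connIn (Set.Icc a b) x y) := by
  classical
  set e : Fin 2 → Fin d := ![i₁, i₂] with he
  have he0 : e 0 = i₁ := rfl
  have he1 : e 1 = i₂ := rfl
  have hinj : Function.Injective e := by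
    intro p q hpq
    fin_cases p <;> fin_cases q <;> simp_all
  have hs' : (0 : ℤ) < s := by exact_mod_cast hs
  obtain ⟨N, hN⟩ : ∃ N : ℕ, (N : ℤ) = (W - 8 * s) / s + 1 :=
    ⟨((W - 8 * s) / s + 1).toNat, Int.toNat_of_nonneg (by
      have : 0 ≤ (W - 8 * s) / s := Int.ediv_nonneg (by omega) hs'.le
      omega)⟩
  have hN1 : s * ((N : ℤ) - 1) ≤ W - 8 * s := by
    rw [hN, add_sub_cancel_right]; exact Int.mul_ediv_self_le hs'.ne'
  have hN2 : W - 8 * s < s * ((N : ℤ) - 1) + s := by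
    rw [hN, add_sub_cancel_right]; exact Int.lt_mul_ediv_self_add hs'
  have hN3 : 3 ≤ N := by
    by_contra hlt
    have : (N : ℤ) - 1 ≤ 1 := by omega
    nlinarith
  set o : Fin d → ℤ := fun k => if k = i₁ ∨ k = i₂ then a k + 4 * s
    else clamp (a k + 4 * s) (b k - 4 * s) (x k) with ho
  have ho1 : ∀ c : Fin 2, o (e c) = a (e c) + 4 * s := by
    intro c; fin_cases c <;> simp [ho, he]
  have hW' : ∀ c : Fin 2, b (e c) - a (e c) = W := by
    intro c; fin_cases c
    · exact h1
    · exact h2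
  have hne : ∀ k, (∀ c : Fin 2, k ≠ e c) → o k = clamp (a k + 4 * s) (b k - 4 * s) (x k) := by
    intro k hk
    have a1 := hk 0
    have a2 := hk 1
    rw [he0] at a1; rw [he1] at a2
    simp [ho, a1, a2]
  have hsub : ∀ w ∈ sqr N, ball (emb o s e w) (4 * s) ⊆ Set.Icc a b := by
    intro w hw z hz
    rw [mem_sqr] at hw
    rw [mem_ball] at hz
    have key : ∀ k, a k ≤ z k ∧ z k ≤ b k := by
      intro k
      have hzk := hz k
      rw [abs_le] at hzk
      by_cases hk : ∀ c, k ≠ e c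
      · rw [emb_ne o s w hk, hne k hk] at hzk
        have := hab k
        unfold clamp at hzk
        omega
      · push Not at hk
        obtain ⟨c, rfl⟩ := hk
        rw [emb_same o s hinj, ho1] at hzk
        have hwc := hw c
        have a1 : (s : ℤ) * w c ≤ s * (N - 1) := mul_le_mul_of_nonneg_left hwc.2 hs'.le
        have a2 : (0 : ℤ) ≤ s * w c := mul_nonneg hs'.le hwc.1
        have a3 := hW' c
        constructor <;> linarith
    exact ⟨fun k => (key k).1, fun k => (key k).2⟩
  have near : ∀ x' ∈ Set.Icc a b, (∀ k, k ≠ i₁ → x k = x' k) →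
      ∃ z ∈ sqr N, ball (emb o s e z) s ⊆ ball x' (6 * s : ℕ) := by
    intro x' hx' hxx'
    set z : Fin 2 → ℤ := fun c => clamp 0 (N - 1) ((x' (e c) - a (e c) - 4 * s) / s) with hz
    have hzc : ∀ c, z c = clamp 0 (N - 1) ((x' (e c) - a (e c) - 4 * s) / s) := fun _ => rfl
    refine ⟨z, mem_sqr.2 fun c => ?_, fun w hw => ?_⟩
    · rw [hzc]; unfold clamp; omega
    rw [mem_ball] at hw ⊢
    intro k
    have hwk := hw k
    have b1 : a k ≤ x' k := hx'.1 k
    have b2 : x' k ≤ b k := hx'.2 k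
    rw [abs_le] at hwk ⊢
    push_cast
    by_cases hk : ∀ c, k ≠ e c
    · rw [emb_ne o s z hk, hne k hk, hxx' k (hk 0)] at hwk
      have := hab k
      unfold clamp at hwk
      omega
    · push Not at hk
      obtain ⟨c, rfl⟩ := hk
      rw [emb_same o s hinj, ho1] at hwk
      set t := x' (e c) - a (e c) - 4 * s with ht
      have c1 : (s : ℤ) * (t / s) ≤ t := Int.mul_ediv_self_le hs'.ne'
      have c2 : t < s * (t / s) + s := Int.lt_mul_ediv_self_add hs'
      have c3 := hW' c
      have hzt : z c = clamp 0 (N - 1) (t / s) := hzc c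
      rcases lt_or_ge (t / s) 0 with h | h
      · have : z c = 0 := by rw [hzt]; unfold clamp; omega
        rw [this] at hwk
        have : t < 0 := by
          by_contra! h0
          exact absurd (Int.ediv_nonneg h0 hs'.le) (by omega)
        constructor <;> linarith
      · rcases le_or_gt (t / s) (N - 1) with h' | h'
        · have : z c = t / s := by rw [hzt]; unfold clamp; omega
          rw [this] at hwk
          constructor <;> linarith
        · have : z c = N - 1 := by rw [hzt]; unfold clamp; omega
          rw [this] at hwk
          have : (s : ℤ) * N ≤ s * (t / s) := mul_le_mul_of_nonneg_left (by omega) hs'.le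
          constructor <;> nlinarith
  obtain ⟨zx, hzx, hzx'⟩ := near x hx fun _ _ => rfl
  obtain ⟨zy, hzy, hzy'⟩ := near y hy hxy
  have hfin : (Set.Icc a b).Finite := Set.finite_Icc a b
  have hball : ∀ w ∈ sqr N, ball (emb o s e w) s ⊆ Set.Icc a b := fun w hw =>
    (ball_mono _ (by omega)).trans (hsub w hw)
  have hJ := hjoin o e (Set.Icc a b) N hinj hfin hN3 hsub zx hzx zy hzy
  set ρ := (α : ℝ) ^ (ball (0 : Fin d → ℤ) (6 * s : ℕ)).ncard with hρ
  have hρ0 : 0 ≤ ρ := pow_nonneg α.2.1 _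
  set Qx := Set.Icc a b ∩ ball x (6 * s : ℕ) with hQx
  set Qy := Set.Icc a b ∩ ball y (6 * s : ℕ) with hQy
  have hox : ρ ≤ pr (fun _ => α) (allOpen Qx) := le_pr_allOpen α Set.inter_subset_right
  have hoy : ρ ≤ pr (fun _ => α) (allOpen Qy) := le_pr_allOpen α Set.inter_subset_right
  have hd1 : Dep (allOpen Qx) (Set.Icc a b) := (dep_allOpen Qx).mono Set.inter_subset_left
  have hd2 : Dep (allOpen Qy) (Set.Icc a b) := (dep_allOpen Qy).mono Set.inter_subset_left
  have hh1 := harris (w := fun _ => α) hfin hd1 hd2 (incr_allOpen Qx) (incr_allOpen Qy)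
  have hh2 := harris (w := fun _ => α) hfin (hd1.inter hd2)
    (dep_joinEvent (Set.Icc a b) (ball (emb o s e zx) s) (ball (emb o s e zy) s))
    ((incr_allOpen Qx).inter (incr_allOpen Qy)) (incr_joinEvent _ _ _)
  have hq : ρ ^ 2 ≤ pr (fun _ => α) (allOpen Qx ∩ allOpen Qy) := by
    rw [sq]; exact (mul_le_mul hox hoy hρ0 pr_nonneg).trans hh1
  calc ρ ^ 2 / 16 = ρ ^ 2 * (1 / 16) := by ring
    _ ≤ _ := (mul_le_mul hq hJ (by norm_num) pr_nonneg).trans hh2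
    _ ≤ _ := pr_mono ?_
  rintro ξ ⟨⟨hξx, hξy⟩, x', hx', y', hy', hc⟩
  have c1 : ξ ∈ connIn (Set.Icc a b) x x' := conn_open_box hx (self_mem_ball _ (by positivity))
    (hball zx hzx hx') (hzx' hx') hξx
  have c2 : ξ ∈ connIn (Set.Icc a b) y' y := conn_open_box (hball zy hzy hy') (hzy' hy') hy
    (self_mem_ball _ (by positivity)) hξy
  exact (Conn.trans c1 hc).trans c2

lemma exists_ne_ne (hd : 3 ≤ d) (i j : Fin d) : ∃ k, k ≠ i ∧ k ≠ j := by
  by_contra! h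
  have : (Finset.univ : Finset (Fin d)) ⊆ {i, j} := by
    intro k _
    by_cases hk : k = i
    · simp [hk]
    · simp [h k hk]
  have h1 := Finset.card_le_card this
  have h2 := Finset.card_le_two (a := i) (b := j)
  rw [Finset.card_univ, Fintype.card_fin] at h1
  omega

/-- In slabs of bounded thickness, two points at the same height are connected with probability
bounded from below. -/
theorem exists_le_pr_connIn_slab (hd : 3 ≤ d) (hα0 : 0 < (α : ℝ)) (hα1 : (α : ℝ) < 1)
    (hpc : pcrit d < α) : ∃ (k₀ : ℕ) (c : ℝ), 0 < k₀ ∧ 0 < c ∧ c ≤ 1 ∧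
      ∀ (a b x y : Fin d → ℤ) (j : Fin d) (W : ℤ), 2 * k₀ ≤ W → (∀ k ≠ j, b k - a k = W) →
      k₀ ≤ b j - a j → x ∈ Set.Icc a b → y ∈ Set.Icc a b → x j = y j →
      c ≤ pr (fun _ => α) (connIn (Set.Icc a b) x y) := by
  classical
  obtain ⟨s, hs, hjoin⟩ := exists_le_pr_joinEvent hα0 hα1 hpc
  set c := ((α : ℝ) ^ (ball (0 : Fin d → ℤ) (6 * s : ℕ)).ncard) ^ 2 / 16 with hc
  have hc0 : 0 < c := by positivity
  have hc1 : c ≤ 1 := by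
    have h1 : (α : ℝ) ^ (ball (0 : Fin d → ℤ) (6 * s : ℕ)).ncard ≤ 1 := pow_le_one₀ hα0.le hα1.le
    have h2 : ((α : ℝ) ^ (ball (0 : Fin d → ℤ) (6 * s : ℕ)).ncard) ^ 2 ≤ 1 :=
      pow_le_one₀ (by positivity) h1
    rw [hc]; linarith
  refine ⟨8 * s, c ^ d, by omega, pow_pos hc0 _, pow_le_one₀ hc0.le hc1,
    fun a b x y j W hW hW' hj hx hy hxy => ?_⟩
  push_cast at hW hj
  have hmem : ∀ S : Finset (Fin d), S.piecewise y x ∈ Set.Icc a b := by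
    intro S
    refine ⟨fun k => ?_, fun k => ?_⟩ <;> by_cases hk : k ∈ S <;> simp only [Finset.piecewise, hk,
      if_true, if_false]
    exacts [hy.1 k, hx.1 k, hy.2 k, hx.2 k]
  have key : ∀ S : Finset (Fin d),
      c ^ S.card ≤ pr (fun _ => α) (connIn (Set.Icc a b) x (S.piecewise y x)) := by
    intro S
    induction S using Finset.induction_on with
    | empty =>
      have : connIn (Set.Icc a b) x ((∅ : Finset (Fin d)).piecewise y x) = Set.univ := by
        rw [Finset.piecewise_empty]
        exact Set.eq_univ_of_forall fun _ => Conn.refl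
      rw [this, pr_univ]; simp
    | insert i S hi ih =>
      rw [Finset.card_insert_of_notMem hi, pow_succ]
      by_cases hij : i = j
      · have : (insert i S).piecewise y x = S.piecewise y x := by
          funext k
          by_cases hk : k = i
          · subst hk; subst hij; simp [Finset.piecewise, hi, hxy]
          · simp [Finset.piecewise, hk]
        rw [this]
        exact (mul_le_of_le_one_right (pow_nonneg hc0.le _) hc1).trans ih
      · obtain ⟨i₂, h2, h3⟩ := exists_ne_ne hd i j
        refine (mul_le_mul ih (le_pr_connIn_line hs hjoin (W := W) h2.symm (by omega) (hW' i hij)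
          (hW' i₂ h3) (fun k => ?_) (hmem S) (hmem (insert i S)) fun k hk => ?_) hc0.le
          pr_nonneg).trans (mul_pr_connIn_le (Set.finite_Icc a b))
        · by_cases hk : k = j
          · subst hk; exact hj
          · rw [hW' k hk]; omega
        · simp [Finset.piecewise, hk]
  have := key Finset.univ
  rwa [Finset.card_univ, Fintype.card_fin, Finset.piecewise_univ] at this

end link

section sweep
variable {d : ℕ}

/-- The part of the ball `ball 0 M` below height `l` in direction `j`. -/
def lower (M : ℤ) (j : Fin d) (l : ℤ) : Set (Fin d → ℤ) := {x | x ∈ ball 0 M ∧ x j ≤ l}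

lemma finite_lower (M : ℤ) (j : Fin d) (l : ℤ) : (lower M j l).Finite :=
  (finite_ball 0 M).subset fun _ h => h.1

lemma lower_mono {M : ℤ} {j : Fin d} {l l' : ℤ} (h : l ≤ l') : lower M j l ⊆ lower M j l' :=
  fun _ hx => ⟨hx.1, hx.2.trans h⟩

/-- The sites of height exactly `l` reached from `u` below height `l`. -/
def topReach (M : ℤ) (j : Fin d) (l : ℤ) (u : Fin d → ℤ) (ξ : (Fin d → ℤ) → Bool) :
    Set (Fin d → ℤ) :=
  {u' | (u' ∈ lower M j l ∧ u' j = l) ∧ ξ ∈ connIn (lower M j l) u u'}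

/-- Both `u` and `v` reach height `l` but they are not connected below height `l`. -/
def splitEvent (M : ℤ) (j : Fin d) (u v : Fin d → ℤ) (l : ℤ) : Set ((Fin d → ℤ) → Bool) :=
  {ξ | ξ u = true ∧ ξ v = true ∧ (topReach M j l u ξ).Nonempty ∧ (topReach M j l v ξ).Nonempty ∧
    ξ ∉ connIn (lower M j l) u v}

variable {M : ℤ} {j : Fin d} {u v : Fin d → ℤ} {l l' : ℤ}

lemma topReach_congr {ξ ξ' : (Fin d → ℤ) → Bool} (h : ∀ x ∈ lower M j l, ξ x = ξ' x) :
    topReach M j l u ξ = topReach M j l u ξ' := by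
  ext u'
  exact and_congr_right fun _ => dep_connIn ξ ξ' h

lemma dep_splitEvent (hu : u ∈ lower M j l) (hv : v ∈ lower M j l) :
    Dep (splitEvent M j u v l) (lower M j l) := by
  intro ξ ξ' h
  have h1 : ξ ∈ connIn (lower M j l) u v ↔ ξ' ∈ connIn (lower M j l) u v := dep_connIn ξ ξ' h
  simp only [splitEvent, Set.mem_ofPred_eq, h u hu, h v hv, topReach_congr h, h1]

lemma topReach_nonempty {ξ : (Fin d → ℤ) → Bool} {S : Set (Fin d → ℤ)} {y : Fin d → ℤ}
    (hS : S ⊆ ball 0 M) (hu : u ∈ lower M j l) (hy : l ≤ y j) (h : ξ ∈ connIn S u y) :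
    (topReach M j l u ξ).Nonempty := by
  by_cases hul : u j = l
  · exact ⟨u, ⟨hu, hul⟩, Conn.refl⟩
  have hul : u j < l := lt_of_le_of_ne hu.2 hul
  obtain ⟨w, w', hw, hadj, hw', hw'P, hc⟩ : ∃ w w', w j ≤ l - 1 ∧ Adj w w' ∧ ¬ w' j ≤ l - 1 ∧
      (w' ∈ S ∧ ξ w' = true) ∧
      Conn Adj ({w | w ∈ S ∧ ξ w = true} ∩ {x | x j ≤ l - 1}) u w := by
    obtain ⟨w, hw, w', hw', hc, hadj, hP⟩ := Conn.first_exit (C := {x : Fin d → ℤ | x j ≤ l - 1})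
      (show u j ≤ l - 1 by omega) (show ¬ y j ≤ l - 1 by omega) h
    exact ⟨w, w', hw, hadj, hw', hP, hc⟩
  have h1 := hadj.abs_sub_le j
  rw [abs_le] at h1
  have hw'j : w' j = l := by omega
  have hlow : w' ∈ lower M j l := ⟨hS hw'P.1, hw'j.le⟩
  refine ⟨w', ⟨hlow, hw'j⟩, Conn.tail (Conn.mono hc ?_) hadj ⟨hlow, hw'P.2⟩⟩
  rintro x ⟨⟨hx1, hx2⟩, hx3⟩
  have hx3 : x j ≤ l - 1 := hx3
  exact ⟨⟨hS hx1, by omega⟩, hx2⟩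

lemma splitEvent_anti (hu : u ∈ lower M j l) (hv : v ∈ lower M j l) (h : l ≤ l') :
    splitEvent M j u v l' ⊆ splitEvent M j u v l := by
  rintro ξ ⟨h1, h2, ⟨u', hu', hcu⟩, ⟨v', hv', hcv⟩, hn⟩
  refine ⟨h1, h2, topReach_nonempty (fun x hx => hx.1) hu (by rw [hu'.2]; exact h) hcu,
    topReach_nonempty (fun x hx => hx.1) hv (by rw [hv'.2]; exact h) hcv,
    fun hc => hn (connIn_mono (lower_mono h) hc)⟩

/-- The slab of heights `l + 1, …, l + 1 + k`. -/
def slab (M : ℤ) (j : Fin d) (l k : ℤ) : Set (Fin d → ℤ) :=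
  Set.Icc (Function.update (fun _ => -M) j l) (Function.update (fun _ => M) j (l + k))

lemma mem_slab {k : ℤ} {x : Fin d → ℤ} :
    x ∈ slab M j l k ↔ (∀ i ≠ j, -M ≤ x i ∧ x i ≤ M) ∧ l ≤ x j ∧ x j ≤ l + k := by
  constructor
  · rintro ⟨h1, h2⟩
    refine ⟨fun i hi => ?_, ?_⟩
    · have a1 := h1 i; have a2 := h2 i
      rw [Function.update_of_ne hi] at a1 a2
      exact ⟨a1, a2⟩
    · have a1 := h1 j; have a2 := h2 j
      rw [Function.update_self] at a1 a2
      exact ⟨a1, a2⟩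
  · rintro ⟨h1, h2⟩
    refine ⟨fun i => ?_, fun i => ?_⟩ <;> by_cases hi : i = j
    · subst hi; rw [Function.update_self]; exact h2.1
    · rw [Function.update_of_ne hi]; exact (h1 i hi).1
    · subst hi; rw [Function.update_self]; exact h2.2
    · rw [Function.update_of_ne hi]; exact (h1 i hi).2

lemma finite_slab {k : ℤ} : (slab M j l k).Finite := Set.finite_Icc _ _

lemma slab_subset {k : ℤ} (hl : -M ≤ l) (hk : l + k ≤ M) : slab M j l k ⊆ ball 0 M := by
  intro x hx
  rw [mem_slab] at hx
  rw [mem_ball]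
  intro i
  rw [Pi.zero_apply, sub_zero, abs_le]
  by_cases hi : i = j
  · subst hi; omega
  · exact hx.1 i hi

variable {α : unitInterval} {k₀ : ℕ} {c : ℝ}

lemma le_pr_connIn_slab
    (hslab : ∀ (a b x y : Fin d → ℤ) (j : Fin d) (W : ℤ), 2 * k₀ ≤ W → (∀ k ≠ j, b k - a k = W) →
      k₀ ≤ b j - a j → x ∈ Set.Icc a b → y ∈ Set.Icc a b → x j = y j →
      c ≤ pr (fun _ => α) (connIn (Set.Icc a b) x y))
    (hM : k₀ ≤ M) {x y : Fin d → ℤ} (hx : x ∈ slab M j l k₀) (hy : y ∈ slab M j l k₀)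
    (hxy : x j = y j) : c ≤ pr (fun _ => α) (connIn (slab M j l k₀) x y) := by
  refine hslab _ _ x y j (2 * M) (by omega) (fun k hk => ?_) ?_ hx hy hxy
  · rw [Function.update_of_ne hk, Function.update_of_ne hk]; ring
  · rw [Function.update_self, Function.update_self]; omega

/-- Both endpoints are open and they are connected. -/
def linkEvent (S : Set (Fin d → ℤ)) (x y : Fin d → ℤ) : Set ((Fin d → ℤ) → Bool) :=
  ({ξ | ξ x = true} ∩ {ξ | ξ y = true}) ∩ connIn S x y

lemma incr_site (x : Fin d → ℤ) : Incr {ξ : (Fin d → ℤ) → Bool | ξ x = true} :=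
  fun _ _ h hx => h x hx

lemma dep_linkEvent {S : Set (Fin d → ℤ)} {x y : Fin d → ℤ} (hx : x ∈ S) (hy : y ∈ S) :
    Dep (linkEvent S x y) S :=
  (((dep_site x true).mono (by simpa using hx)).inter
    ((dep_site y true).mono (by simpa using hy))).inter dep_connIn

lemma le_pr_linkEvent {S : Set (Fin d → ℤ)} (hS : S.Finite) {x y : Fin d → ℤ} (hx : x ∈ S)
    (hy : y ∈ S) (hc0 : 0 ≤ c) (hc : c ≤ pr (fun _ => α) (connIn S x y)) :
    (α : ℝ) ^ 2 * c ≤ pr (fun _ => α) (linkEvent S x y) := by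
  have hdx : Dep {ξ : (Fin d → ℤ) → Bool | ξ x = true} S :=
    (dep_site x true).mono (by simpa using hx)
  have hdy : Dep {ξ : (Fin d → ℤ) → Bool | ξ y = true} S :=
    (dep_site y true).mono (by simpa using hy)
  have h1 := harris (w := fun _ => α) hS hdx hdy (incr_site x) (incr_site y)
  have h2 := harris (w := fun _ => α) hS (hdx.inter hdy) dep_connIn
    ((incr_site x).inter (incr_site y)) (incr_connIn (S := S) (a := x) (b := y))
  rw [pr_site, pr_site] at h1
  refine le_trans ?_ h2
  rw [sq]
  exact mul_le_mul h1 hc hc0 pr_nonneg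

lemma pr_splitEvent_succ_le
    (hslab : ∀ (a b x y : Fin d → ℤ) (j : Fin d) (W : ℤ), 2 * k₀ ≤ W → (∀ k ≠ j, b k - a k = W) →
      k₀ ≤ b j - a j → x ∈ Set.Icc a b → y ∈ Set.Icc a b → x j = y j →
      c ≤ pr (fun _ => α) (connIn (Set.Icc a b) x y))
    (hc0 : 0 ≤ c) (hM : k₀ ≤ M) (hu : u ∈ lower M j l) (hv : v ∈ lower M j l)
    (hl : l + (k₀ + 1) ≤ M) :
    pr (fun _ => α) (splitEvent M j u v (l + (k₀ + 1))) ≤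
      (1 - (α : ℝ) ^ 2 * c) * pr (fun _ => α) (splitEvent M j u v l) := by
  classical
  have hlM : -M ≤ l := by
    have := mem_ball.1 hu.1 j
    rw [Pi.zero_apply, sub_zero, abs_le] at this
    exact this.1.trans hu.2
  set F : Set (Fin d → ℤ) := {x | x ∈ lower M j l ∧ x j = l} with hF
  have hFfin : F.Finite := (finite_lower M j l).subset fun _ h => h.1
  set pick : Set (Fin d → ℤ) → (Fin d → ℤ) := fun S => Classical.epsilon (· ∈ S) with hpick
  have pick_mem : ∀ S : Set (Fin d → ℤ), S.Nonempty → pick S ∈ S :=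
    fun S hS => Classical.epsilon_spec hS
  set B : (Fin d → ℤ) × (Fin d → ℤ) → Set ((Fin d → ℤ) → Bool) := fun q =>
    splitEvent M j u v l ∩ {ξ | pick (topReach M j l u ξ) = q.1 ∧ pick (topReach M j l v ξ) = q.2}
    with hB
  set up : (Fin d → ℤ) → (Fin d → ℤ) := fun x => x + Pi.single j 1 with hup
  set E : (Fin d → ℤ) × (Fin d → ℤ) → Set ((Fin d → ℤ) → Bool) := fun q =>
    (linkEvent (slab M j (l + 1) k₀) (up q.1) (up q.2))ᶜ with hE
  set I := hFfin.toFinset ×ˢ hFfin.toFinset with hI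
  have hImem : ∀ q ∈ I, q.1 ∈ F ∧ q.2 ∈ F := by
    intro q hq
    simpa [hI] using hq
  have hupj : ∀ x, up x j = x j + 1 := fun x => by simp [hup]
  have hupslab : ∀ x ∈ F, up x ∈ slab M j (l + 1) k₀ := by
    intro x hx
    rw [mem_slab, hupj, hx.2]
    refine ⟨fun i hi => ?_, le_rfl, by omega⟩
    have := mem_ball.1 hx.1.1 i
    rw [Pi.zero_apply, sub_zero, abs_le] at this
    simpa [hup, hi] using this
  have main : splitEvent M j u v (l + (k₀ + 1)) ⊆ ⋃ q ∈ I, B q ∩ E q := by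
    intro ξ hξ
    have h0 : ξ ∈ splitEvent M j u v l := splitEvent_anti hu hv (by omega) hξ
    have hu' := pick_mem _ h0.2.2.1
    have hv' := pick_mem _ h0.2.2.2.1
    set u' := pick (topReach M j l u ξ) with hu'e
    set v' := pick (topReach M j l v ξ) with hv'e
    simp only [Set.mem_iUnion]
    refine ⟨(u', v'), ?_, ⟨h0, rfl, rfl⟩, ?_⟩
    · simp only [hI, Finset.mem_product, Set.Finite.mem_toFinset]
      exact ⟨hu'.1, hv'.1⟩
    · rintro ⟨⟨hx, hy⟩, hc⟩
      refine hξ.2.2.2.2 ?_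
      have hlow : lower M j l ⊆ lower M j (l + (k₀ + 1)) := lower_mono (by omega)
      have hsl : slab M j (l + 1) k₀ ⊆ lower M j (l + (k₀ + 1)) := fun x hx =>
        ⟨slab_subset (by omega) (by omega) hx, by rw [mem_slab] at hx; omega⟩
      have hx : ξ (up u') = true := hx
      have hy : ξ (up v') = true := hy
      have hξv : ξ v = true := hξ.2.1
      have c1 : ξ ∈ connIn (lower M j (l + (k₀ + 1))) u u' := connIn_mono hlow hu'.2
      have c2 : ξ ∈ connIn (lower M j (l + (k₀ + 1))) v v' := connIn_mono hlow hv'.2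
      have c3 : ξ ∈ connIn (lower M j (l + (k₀ + 1))) (up u') (up v') := connIn_mono hsl hc
      have hPv : v ∈ {w | w ∈ lower M j (l + (k₀ + 1)) ∧ ξ w = true} := ⟨hlow hv, hξv⟩
      have a1 : Adj u' (up u') := adj_add_single u' j (Or.inl rfl)
      have a2 : Adj v' (up v') := adj_add_single v' j (Or.inl rfl)
      have c4 := (Conn.tail c1 a1 ⟨hsl (hupslab u' hu'.1), hx⟩).trans c3
      have c5 := Conn.symm adj_symm hPv
        (Conn.tail c2 a2 ⟨hsl (hupslab v' hv'.1), hy⟩)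
      exact c4.trans c5
  refine (pr_mono main).trans ((pr_biUnion_inter_le I B E (fun _ => lower M j l)
    (fun _ => slab M j (l + 1) k₀) (1 - (α : ℝ) ^ 2 * c) ?_ (fun _ _ => finite_lower M j l)
    (fun _ _ => finite_slab) ?_ ?_ ?_ ?_).trans (mul_le_mul_of_nonneg_left (pr_mono ?_) ?_))
  · intro q _ q' _ hq
    rw [Set.disjoint_left]
    rintro ξ ⟨_, h1, h2⟩ ⟨_, h3, h4⟩
    exact hq (Prod.ext (h1.symm.trans h3) (h2.symm.trans h4))
  · intro q _
    refine (dep_splitEvent hu hv).inter fun ξ ξ' h => ?_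
    simp only [Set.mem_ofPred_eq, topReach_congr h]
  · intro q hq
    exact (dep_linkEvent (hupslab _ (hImem q hq).1) (hupslab _ (hImem q hq).2)).compl
  · intro q _
    rw [Set.disjoint_left]
    intro x hx hx'
    rw [mem_slab] at hx'
    have := hx.2
    omega
  · intro q hq
    have h1 := hupslab _ (hImem q hq).1
    have h2 := hupslab _ (hImem q hq).2
    rw [hE, pr_compl (dep_linkEvent h1 h2) finite_slab]
    have := le_pr_linkEvent (α := α) finite_slab h1 h2 hc0 (le_pr_connIn_slab hslab hM h1 h2 (by
      rw [hupj, hupj, (hImem q hq).1.2, (hImem q hq).2.2]))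
    linarith
  · intro ξ hξ
    simp only [Set.mem_iUnion] at hξ
    obtain ⟨q, _, h, _⟩ := hξ
    exact h
  · have hM0 : 0 ≤ M := by omega
    have hx : up (Function.update 0 j l) ∈ slab M j (l + 1) k₀ := by
      refine hupslab _ ⟨⟨mem_ball.2 fun i => ?_, by simp⟩, by simp⟩
      rw [Pi.zero_apply, sub_zero, abs_le]
      by_cases hi : i = j
      · subst hi; rw [Function.update_self]; omega
      · rw [Function.update_of_ne hi, Pi.zero_apply]; omega
    have h2 := le_pr_linkEvent (α := α) finite_slab hx hx hc0 (le_pr_connIn_slab hslab hM hx hx rfl)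
    linarith [pr_le_one (w := fun _ : Fin d → ℤ => α)
      (A := linkEvent (slab M j (l + 1) k₀) (up (Function.update 0 j l)) (up (Function.update 0 j l)))]

lemma pr_splitEvent_le
    (hslab : ∀ (a b x y : Fin d → ℤ) (j : Fin d) (W : ℤ), 2 * k₀ ≤ W → (∀ k ≠ j, b k - a k = W) →
      k₀ ≤ b j - a j → x ∈ Set.Icc a b → y ∈ Set.Icc a b → x j = y j →
      c ≤ pr (fun _ => α) (connIn (Set.Icc a b) x y))
    (hc0 : 0 ≤ c) (hc1 : c ≤ 1) (hM : k₀ ≤ M) (hu : u ∈ lower M j l) (hv : v ∈ lower M j l) (i : ℕ)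
    (hl : l + i * (k₀ + 1) ≤ M) :
    pr (fun _ => α) (splitEvent M j u v (l + i * (k₀ + 1))) ≤ (1 - (α : ℝ) ^ 2 * c) ^ i := by
  induction i with
  | zero => simpa using pr_le_one
  | succ i ih =>
    push_cast at hl ⊢
    have h0 : (0 : ℤ) ≤ i * (k₀ + 1) := by positivity
    have e : l + ((i : ℤ) + 1) * (k₀ + 1) = l + i * (k₀ + 1) + (k₀ + 1) := by ring
    rw [e] at hl ⊢
    have hsub : lower M j l ⊆ lower M j (l + i * (k₀ + 1)) := lower_mono (by omega)
    refine (pr_splitEvent_succ_le hslab hc0 hM (hsub hu) (hsub hv) hl).trans ?_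
    rw [pow_succ, mul_comm]
    refine mul_le_mul_of_nonneg_right (ih (by omega)) ?_
    have : (α : ℝ) ^ 2 ≤ 1 := pow_le_one₀ α.2.1 α.2.2
    nlinarith [sq_nonneg (α : ℝ)]

end sweep

section cluster
variable {d : ℕ} {M : ℕ} {ξ : (Fin d → ℤ) → Bool}

lemma box_zero_eq (M : ℕ) : box (0 : Fin d → ℤ) M = ball 0 M := by
  ext y
  simp only [box, normInf, Set.mem_ofPred_eq, Finset.sup_le_iff, mem_ball, sub_zero,
    Finset.mem_univ, true_imp_iff]
  refine forall_congr' fun i => ?_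
  rw [Pi.zero_apply, sub_zero, Int.abs_eq_natAbs, Nat.cast_le]

lemma openConnIn_iff {S : Set (Fin d → ℤ)} {x y : Fin d → ℤ} :
    openConnIn d S ξ x y ↔ (x ∈ S ∧ ξ x = true) ∧ ξ ∈ connIn S x y := by
  constructor
  · rintro ⟨n, γ, rfl, rfl, h1, h2⟩
    refine ⟨h1 0 (Nat.zero_le _), ?_⟩
    have : ∀ i ≤ n, ξ ∈ connIn S (γ 0) (γ i) := by
      intro i
      induction i with
      | zero => exact fun _ => Conn.refl
      | succ i ih => exact fun hi => Conn.tail (ih (by omega)) (h2 i (by omega)) (h1 _ hi)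
    exact this n le_rfl
  · rintro ⟨hx, h⟩
    change Relation.ReflTransGen _ x y at h
    induction h with
    | refl => exact ⟨0, fun _ => x, rfl, rfl, fun _ _ => hx, fun i hi => absurd hi (by omega)⟩
    | @tail b c _ hbc ih =>
      obtain ⟨n, γ, h0, hn, h1, h2⟩ := ih
      refine ⟨n + 1, fun i => if i ≤ n then γ i else c, by simpa using h0, by simp,
        fun i hi => ?_, fun i hi => ?_⟩
      · by_cases hin : i ≤ n
        · simpa only [if_pos hin] using h1 i hin
        · simp only [if_neg hin]; exact hbc.2
      · by_cases hin : i + 1 ≤ n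
        · simpa only [if_pos hin, if_pos (show i ≤ n by omega)] using h2 i hin
        · obtain rfl : i = n := by omega
          simp only [if_neg hin, if_pos le_rfl]
          rw [hn]
          exact hbc.1

/-- Two open sites that each lead to the height `M` above the higher of them without being
connected to each other. -/
def badSplit (M : ℕ) (j : Fin d) (u v : Fin d → ℤ) : Set ((Fin d → ℤ) → Bool) :=
  {ξ | ξ u = true ∧ ξ v = true ∧ max (u j) (v j) ≤ 0 ∧
    (∃ y, ξ ∈ connIn (ball 0 M) u y ∧ max (u j) (v j) + M ≤ y j) ∧
    (∃ y, ξ ∈ connIn (ball 0 M) v y ∧ max (u j) (v j) + M ≤ y j) ∧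
    ξ ∉ connIn (ball 0 M) u v}

/-- There is an open path crossing the ball between opposite faces in the directions `i₀`
and `j`. -/
def crossEvent (M : ℕ) (i₀ j : Fin d) : Set ((Fin d → ℤ) → Bool) :=
  {ξ | ∃ x y, x ∈ ball 0 M ∧ ξ x = true ∧ ξ ∈ connIn (ball 0 M) x y ∧
    x j = -M ∧ y j = M ∧ x i₀ = -M ∧ y i₀ = M}

lemma specialEvent_of_forall (hM : 1 ≤ M) (i₀ : Fin d)
    (hsplit : ∀ j, ∀ u ∈ ball 0 M, ∀ v ∈ ball 0 M, ξ ∉ badSplit M j u v)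
    (hcross : ∀ j, ξ ∈ crossEvent M i₀ j) : SpecialEvent d 0 M ξ := by
  set P : Set (Fin d → ℤ) := {w | w ∈ ball 0 M ∧ ξ w = true} with hP
  have merge : ∀ j, ∀ u ∈ P, ∀ v ∈ P, max (u j) (v j) ≤ 0 →
      (∃ y, Conn Adj P u y ∧ max (u j) (v j) + M ≤ y j) →
      (∃ y, Conn Adj P v y ∧ max (u j) (v j) + M ≤ y j) → Conn Adj P u v := by
    intro j u hu v hv h1 h2 h3
    by_contra h4
    exact hsplit j u hu.1 v hv.1 ⟨hu.2, hv.2, h1, h2, h3, h4⟩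
  have cross : ∀ j, ∃ x y, x ∈ P ∧ Conn Adj P x y ∧ x j = -M ∧ y j = M ∧ x i₀ = -M ∧ y i₀ = M := by
    intro j
    obtain ⟨x, y, h1, h2, h3, h4⟩ := hcross j
    exact ⟨x, y, ⟨h1, h2⟩, h3, h4⟩
  choose X Y hX hXY hXm hYm hX0 hY0 using cross
  have symm : ∀ {a b}, a ∈ P → Conn Adj P a b → Conn Adj P b a :=
    fun ha h => Conn.symm adj_symm ha h
  have all : ∀ j, Conn Adj P (X i₀) (X j) := by
    intro j
    refine merge i₀ _ (hX i₀) _ (hX j) ?_ ⟨Y i₀, hXY i₀, ?_⟩ ⟨Y j, hXY j, ?_⟩ <;>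
      simp only [hX0, hY0, max_self] <;> omega
  have mem : ∀ {x y}, x ∈ P → (openConnIn d (box 0 M) ξ x y ↔ Conn Adj P x y) := by
    intro x y hx
    rw [box_zero_eq, openConnIn_iff]
    exact ⟨fun h => h.2, fun h => ⟨hx, h⟩⟩
  refine ⟨{y | openConnIn d (box 0 M) ξ (X i₀) y}, ⟨X i₀, ?_, (hX i₀).2, rfl⟩, ?_, ?_, ?_⟩
  · rw [box_zero_eq]; exact (hX i₀).1
  · refine ⟨X i₀, (mem (hX i₀)).2 Conn.refl, Y i₀, (mem (hX i₀)).2 (hXY i₀), ?_⟩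
    refine le_trans ?_ (Finset.le_sup (f := fun i => ((X i₀ - Y i₀) i).natAbs) (Finset.mem_univ i₀))
    simp only [Pi.sub_apply, hX0, hY0]
    omega
  · rintro j ε (rfl | rfl)
    · exact ⟨Y j, (mem (hX i₀)).2 ((all j).trans (hXY j)), by simp [hYm]⟩
    · exact ⟨X j, (mem (hX i₀)).2 (all j), by simp [hXm]⟩
  · rintro C' ⟨x, hx, hξx, rfl⟩ ⟨u, hu, v, hv, huv⟩
    have hxP : x ∈ P := ⟨by rwa [← box_zero_eq], hξx⟩
    have hu : Conn Adj P x u := (mem hxP).1 hu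
    have hv : Conn Adj P x v := (mem hxP).1 hv
    have huP : u ∈ P := Conn.mem hu hxP
    have hvP : v ∈ P := Conn.mem hv hxP
    have key : ∀ j, ∀ a ∈ P, ∀ b ∈ P, Conn Adj P a b → a j + M ≤ b j → Conn Adj P (X i₀) a := by
      intro j a ha b hb hab hle
      have h1 := mem_ball.1 ha.1 j
      have h2 := mem_ball.1 hb.1 j
      rw [Pi.zero_apply, sub_zero, abs_le] at h1 h2
      have hmax : max (a j) (X j j) = a j := max_eq_left (by rw [hXm]; exact h1.1)
      refine (all j).trans (symm ha (merge j a ha _ (hX j) ?_ ⟨b, hab, ?_⟩ ⟨Y j, hXY j, ?_⟩))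
      · rw [hmax]; omega
      · rw [hmax]; exact hle
      · rw [hmax, hYm]; omega
    have hXx : Conn Adj P (X i₀) x := by
      obtain ⟨j, -, hj⟩ := (Finset.le_sup_iff (show (⊥ : ℕ) < M from hM)).1 huv
      simp only [Pi.sub_apply] at hj
      rcases le_total (u j) (v j) with h | h
      · exact (key j u huP v hvP ((symm hxP hu).trans hv) (by omega)).trans (symm hxP hu)
      · exact (key j v hvP u huP ((symm hxP hv).trans hu) (by omega)).trans (symm hxP hv)
    ext y
    change openConnIn d (box 0 M) ξ x y ↔ openConnIn d (box 0 M) ξ (X i₀) y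
    rw [mem hxP, mem (hX i₀)]
    exact ⟨fun h => hXx.trans h, fun h => (symm (hX i₀) hXx).trans h⟩

end cluster

section limit
variable {d : ℕ} {M : ℕ} {α : unitInterval} {k₀ : ℕ} {c : ℝ}

lemma pr_badSplit_le
    (hslab : ∀ (a b x y : Fin d → ℤ) (j : Fin d) (W : ℤ), 2 * k₀ ≤ W → (∀ k ≠ j, b k - a k = W) →
      k₀ ≤ b j - a j → x ∈ Set.Icc a b → y ∈ Set.Icc a b → x j = y j →
      c ≤ pr (fun _ => α) (connIn (Set.Icc a b) x y))
    (hc0 : 0 ≤ c) (hc1 : c ≤ 1) (hM : k₀ ≤ M) (j : Fin d) {u v : Fin d → ℤ}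
    (hu : u ∈ ball 0 M) (hv : v ∈ ball 0 M) :
    pr (fun _ => α) (badSplit M j u v) ≤ (1 - (α : ℝ) ^ 2 * c) ^ (M / (k₀ + 1)) := by
  have hα2 : (α : ℝ) ^ 2 ≤ 1 := pow_le_one₀ α.2.1 α.2.2
  have hbase : 0 ≤ 1 - (α : ℝ) ^ 2 * c := by nlinarith [sq_nonneg (α : ℝ)]
  by_cases hmax : max (u j) (v j) ≤ 0
  · set l : ℤ := max (u j) (v j) with hl
    have hdiv : ((M / (k₀ + 1) : ℕ) : ℤ) * (k₀ + 1) ≤ M := by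
      exact_mod_cast Nat.div_mul_le_self M (k₀ + 1)
    have hdiv0 : (0 : ℤ) ≤ ((M / (k₀ + 1) : ℕ) : ℤ) * (k₀ + 1) := by positivity
    have hul : u ∈ lower M j l := ⟨hu, le_max_left _ _⟩
    have hvl : v ∈ lower M j l := ⟨hv, le_max_right _ _⟩
    refine (pr_mono ?_).trans (pr_splitEvent_le hslab hc0 hc1 (by exact_mod_cast hM) hul hvl
      (M / (k₀ + 1)) (by omega))
    rintro ξ ⟨h1, h2, -, ⟨y, hy, hyl⟩, ⟨z, hz, hzl⟩, hn⟩
    have hmono := lower_mono (M := (M : ℤ)) (j := j)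
      (show l ≤ l + ((M / (k₀ + 1) : ℕ) : ℤ) * (k₀ + 1) by omega)
    exact ⟨h1, h2, topReach_nonempty subset_rfl (hmono hul) (by omega) hy,
      topReach_nonempty subset_rfl (hmono hvl) (by omega) hz,
      fun h => hn (connIn_mono (fun x hx => hx.1) h)⟩
  · have : badSplit M j u v = ∅ := Set.eq_empty_of_forall_notMem fun ξ h => hmax h.2.2.1
    rw [this, pr_empty]
    positivity

lemma pr_compl_crossEvent_le (hd : 3 ≤ d)
    (hslab : ∀ (a b x y : Fin d → ℤ) (j : Fin d) (W : ℤ), 2 * k₀ ≤ W → (∀ k ≠ j, b k - a k = W) →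
      k₀ ≤ b j - a j → x ∈ Set.Icc a b → y ∈ Set.Icc a b → x j = y j →
      c ≤ pr (fun _ => α) (connIn (Set.Icc a b) x y))
    (hc0 : 0 ≤ c) (hM : k₀ ≤ M) (i₀ j : Fin d) :
    pr (fun _ => α) (crossEvent M i₀ j)ᶜ ≤ (1 - (α : ℝ) ^ 2 * c) ^ (M / (k₀ + 1)) := by
  obtain ⟨k, hk0, hkj⟩ := exists_ne_ne hd i₀ j
  set lev : ℕ → ℤ := fun i => -M + i * (k₀ + 1) with hlev
  set x : ℕ → Fin d → ℤ := fun i => Function.update (fun _ => -(M : ℤ)) k (lev i) with hx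
  set y : ℕ → Fin d → ℤ := fun i => Function.update (fun _ => (M : ℤ)) k (lev i) with hy
  have hxk : ∀ i, x i k = lev i := fun i => Function.update_self ..
  have hyk : ∀ i, y i k = lev i := fun i => Function.update_self ..
  have hxo : ∀ i, ∀ l ≠ k, x i l = -M := fun i l hl => Function.update_of_ne hl ..
  have hyo : ∀ i, ∀ l ≠ k, y i l = M := fun i l hl => Function.update_of_ne hl ..
  have hxS : ∀ i, x i ∈ slab M k (lev i) k₀ := by
    intro i
    rw [mem_slab, hxk]
    refine ⟨fun l hl => ?_, le_rfl, by omega⟩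
    rw [hxo i l hl]; omega
  have hyS : ∀ i, y i ∈ slab M k (lev i) k₀ := by
    intro i
    rw [mem_slab, hyk]
    refine ⟨fun l hl => ?_, le_rfl, by omega⟩
    rw [hyo i l hl]; omega
  set I := Finset.range (M / (k₀ + 1)) with hI
  have hsub : (crossEvent M i₀ j)ᶜ ⊆
      ⋂ i ∈ I, (linkEvent (slab M k (lev i) k₀) (x i) (y i))ᶜ := by
    intro ξ hξ
    simp only [Set.mem_iInter]
    rintro i hi ⟨⟨h1, -⟩, h3⟩
    refine hξ ⟨x i, y i, ?_, h1, connIn_mono ?_ h3, hxo i j hkj.symm, hyo i j hkj.symm,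
      hxo i i₀ hk0.symm, hyo i i₀ hk0.symm⟩
    all_goals
      have hi : i + 1 ≤ M / (k₀ + 1) := Finset.mem_range.1 hi
      have h5 : (i + 1) * (k₀ + 1) ≤ M :=
        (Nat.mul_le_mul_right _ hi).trans (Nat.div_mul_le_self M (k₀ + 1))
      have h6 : ((i : ℤ) + 1) * (k₀ + 1) ≤ M := by exact_mod_cast h5
      have h7 : (0 : ℤ) ≤ (i : ℤ) * (k₀ + 1) := by positivity
      have h8 : slab M k (lev i) k₀ ⊆ ball 0 M :=
        slab_subset (by simp only [hlev]; omega) (by simp only [hlev]; nlinarith)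
    · exact h8 (hxS i)
    · exact h8
  refine (pr_mono hsub).trans ?_
  rw [pr_biInter I _ (fun i => slab M k (lev i) k₀) (fun _ _ => finite_slab)
    (fun i _ => (dep_linkEvent (hxS i) (hyS i)).compl)]
  · rw [← Finset.card_range (M / (k₀ + 1)), ← Finset.prod_const]
    refine Finset.prod_le_prod (fun _ _ => pr_nonneg) fun i _ => ?_
    rw [pr_compl (dep_linkEvent (hxS i) (hyS i)) finite_slab]
    have := le_pr_linkEvent (α := α) finite_slab (hxS i) (hyS i) hc0
      (le_pr_connIn_slab hslab (by exact_mod_cast hM) (hxS i) (hyS i) (by rw [hxk, hyk]))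
    linarith
  · intro i _ i' _ hne
    rw [Set.disjoint_left]
    intro z hz hz'
    rw [mem_slab] at hz hz'
    have h1 := hz.2
    have h2 := hz'.2
    simp only [hlev] at h1 h2
    rcases lt_or_gt_of_ne hne with h | h
    · have : ((i : ℤ) + 1) * (k₀ + 1) ≤ i' * (k₀ + 1) :=
        mul_le_mul_of_nonneg_right (by omega) (by omega)
      nlinarith
    · have : ((i' : ℤ) + 1) * (k₀ + 1) ≤ i * (k₀ + 1) :=
        mul_le_mul_of_nonneg_right (by omega) (by omega)
      nlinarith

lemma one_sub_le_pr_specialEvent (hd : 3 ≤ d)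
    (hslab : ∀ (a b x y : Fin d → ℤ) (j : Fin d) (W : ℤ), 2 * k₀ ≤ W → (∀ k ≠ j, b k - a k = W) →
      k₀ ≤ b j - a j → x ∈ Set.Icc a b → y ∈ Set.Icc a b → x j = y j →
      c ≤ pr (fun _ => α) (connIn (Set.Icc a b) x y))
    (hc0 : 0 ≤ c) (hc1 : c ≤ 1) (hM : k₀ ≤ M) (hM1 : 1 ≤ M) :
    1 - d * (((2 * M + 1) ^ d) ^ 2 + 1) * (1 - (α : ℝ) ^ 2 * c) ^ (M / (k₀ + 1)) ≤
      pr (fun _ => α) {ξ | SpecialEvent d 0 M ξ} := by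
  classical
  set ε := (1 - (α : ℝ) ^ 2 * c) ^ (M / (k₀ + 1)) with hε
  set B : Finset (Fin d → ℤ) := (finite_ball 0 (M : ℤ)).toFinset with hB
  have hBcard : B.card = (2 * M + 1) ^ d := by
    have hIcc : B = Finset.Icc (fun _ => -(M : ℤ)) (fun _ => (M : ℤ)) := by
      ext x
      simp only [hB, Set.Finite.mem_toFinset, Finset.mem_Icc, mem_ball, Pi.zero_apply, sub_zero,
        abs_le, Pi.le_def, forall_and]
    have hside : ((M : ℤ) + 1 - -M).toNat = 2 * M + 1 := by omega
    rw [hIcc, Pi.card_Icc]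
    simp only [Int.card_Icc, hside, Finset.prod_const, Finset.card_univ, Fintype.card_fin]
  have hBmem : ∀ u, u ∈ B ↔ u ∈ ball 0 (M : ℤ) := fun u => by simp [hB]
  let i₀ : Fin d := ⟨0, by omega⟩
  set bad1 : Set ((Fin d → ℤ) → Bool) := ⋃ q ∈ (Finset.univ : Finset (Fin d)) ×ˢ (B ×ˢ B),
    badSplit M q.1 q.2.1 q.2.2 with hbad1
  set bad2 : Set ((Fin d → ℤ) → Bool) := ⋃ j ∈ (Finset.univ : Finset (Fin d)),
    (crossEvent M i₀ j)ᶜ with hbad2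
  have h1 : pr (fun _ => α) bad1 ≤ d * ((2 * M + 1) ^ d) ^ 2 * ε := by
    refine (pr_biUnion_le _ _).trans ((Finset.sum_le_card_nsmul _ _ ε ?_).trans (le_of_eq ?_))
    · intro q hq
      simp only [Finset.mem_product, hBmem] at hq
      exact pr_badSplit_le hslab hc0 hc1 hM q.1 hq.2.1 hq.2.2
    · rw [Finset.card_product, Finset.card_product, hBcard, Finset.card_univ, Fintype.card_fin,
        nsmul_eq_mul]
      push_cast
      ring
  have h2 : pr (fun _ => α) bad2 ≤ d * ε := by
    refine (pr_biUnion_le _ _).trans ((Finset.sum_le_card_nsmul _ _ ε ?_).trans (le_of_eq ?_))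
    · intro j _
      exact pr_compl_crossEvent_le hd hslab hc0 hM i₀ j
    · rw [Finset.card_univ, Fintype.card_fin, nsmul_eq_mul]
  have h3 : (bad1 ∪ bad2)ᶜ ⊆ {ξ | SpecialEvent d 0 M ξ} := by
    intro ξ hξ
    simp only [hbad1, hbad2, Set.mem_compl_iff, Set.mem_union, Set.mem_iUnion, not_or,
      not_exists] at hξ
    refine specialEvent_of_forall hM1 i₀ (fun j u hu v hv => hξ.1 (j, u, v) ?_) fun j => ?_
    · simp only [Finset.mem_product, hBmem]
      exact ⟨Finset.mem_univ _, hu, hv⟩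
    · by_contra h
      exact hξ.2 j (Finset.mem_univ _) h
  have h4 := one_le_pr_add_compl (w := fun _ : Fin d → ℤ => α) (A := bad1 ∪ bad2)
  have h5 := pr_mono (w := fun _ : Fin d → ℤ => α) h3
  have h6 := pr_union_le (w := fun _ : Fin d → ℤ => α) (A := bad1) (B := bad2)
  nlinarith

open Filter Topology in
lemma tendsto_pow_mul_pow_div (d k₀ : ℕ) {r : ℝ} (hr0 : 0 ≤ r) (hr1 : r < 1) :
    Tendsto (fun M : ℕ => d * (((2 * M + 1 : ℝ) ^ d) ^ 2 + 1) * r ^ (M / (k₀ + 1))) atTop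
      (𝓝 0) := by
  have h1 : Tendsto (fun t : ℕ => (t : ℝ) ^ (d * 2) * r ^ t) atTop (𝓝 0) :=
    tendsto_pow_const_mul_const_pow_of_abs_lt_one _ (by rwa [abs_of_nonneg hr0])
  have h0 : Tendsto (fun t : ℕ => r ^ t) atTop (𝓝 0) :=
    tendsto_pow_atTop_nhds_zero_of_lt_one hr0 hr1
  have hdiv : Tendsto (fun M : ℕ => M / (k₀ + 1)) atTop atTop :=
    Nat.tendsto_div_const_atTop (by omega)
  set K : ℝ := 5 * (k₀ + 1) with hK
  have h2 : Tendsto (fun t : ℕ => d * (K ^ (d * 2) * ((t : ℝ) ^ (d * 2) * r ^ t) +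
      (K ^ (d * 2) + 1) * r ^ t)) atTop (𝓝 0) := by
    have := ((h1.const_mul (K ^ (d * 2))).add (h0.const_mul (K ^ (d * 2) + 1))).const_mul (d : ℝ)
    simpa using this
  refine squeeze_zero (fun M => by positivity) (fun M => ?_) (h2.comp hdiv)
  set t := M / (k₀ + 1) with ht
  have hMt : (M : ℝ) ≤ (k₀ + 1) * (t + 1) := by
    have h := (Nat.lt_mul_div_succ M (show 0 < k₀ + 1 by omega)).le
    rw [← ht] at h
    exact_mod_cast h
  have hpow : ((2 * M + 1 : ℝ) ^ d) ^ 2 ≤ K ^ (d * 2) * (t : ℝ) ^ (d * 2) + K ^ (d * 2) := by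
    rw [← pow_mul]
    rcases Nat.eq_zero_or_pos t with h | h
    · have h' : (2 * M + 1 : ℝ) ≤ K := by
        rw [h, Nat.cast_zero, zero_add, mul_one] at hMt
        rw [hK]; nlinarith [Nat.cast_nonneg (α := ℝ) k₀]
      have := pow_le_pow_left₀ (by positivity) h' (d * 2)
      have : 0 ≤ K ^ (d * 2) * (t : ℝ) ^ (d * 2) := by positivity
      linarith
    · have ht1 : (1 : ℝ) ≤ t := by exact_mod_cast h
      have h' : (2 * M + 1 : ℝ) ≤ K * t := by
        rw [hK]; nlinarith [Nat.cast_nonneg (α := ℝ) k₀]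
      have h1 := pow_le_pow_left₀ (by positivity) h' (d * 2)
      rw [mul_pow] at h1
      have : 0 ≤ K ^ (d * 2) := by positivity
      linarith
  have hrt : 0 ≤ r ^ t := by positivity
  have : (((2 * M + 1 : ℝ) ^ d) ^ 2 + 1) * r ^ t ≤
      (K ^ (d * 2) * (t : ℝ) ^ (d * 2) + K ^ (d * 2) + 1) * r ^ t :=
    mul_le_mul_of_nonneg_right (by linarith) hrt
  calc _ = (d : ℝ) * ((((2 * M + 1 : ℝ) ^ d) ^ 2 + 1) * r ^ t) := by ring
    _ ≤ d * ((K ^ (d * 2) * (t : ℝ) ^ (d * 2) + K ^ (d * 2) + 1) * r ^ t) :=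
      mul_le_mul_of_nonneg_left this (by positivity)
    _ = _ := by simp only [Function.comp_apply, ← ht]; ring

end limit

theorem tendsto_special_event_prob_one (d : ℕ) (hd : 3 ≤ d)
    (α : ℝ) (hα : α ∈ Set.Ioo (0 : ℝ) 1) (hpc : pcrit d < α)
    (μ : Measure ((Fin d → ℤ) → Bool)) (hμ : IsBernoulliProduct d α μ) :
    Filter.Tendsto (fun M : ℕ => μ {ξ | SpecialEvent d 0 M ξ})
      Filter.atTop (nhds 1) := by
  have := hμ.1
  let a : unitInterval := ⟨α, hα.1.le, hα.2.le⟩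
  obtain rfl : μ = bern fun _ => a := eq_bern _ μ hμ.2
  obtain ⟨k₀, c, -, hc0, hc1, hslab⟩ :=
    exists_le_pr_connIn_slab hd (α := a) hα.1 hα.2 hpc
  have hr0 : 0 < 1 - α ^ 2 * c := by nlinarith [hα.1, hα.2]
  have hr1 : 1 - α ^ 2 * c < 1 := by
    have : 0 < α ^ 2 * c := mul_pos (pow_pos hα.1 2) hc0
    linarith
  have hlim := (ENNReal.continuous_ofReal.tendsto _).comp
    ((tendsto_pow_mul_pow_div d k₀ hr0.le hr1).const_sub 1)
  rw [sub_zero, ENNReal.ofReal_one] at hlim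
  refine tendsto_of_tendsto_of_tendsto_of_le_of_le' hlim tendsto_const_nhds ?_
    (Filter.Eventually.of_forall fun _ => prob_le_one)
  filter_upwards [Filter.eventually_ge_atTop (k₀ + 1)] with M hM
  have h := one_sub_le_pr_specialEvent (α := a) (M := M) hd hslab hc0.le hc1 (by omega) (by omega)
  exact ENNReal.ofReal_le_of_le_toReal h
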